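/- Let H : 𝕋^d × ℝ^d → ℝ be a C² Tonelli Hamiltonian and u_∞ a C¹ (hence C^{1,1}) upper Green regular weak K.A.M. solution. For every sufficiently small ε > 0, every semi-concave approximated solution u (a discounted solution u_λ with λ > 0 small enough, an iterate T_t U of the Lax–Oleinik semigroup with t large enough, or a weak K.A.M. solution u_c for a cohomology class c close enough to 0) that is sufficiently close to u_∞ in the uniform C¹ topology satisfies Leb{ θ ∈ 𝕋^d : D²u(θ) − D²u_∞(θ) ≮ ε·Id } < ε. -/

import Mathlib

/-!
Throughout, the closed manifold `M = 𝕋^d = ℝ^d/ℤ^d` is modelled by `ℤ^d`-periodic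
functions on `ℝ^d` (with the Euclidean structure), and its (co)tangent bundle
`T^*𝕋^d = 𝕋^d × ℝ^d` by `ℤ^d`-periodic (in the base variable) data on `ℝ^d × ℝ^d`.
-/

open scoped RealInnerProductSpace
open Filter MeasureTheory Metric Set Asymptotics

noncomputable section

/-- The universal cover `ℝ^d` of the torus `𝕋^d`. -/
abbrev Euc (d : ℕ) : Type := EuclideanSpace ℝ (Fin d)

/-- The phase space `T^*𝕋^d`, modelled as `ℝ^d × ℝ^d` with `ℤ^d`-periodic data. -/
abbrev Phase (d : ℕ) : Type := Euc d × Euc d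

/-- An integer vector, viewed in `ℝ^d`. -/
def intVec {d : ℕ} (k : Fin d → ℤ) : Euc d := WithLp.toLp 2 fun i => (k i : ℝ)

/-- `f` descends to the torus `𝕋^d = ℝ^d/ℤ^d`. -/
def PerFun {d : ℕ} {α : Type*} (f : Euc d → α) : Prop :=
  ∀ (k : Fin d → ℤ) (x : Euc d), f (x + intVec k) = f x

/-- `H` descends to `T^*𝕋^d = 𝕋^d × ℝ^d`. -/
def PerPhase {d : ℕ} {α : Type*} (H : Phase d → α) : Prop :=
  ∀ (k : Fin d → ℤ) (q p : Euc d), H (q + intVec k, p) = H (q, p)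

/-- Positive definiteness of the fiberwise Hessian. -/
def ConvexInFiber {d : ℕ} (H : Phase d → ℝ) : Prop :=
  ∀ q p v, v ≠ 0 → 0 < iteratedFDeriv ℝ 2 (fun p' => H (q, p')) p ![v, v]

/-- A `C²` Tonelli Hamiltonian on `T^*𝕋^d`. -/
structure TonelliHam {d : ℕ} (H : Phase d → ℝ) : Prop where
  periodic : PerPhase H
  smooth : ContDiff ℝ 2 H
  convex : ConvexInFiber H
  superlinear : ∀ A : ℝ, ∃ B : ℝ, ∀ q p, A * ‖p‖ + B ≤ H (q, p)

/-- A `C²` Tonelli Lagrangian on `T𝕋^d`. -/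
structure TonelliLag {d : ℕ} (L : Phase d → ℝ) : Prop where
  periodic : PerPhase L
  smooth : ContDiff ℝ 2 L
  convex : ConvexInFiber L
  superlinear : ∀ A : ℝ, ∃ B : ℝ, ∀ q v, A * ‖v‖ + B ≤ L (q, v)

/-- The Lagrangian associated to `H` by Legendre duality. -/
def LegendreL {d : ℕ} (H : Phase d → ℝ) (x : Phase d) : ℝ :=
  sSup {r | ∃ p : Euc d, r = ⟪p, x.2⟫ - H (x.1, p)}

/-- The Mañé critical value `α(H)`. -/
def maneCritical {d : ℕ} (H : Phase d → ℝ) : ℝ :=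
  sInf {c | ∃ u : Euc d → ℝ, ContDiff ℝ (⊤ : ℕ∞) u ∧ PerFun u ∧ ∀ q, H (q, gradient u q) ≤ c}

/-- The Mañé critical value `α(c)` of the cohomology class of the constant form `cf`. -/
def maneCriticalOf {d : ℕ} (H : Phase d → ℝ) (cf : Euc d) : ℝ :=
  maneCritical fun x : Phase d => H (x.1, cf + x.2)

/-- `γ` is absolutely continuous on `[a,b]` with a.e. derivative `γ'`. -/
def ACOn {d : ℕ} (γ γ' : ℝ → Euc d) (a b : ℝ) : Prop :=
  IntervalIntegrable γ' volume a b ∧ ∀ t ∈ Icc a b, γ t = γ a + ∫ s in a..t, γ' s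

/-- Values entering the (discounted, cohomologically twisted) Lax–Oleinik infimum. -/
def LOvals {d : ℕ} (L : Phase d → ℝ) (cf : Euc d) (av lam : ℝ) (u : Euc d → ℝ) (t : ℝ)
    (q : Euc d) : Set ℝ :=
  {r | ∃ γ γ' : ℝ → Euc d, ACOn γ γ' (-t) 0 ∧ γ 0 = q ∧
     IntervalIntegrable (fun s => Real.exp (lam * s) * (L (γ s, γ' s) - ⟪cf, γ' s⟫ + av))
       volume (-t) 0 ∧
     r = Real.exp (-(lam * t)) * u (γ (-t)) +
         ∫ s in (-t)..0, Real.exp (lam * s) * (L (γ s, γ' s) - ⟪cf, γ' s⟫ + av)}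

/-- The (discounted, twisted) Lax–Oleinik semigroup `T^{cf,λ}_t u (q)`. -/
def LaxOleinik {d : ℕ} (L : Phase d → ℝ) (cf : Euc d) (av lam : ℝ) (u : Euc d → ℝ) (t : ℝ)
    (q : Euc d) : ℝ :=
  sInf (LOvals L cf av lam u t q)

/-- A weak K.A.M. solution: a fixed point of the Lax–Oleinik semigroup. -/
def IsWeakKAM {d : ℕ} (H : Phase d → ℝ) (u : Euc d → ℝ) : Prop :=
  Continuous u ∧ PerFun u ∧
    ∀ t > (0:ℝ), ∀ q, LaxOleinik (LegendreL H) 0 (maneCritical H) 0 u t q = u q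

/-- A fixed point of the modified Lax–Oleinik semigroup `T^c_t` for the class `cf`. -/
def IsFixedPtModified {d : ℕ} (H : Phase d → ℝ) (cf : Euc d) (u : Euc d → ℝ) : Prop :=
  Continuous u ∧ PerFun u ∧
    ∀ t > (0:ℝ), ∀ q, LaxOleinik (LegendreL H) cf (maneCriticalOf H cf) 0 u t q = u q

/-- The discounted solution `u_λ` of `λu + H(x,du) = α(H)`, via its variational formula. -/
def IsDiscountedSol {d : ℕ} (H : Phase d → ℝ) (lam : ℝ) (u : Euc d → ℝ) : Prop :=
  Continuous u ∧ PerFun u ∧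
    ∀ q, u q = sInf {r | ∃ γ γ' : ℝ → Euc d, (∀ a ≤ (0:ℝ), ACOn γ γ' a 0) ∧ γ 0 = q ∧
      IntegrableOn (fun s => Real.exp (lam * s) * (LegendreL H (γ s, γ' s) + maneCritical H))
        (Iic 0) volume ∧
      r = ∫ s in Iic (0:ℝ), Real.exp (lam * s) * (LegendreL H (γ s, γ' s) + maneCritical H)}

/-- The `λ`-discounted Hamiltonian vector field `(∂H/∂p, -∂H/∂q - λp)`. -/
def hamVF {d : ℕ} (H : Phase d → ℝ) (lam : ℝ) (x : Phase d) : Phase d :=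
  (gradient (fun p => H (x.1, p)) x.2, -gradient (fun q => H (q, x.2)) x.1 - lam • x.2)

/-- `φ` is the (conformally) Hamiltonian flow of equation (1) for `(H, λ)`. -/
def IsConformalFlow {d : ℕ} (H : Phase d → ℝ) (lam : ℝ) (φ : ℝ → Phase d → Phase d) : Prop :=
  (∀ x, φ 0 x = x) ∧ (∀ s t x, φ s (φ t x) = φ (s + t) x) ∧
    ∀ x t, HasDerivAt (fun τ => φ τ x) (hamVF H lam (φ t x)) t

/-- The vertical subspace `V = ker Dπ`. -/
def Vert (d : ℕ) : Submodule ℝ (Phase d) :=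
  Submodule.prod (⊥ : Submodule ℝ (Euc d)) (⊤ : Submodule ℝ (Euc d))

/-- The image `Dφ_t(y) V(y)` of the vertical at `y` by the linearized flow. -/
def pushV {d : ℕ} (φ : ℝ → Phase d → Phase d) (t : ℝ) (y : Phase d) : Submodule ℝ (Phase d) :=
  Submodule.map (fderiv ℝ (φ t) y).toLinearMap (Vert d)

/-- `G_t(x) = Dφ_t V(φ_{-t} x)`. -/
def GreenT {d : ℕ} (φ : ℝ → Phase d → Phase d) (t : ℝ) (x : Phase d) : Submodule ℝ (Phase d) :=
  pushV φ t (φ (-t) x)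

/-- The piece of orbit `(φ_t x)_{t ∈ I}` has no conjugate points. -/
def NoConjPts {d : ℕ} (φ : ℝ → Phase d → Phase d) (x : Phase d) (I : Set ℝ) : Prop :=
  ∀ s ∈ I, ∀ t ∈ I, s ≠ t → pushV φ (t - s) (φ s x) ⊓ Vert d = ⊥

/-- `S` is the height `ℋ(G)` of the Lagrangian subspace `G`:
`G` is the graph `{(δθ, S δθ)}` of the symmetric map `S`. -/
def IsHeight {d : ℕ} (G : Submodule ℝ (Phase d)) (S : Euc d →L[ℝ] Euc d) : Prop :=
  (∀ v w, ⟪S v, w⟫ = ⟪v, S w⟫) ∧ G = LinearMap.graph (S : Euc d →ₗ[ℝ] Euc d)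

open Classical in
/-- The height of a subspace transverse to the vertical (junk value `0` otherwise). -/
def heightOf {d : ℕ} (G : Submodule ℝ (Phase d)) : Euc d →L[ℝ] Euc d :=
  if h : ∃ S, IsHeight G S then h.choose else 0

/-- Order of symmetric operators as quadratic forms. -/
def SymLE {d : ℕ} (S T : Euc d →L[ℝ] Euc d) : Prop := ∀ v, ⟪S v, v⟫ ≤ ⟪T v, v⟫

/-- Strict order of symmetric operators as quadratic forms (positive definite difference). -/
def SymLT {d : ℕ} (S T : Euc d →L[ℝ] Euc d) : Prop := ∀ v, v ≠ 0 → ⟪S v, v⟫ < ⟪T v, v⟫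

/-- `u` has (Alexandrov) derivative `p` and second derivative `S` at `θ`. -/
def HasAlexandrovAt {d : ℕ} (u : Euc d → ℝ) (p : Euc d) (S : Euc d →L[ℝ] Euc d)
    (θ : Euc d) : Prop :=
  HasGradientAt u p θ ∧
    (fun y => u y - u θ - ⟪p, y - θ⟫ - (1/2) * ⟪S (y - θ), y - θ⟫)
      =o[nhds θ] fun y => ‖y - θ‖ ^ 2

open Classical in
/-- The Alexandrov second derivative `D²u(θ)` (junk value `0` where it does not exist). -/
def D2 {d : ℕ} (u : Euc d → ℝ) (θ : Euc d) : Euc d →L[ℝ] Euc d :=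
  if h : ∃ pS : Euc d × (Euc d →L[ℝ] Euc d), HasAlexandrovAt u pS.1 pS.2 θ then h.choose.2 else 0

/-- `‖S‖ = sup_{‖v‖=1} |S(v,v)|`. -/
def qNorm {d : ℕ} (S : Euc d →L[ℝ] Euc d) : ℝ :=
  ⨆ v : (sphere (0 : Euc d) 1 : Set (Euc d)), |⟪S v.1, v.1⟫|

/-- A fundamental domain of `𝕋^d` in `ℝ^d`. -/
def fundCube (d : ℕ) : Set (Euc d) := {x | ∀ i, x i ∈ Ico (0:ℝ) 1}

/-- The distance `d_{2,1}(u,v) = ∫_{𝕋^d} ‖D²u - D²v‖`. -/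
def d21 {d : ℕ} (u v : Euc d → ℝ) : ℝ := ∫ θ in fundCube d, qNorm (D2 u θ - D2 v θ)

/-- Semi-concavity. -/
def SemiConcave {d : ℕ} (u : Euc d → ℝ) : Prop :=
  ∃ K : ℝ, ∀ x, ∃ p, ∀ y, u y ≤ u x + ⟪p, y - x⟫ + K * ‖y - x‖ ^ 2

/-- `u` is upper Green regular: at Lebesgue-a.e. `θ`, `ℋ(G₊(θ, du(θ))) = D²u(θ)`. -/
def UpperGreenRegular {d : ℕ} (φ : ℝ → Phase d → Phase d) (u : Euc d → ℝ) : Prop :=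
  ∀ᵐ θ ∂(volume : Measure (Euc d)), ∃ p S, HasGradientAt u p θ ∧
    (∀ t > (0:ℝ), ∃ S', IsHeight (GreenT φ t (θ, p)) S') ∧
    Tendsto (fun t : ℝ => heightOf (GreenT φ t (θ, p))) atTop (nhds S) ∧
    HasAlexandrovAt u p S θ

/-- The graph `𝒢(du) ⊂ T^*𝕋^d` of the differential of `u`. -/
def gradGraph {d : ℕ} (u : Euc d → ℝ) : Set (Phase d) := {x | HasGradientAt u x.2 x.1}

/-- The graph `𝒢(η_c + du)` where `η_c` is the constant form `cf`. -/
def gradGraphShift {d : ℕ} (cf : Euc d) (u : Euc d → ℝ) : Set (Phase d) :=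
  {x | ∃ p, HasGradientAt u p x.1 ∧ x.2 = cf + p}

namespace Alex
variable {d : ℕ}

theorem tele {F : ℝ → ℝ} {c C : ℝ}
    (h : ∀ a b, 0 ≤ a → a ≤ b → b ≤ 1 → F b - F a ≤ c * (b - a) + C * (b - a) ^ 2) :
    F 1 - F 0 ≤ c := by
  have key : ∀ n : ℕ, F 1 - F 0 ≤ c + C * (1 / ((n:ℝ) + 1)) := by
    intro n
    have hn : (0:ℝ) < n + 1 := by positivity
    have hs : ∀ i : ℕ, i ≤ n + 1 → F (i / ((n:ℝ)+1)) - F 0 ≤ i * (c * (1/((n:ℝ)+1)) + C * (1/((n:ℝ)+1)) ^ 2) := by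
      intro i
      induction i with
      | zero => intro _; simp
      | succ i ih =>
        intro hi
        have h1 := ih (by omega)
        have hi' : ((i:ℝ) + 1) ≤ (n:ℝ) + 1 := by exact_mod_cast hi
        have h2 := h (i / ((n:ℝ)+1)) (((i:ℝ)+1) / ((n:ℝ)+1)) (by positivity) (by gcongr; linarith)
          (by rw [div_le_one hn]; exact hi')
        have e : ((i:ℝ)+1) / ((n:ℝ)+1) - i / ((n:ℝ)+1) = 1/((n:ℝ)+1) := by ring
        rw [e] at h2
        push_cast
        linarith
    have := hs (n+1) le_rfl
    push_cast at this
    rw [div_self hn.ne'] at this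
    have e : ((n:ℝ)+1) * (c * (1/((n:ℝ)+1)) + C * (1/((n:ℝ)+1)) ^ 2) = c + C * (1 / ((n:ℝ) + 1)) := by
      field_simp
    linarith
  have ht : Tendsto (fun n : ℕ => c + C * (1 / ((n:ℝ) + 1))) atTop (nhds (c + C * 0)) :=
    (tendsto_one_div_add_atTop_nhds_zero_nat.const_mul C).const_add c
  have := ge_of_tendsto' ht key
  simpa using this

variable {φ : Euc d → ℝ} {q : Euc d → Euc d}

theorem convex_of (hq : ∀ x y, φ x + ⟪q x, y - x⟫ ≤ φ y) : ConvexOn ℝ univ φ := by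
  refine ⟨convex_univ, fun x _ y _ a b ha hb hab => ?_⟩
  set z := a • x + b • y
  have h1 := hq z x
  have h2 := hq z y
  have e : a * ⟪q z, x - z⟫ + b * ⟪q z, y - z⟫ = 0 := by
    rw [← real_inner_smul_right, ← real_inner_smul_right, ← inner_add_right]
    have : a • (x - z) + b • (y - z) = 0 := by
      have : a • (x - z) + b • (y - z) = z - (a + b) • z := by
        simp only [z]; module
      rw [this, hab]; simp
    rw [this]; simp
  have := mul_le_mul_of_nonneg_left h1 ha
  have := mul_le_mul_of_nonneg_left h2 hb
  simp only [smul_eq_mul]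
  have : φ z = a * φ z + b * φ z := by rw [← add_mul, hab, one_mul]
  nlinarith

theorem exists_J (hq : ∀ x y, φ x + ⟪q x, y - x⟫ ≤ φ y) (z : Euc d) :
    ∃ x, ∀ y, φ x + ⟪z - x, y - x⟫ ≤ φ y := by
  have hc := convex_of hq
  have hcont : Continuous φ := by
    rw [← continuousOn_univ]; exact hc.continuousOn isOpen_univ
  set F : Euc d → ℝ := fun x => (1/2) * ‖x‖^2 + φ x - ⟪z, x⟫ with hF
  have hFc : Continuous F := by fun_prop
  obtain ⟨x, hx⟩ : ∃ x, ∀ y, F x ≤ F y := by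
    refine hFc.exists_forall_le ?_
    set C := ‖q 0‖ + ‖z‖
    have hb : ∀ x, (1/2) * ‖x‖^2 + (φ 0 - C * ‖x‖) ≤ F x := by
      intro x
      have h1 := hq 0 x
      rw [sub_zero] at h1
      have h2 : -(‖q 0‖ * ‖x‖) ≤ ⟪q 0, x⟫ := neg_le_of_abs_le (abs_real_inner_le_norm _ _)
      have h3 : ⟪z, x⟫ ≤ ‖z‖ * ‖x‖ := real_inner_le_norm _ _
      simp only [hF, C]; nlinarith
    refine tendsto_atTop_mono hb ?_
    have h1 : Tendsto (fun x : Euc d => ‖x‖) (cocompact _) atTop := tendsto_norm_cocompact_atTop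
    have h2 : Tendsto (fun r : ℝ => (1/2) * r^2 + (φ 0 - C * r)) atTop atTop := by
      have : (fun r : ℝ => (1/2) * r^2 + (φ 0 - C * r)) = fun r => r * ((1/2) * r - C) + φ 0 := by
        ext r; ring
      rw [this]
      refine tendsto_atTop_add_const_right _ _ ?_
      refine Tendsto.atTop_mul_atTop₀ tendsto_id ?_
      exact tendsto_atTop_add_const_right _ _ (tendsto_id.const_mul_atTop (by norm_num))
    exact h2.comp h1
  refine ⟨x, fun y => ?_⟩
  have key : ∀ t : ℝ, 0 < t → t ≤ 1 → φ x + ⟪z - x, y - x⟫ - φ y ≤ (1/2) * ‖y - x‖^2 * t := by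
    intro t ht ht1
    have h1 := hx (x + t • (y - x))
    have h2 := hc.2 (mem_univ x) (mem_univ y) (by linarith : 0 ≤ 1 - t) ht.le (by ring)
    have e : (1 - t) • x + t • y = x + t • (y - x) := by module
    rw [e] at h2
    simp only [hF] at h1
    rw [norm_add_sq_real, inner_add_right, inner_smul_right, inner_smul_right, norm_smul,
      mul_pow, Real.norm_eq_abs, sq_abs] at h1
    simp only [smul_eq_mul] at h2
    rw [inner_sub_left]
    have : t * (φ x + (⟪z, y - x⟫ - ⟪x, y - x⟫) - φ y) ≤ t * ((1/2) * ‖y - x‖^2 * t) := by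
      nlinarith
    exact le_of_mul_le_mul_left this ht
  by_contra hcon
  push Not at hcon
  set D := φ x + ⟪z - x, y - x⟫ - φ y
  have hD : 0 < D := by simp only [D]; linarith
  set N := (1/2) * ‖y - x‖^2
  have hN : 0 ≤ N := by positivity
  have := key (min 1 (D / (2 * (N + 1)))) (by positivity) (min_le_left _ _)
  have h3 : N * min 1 (D / (2 * (N + 1))) ≤ N * (D / (2 * (N + 1))) := by gcongr; exact min_le_right _ _
  have h4 : N * (D / (2 * (N + 1))) ≤ D / 2 := by
    rw [mul_div_assoc', div_le_div_iff₀ (by positivity) (by positivity)]; nlinarith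
  linarith

theorem null_image {J : Euc d → Euc d} (hJ : LipschitzWith 1 J) {s : Set (Euc d)}
    (hs : volume s = 0) : volume (J '' s) = 0 := by
  have h := hJ.hausdorffMeasure_image_le (d := (d:ℝ)) (by positivity) s
  simp only [ENNReal.coe_one, ENNReal.one_rpow, one_mul] at h
  have e : (volume : Measure (Euc d)) = (MeasureTheory.Measure.addHaarScalarFactor (volume : Measure (Euc d)) (Measure.hausdorffMeasure (d:ℝ))) • (Measure.hausdorffMeasure (d:ℝ)) := by
    have : (Measure.hausdorffMeasure (d:ℝ) : Measure (Euc d)).IsAddHaarMeasure := by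
      have h : (Measure.hausdorffMeasure (Module.finrank ℝ (Euc d)) : Measure (Euc d)).IsAddHaarMeasure := inferInstance
      simpa using h
    exact Measure.isAddLeftInvariant_eq_smul _ _
  set k := (MeasureTheory.Measure.addHaarScalarFactor (volume : Measure (Euc d)) (Measure.hausdorffMeasure (d:ℝ)))
  have hk : k ≠ 0 := by
    intro hk
    rw [hk, zero_smul] at e
    exact (NeZero.ne (volume : Measure (Euc d))) e
  rw [e, Measure.smul_apply, ENNReal.smul_def, smul_eq_mul, mul_eq_zero] at hs ⊢
  rcases hs with hs | hs
  · exact Or.inl hs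
  · right; rw [hs] at h; exact le_antisymm h bot_le

theorem expand (hq : ∀ x y, φ x + ⟪q x, y - x⟫ ≤ φ y) {x : Euc d} {B : Euc d →L[ℝ] Euc d}
    (hB : HasFDerivAt q B x) :
    (fun y => φ y - φ x - ⟪q x, y - x⟫ - (1/2) * ⟪B (y - x), y - x⟫)
      =o[nhds x] fun y => ‖y - x‖ ^ 2 := by
  rw [isLittleO_iff]
  intro ε hε
  have h0 := hB.isLittleO
  rw [isLittleO_iff] at h0
  obtain ⟨r, hr, hr'⟩ := Metric.eventually_nhds_iff_ball.1 (h0 hε)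
  filter_upwards [Metric.ball_mem_nhds x hr] with y hy
  set h := y - x with hh
  have hb : ∀ t, 0 ≤ t → t ≤ 1 → |⟪q (x + t • h), h⟫ - ⟪q x, h⟫ - t * ⟪B h, h⟫| ≤ ε * ‖h‖^2 := by
    intro t h0 h1
    have : x + t • h ∈ ball x r := by
      rw [mem_ball_iff_norm] at hy ⊢
      rw [add_sub_cancel_left, norm_smul, Real.norm_eq_abs, abs_of_nonneg h0]
      exact (mul_le_of_le_one_left (norm_nonneg _) h1).trans_lt hy
    have := hr' _ this
    rw [add_sub_cancel_left, map_smul, norm_smul, Real.norm_eq_abs, abs_of_nonneg h0] at this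
    rw [← inner_sub_left, ← real_inner_smul_left, ← inner_sub_left]
    refine (abs_real_inner_le_norm _ _).trans ?_
    have h2 : ε * (t * ‖h‖) ≤ ε * ‖h‖ := by
      have := mul_le_of_le_one_left (norm_nonneg h) h1
      gcongr
    calc _ ≤ (ε * ‖h‖) * ‖h‖ := by gcongr; exact this.trans h2
      _ = _ := by ring
  have hd : ∀ a b : ℝ, φ (x + a • h) + (b - a) * ⟪q (x + a • h), h⟫ ≤ φ (x + b • h) := by
    intro a b
    have := hq (x + a • h) (x + b • h)
    rwa [show x + b • h - (x + a • h) = (b - a) • h by module, real_inner_smul_right] at this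
  have U : φ y - φ x - ⟪q x, h⟫ - (1/2) * ⟪B h, h⟫ ≤ ε * ‖h‖^2 := by
    have := tele (F := fun t => φ (x + t • h) - t * ⟪q x, h⟫ - (1/2) * t^2 * ⟪B h, h⟫)
      (c := ε * ‖h‖^2) (C := (1/2) * ⟪B h, h⟫) (by
        intro a b ha hab hb1
        have h1 := hd b a
        have h2 := (abs_le.1 (hb b (ha.trans hab) hb1)).2
        have h3 := mul_le_mul_of_nonneg_left h2 (sub_nonneg.2 hab)
        nlinarith)
    simp only [one_smul, zero_smul, add_zero] at this
    have e : x + h = y := by simp [hh]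
    rw [e] at this; linarith
  have Lw : -(ε * ‖h‖^2) ≤ φ y - φ x - ⟪q x, h⟫ - (1/2) * ⟪B h, h⟫ := by
    have := tele (F := fun t => -(φ (x + t • h) - t * ⟪q x, h⟫ - (1/2) * t^2 * ⟪B h, h⟫))
      (c := ε * ‖h‖^2) (C := (1/2) * ⟪B h, h⟫) (by
        intro a b ha hab hb1
        have h1 := hd a b
        have h2 := (abs_le.1 (hb a ha (hab.trans hb1))).1
        have h3 := mul_le_mul_of_nonneg_left h2 (sub_nonneg.2 hab)
        nlinarith)
    simp only [one_smul, zero_smul, add_zero] at this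
    have e : x + h = y := by simp [hh]
    rw [e] at this; linarith
  rw [Real.norm_eq_abs, norm_pow, norm_norm]
  exact abs_le.2 ⟨Lw, U⟩

theorem ae_diff (hq : ∀ x y, φ x + ⟪q x, y - x⟫ ≤ φ y) :
    ∀ᵐ x ∂(volume : Measure (Euc d)), ∃ B : Euc d →L[ℝ] Euc d, HasFDerivAt q B x := by
  choose J hJ using exists_J hq
  have mono : ∀ z w, ‖J z - J w‖^2 ≤ ⟪z - w, J z - J w⟫ := by
    intro z w
    have h1 := hJ z (J w)
    have h2 := hJ w (J z)
    have h3 : ⟪z - J z, J w - J z⟫ + ⟪w - J w, J z - J w⟫ ≤ 0 := by linarith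
    rw [show J w - J z = -(J z - J w) by abel, inner_neg_right] at h3
    have : ⟪z - w, J z - J w⟫ - ‖J z - J w‖^2 = ⟪z - J z, J z - J w⟫ - ⟪w - J w, J z - J w⟫ := by
      rw [← real_inner_self_eq_norm_sq, ← inner_sub_left, ← inner_sub_left]; congr 1; abel
    linarith
  have lip : LipschitzWith 1 J := by
    refine LipschitzWith.of_dist_le_mul fun z w => ?_
    rw [dist_eq_norm, dist_eq_norm, NNReal.coe_one, one_mul]
    have h1 := (mono z w).trans (real_inner_le_norm _ _)
    rcases eq_or_lt_of_le (norm_nonneg (J z - J w)) with h | h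
    · rw [← h]; positivity
    · rw [sq] at h1; exact le_of_mul_le_mul_right h1 h
  have inv : ∀ x, J (x + q x) = x := by
    intro x
    have h1 := hJ (x + q x) x
    have h2 := hq x (J (x + q x))
    set y := J (x + q x)
    have h3 : ⟪x + q x - y, x - y⟫ + ⟪q x, y - x⟫ ≤ 0 := by linarith
    have h4 : ⟪x + q x - y, x - y⟫ + ⟪q x, y - x⟫ = ‖x - y‖^2 := by
      rw [← real_inner_self_eq_norm_sq, show y - x = -(x - y) by abel, inner_neg_right,
        ← sub_eq_add_neg, ← inner_sub_left]
      congr 1; abel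
    have : ‖x - y‖ = 0 := by nlinarith [norm_nonneg (x - y)]
    exact (sub_eq_zero.1 (norm_eq_zero.1 this)).symm
  have n1 : volume (J '' {z | ¬ DifferentiableAt ℝ J z}) = 0 := null_image lip (by
    have := lip.ae_differentiableAt (μ := (volume : Measure (Euc d)))
    rwa [ae_iff] at this)
  have n2 : volume (J '' {z | DifferentiableAt ℝ J z ∧ (fderiv ℝ J z).det = 0}) = 0 :=
    addHaar_image_eq_zero_of_det_fderivWithin_eq_zero volume (f' := fun z => fderiv ℝ J z)
      (fun z hz => hz.1.hasFDerivAt.hasFDerivWithinAt) (fun z hz => hz.2)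
  filter_upwards [measure_eq_zero_iff_ae_notMem.1 n1, measure_eq_zero_iff_ae_notMem.1 n2] with x h1 h2
  set z := x + q x with hz
  have hd : DifferentiableAt ℝ J z := by
    by_contra hcon; exact h1 ⟨z, hcon, inv x⟩
  have hdet : (fderiv ℝ J z).det ≠ 0 := fun hcon => h2 ⟨z, ⟨hd, hcon⟩, inv x⟩
  set A := (fderiv ℝ J z).toContinuousLinearEquivOfDetNeZero hdet
  have hA : HasFDerivAt J (A : Euc d →L[ℝ] Euc d) z := hd.hasFDerivAt
  -- lower bound
  obtain ⟨c, hc, r, hr, hlow⟩ : ∃ c > (0:ℝ), ∃ r > (0:ℝ), ∀ w, ‖w - z‖ ≤ r → c * ‖w - z‖ ≤ ‖J w - x‖ := by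
    obtain ⟨K, hK⟩ : ∃ K > (0:ℝ), ∀ w, ‖w‖ ≤ K * ‖A w‖ := by
      refine ⟨‖(A.symm : Euc d →L[ℝ] Euc d)‖ + 1, by positivity, fun w => ?_⟩
      have := (A.symm : Euc d →L[ℝ] Euc d).le_opNorm (A w)
      simp only [ContinuousLinearEquiv.coe_coe, ContinuousLinearEquiv.symm_apply_apply] at this
      nlinarith [norm_nonneg (A w)]
    have h0 := hA.isLittleO
    rw [isLittleO_iff] at h0
    have hK0 := hK.1
    obtain ⟨r, hr, hr'⟩ := Metric.eventually_nhds_iff_ball.1 (h0 (show 0 < 1 / (2*K) by positivity))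
    refine ⟨1 / (2 * K), by positivity, r/2, by positivity, fun w hw => ?_⟩
    have h3 := hr' w (by rw [mem_ball_iff_norm]; linarith)
    rw [inv x] at h3
    have h4 := hK.2 (w - z)
    have h5 : ‖A (w - z)‖ ≤ ‖J w - x‖ + ‖J w - x - A (w - z)‖ := by
      have := norm_sub_le (J w - x) (J w - x - A (w - z))
      simpa using this
    have h6 : ‖J w - x - A (w - z)‖ ≤ 1 / (2 * K) * ‖w - z‖ := h3
    have h7 : 1 / (2 * K) * ‖w - z‖ * (2 * K) = ‖w - z‖ := by field_simp
    have h8 : 1 / K * ‖w - z‖ ≤ ‖A (w - z)‖ := by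
      rw [div_mul_eq_mul_div, one_mul, div_le_iff₀ hK0]; linarith
    have h9 : 1 / K * ‖w - z‖ = 1 / (2 * K) * ‖w - z‖ + 1 / (2 * K) * ‖w - z‖ := by field_simp; ring
    linarith
  have hclose : ∀ x', ‖x' - x‖ < c^2 * r → c * ‖(x' + q x') - z‖ ≤ ‖x' - x‖ := by
    intro x' hx'
    have key : ‖(x' + q x') - z‖ ≤ r := by
      by_contra hcon
      push Not at hcon
      set z' := x' + q x' with hz'
      set t := r / ‖z' - z‖ with ht
      have hpos : 0 < ‖z' - z‖ := hr.trans hcon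
      have ht0 : 0 < t := by positivity
      have ht1 : t < 1 := by rw [ht, div_lt_one hpos]; exact hcon
      set w := z + t • (z' - z) with hw
      have hwz : w - z = t • (z' - z) := by simp [hw]
      have hnw : ‖w - z‖ = r := by
        rw [hwz, norm_smul, Real.norm_eq_abs, abs_of_pos ht0, ht]; field_simp
      have a1 := hlow w hnw.le
      have a2 := mono w z
      have a3 := mono z' w
      rw [inv x] at a2
      rw [inv x'] at a3
      have hzw : z' - w = (1 - t) • (z' - z) := by simp only [hw]; module
      rw [hzw, inner_smul_left] at a3
      rw [hwz, inner_smul_left] at a2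
      simp only [conj_trivial] at a2 a3
      have a4 : 0 ≤ ⟪z' - z, x' - J w⟫ := by
        have : 0 ≤ (1 - t) * ⟪z' - z, x' - J w⟫ := le_trans (sq_nonneg _) a3
        exact nonneg_of_mul_nonneg_right this (by linarith)
      have a5 : ⟪z' - z, x' - x⟫ = ⟪z' - z, x' - J w⟫ + ⟪z' - z, J w - x⟫ := by
        rw [← inner_add_right]; congr 1; abel
      have a6 : t * ⟪z' - z, x' - x⟫ ≤ r * ‖x' - x‖ := by
        rw [← hnw, ← real_inner_smul_left, ← hwz]; exact real_inner_le_norm _ _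
      rw [hnw] at a1
      have a7 : (c * r)^2 ≤ ‖J w - x‖^2 := by gcongr
      have a8 : (c*r)^2 ≤ r * ‖x' - x‖ := by nlinarith
      nlinarith
    have := hlow _ key
    rwa [inv] at this
  have hcont : ContinuousAt (fun x' => x' + q x') x := by
    rw [Metric.continuousAt_iff]
    intro ε hε
    refine ⟨min (c^2 * r) (c * ε), by positivity, fun {y} hy => ?_⟩
    rw [dist_eq_norm] at hy ⊢
    have h3 := hclose y (hy.trans_le (min_le_left _ _))
    have h4 := hy.trans_le (min_le_right _ _)
    exact lt_of_mul_lt_mul_left (h3.trans_lt h4) hc.le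
  have hder := HasFDerivAt.of_local_left_inverse (g := fun x' => x' + q x') (a := x) hcont hA
    (Eventually.of_forall inv)
  refine ⟨(A.symm : Euc d →L[ℝ] Euc d) - ContinuousLinearMap.id ℝ _, ?_⟩
  have := hder.sub (hasFDerivAt_id x)
  refine this.congr_of_eventuallyEq (Eventually.of_forall fun y => ?_)
  simp

theorem hasAlex_of {u : Euc d → ℝ} {p : Euc d} {S : Euc d →L[ℝ] Euc d} {θ : Euc d}
    (h : (fun y => u y - u θ - ⟪p, y - θ⟫ - (1/2) * ⟪S (y - θ), y - θ⟫)
      =o[nhds θ] fun y => ‖y - θ‖ ^ 2) : HasAlexandrovAt u p S θ := by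
  refine ⟨?_, h⟩
  rw [hasGradientAt_iff_isLittleO]
  have h1 : (fun y : Euc d => (1/2) * ⟪S (y - θ), y - θ⟫) =O[nhds θ] fun y => ‖y - θ‖ ^ 2 := by
    refine IsBigO.of_bound ((1/2) * ‖S‖) (Eventually.of_forall fun y => ?_)
    rw [norm_mul, norm_pow, norm_norm]
    have : ‖⟪S (y - θ), y - θ⟫‖ ≤ ‖S‖ * ‖y - θ‖ * ‖y - θ‖ :=
      (norm_inner_le_norm _ _).trans (by gcongr; exact S.le_opNorm _)
    simp only [one_div, norm_inv, Real.norm_ofNat]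
    nlinarith
  have h2 : (fun y : Euc d => ‖y - θ‖^2) =o[nhds θ] fun y => y - θ := by
    have := (isLittleO_norm_pow_id (E' := Euc d) one_lt_two)
    have h3 : Tendsto (fun y : Euc d => y - θ) (nhds θ) (nhds 0) := by
      have : Continuous (fun y : Euc d => y - θ) := by fun_prop
      simpa using this.tendsto θ
    exact this.comp_tendsto h3
  have h3 := (h.isBigO.add h1).trans_isLittleO h2
  refine h3.congr_left fun y => ?_
  ring

theorem alexandrov {u : Euc d → ℝ} (hu : SemiConcave u) :
    ∀ᵐ θ ∂(volume : Measure (Euc d)), ∃ p S, HasAlexandrovAt u p S θ := by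
  obtain ⟨K, hK⟩ := hu
  choose p hp using hK
  set φ : Euc d → ℝ := fun x => K * ‖x‖^2 - u x with hφ
  set q : Euc d → Euc d := fun x => (2*K) • x - p x with hq'
  have hq : ∀ x y, φ x + ⟪q x, y - x⟫ ≤ φ y := by
    intro x y
    have h1 := hp x y
    have h2 : ‖y‖^2 = ‖x‖^2 + 2 * ⟪x, y - x⟫ + ‖y - x‖^2 := by
      rw [← norm_add_sq_real]; simp
    simp only [hφ, hq', inner_sub_left (_ • x), real_inner_smul_left]
    rw [h2]; linarith
  filter_upwards [ae_diff hq] with x ⟨B, hB⟩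
  refine ⟨p x, (2*K) • ContinuousLinearMap.id ℝ _ - B, hasAlex_of ?_⟩
  refine (expand hq hB).neg_left.congr_left fun y => ?_
  have h2 : ‖y‖^2 = ‖x‖^2 + 2 * ⟪x, y - x⟫ + ‖y - x‖^2 := by
    rw [← norm_add_sq_real]; simp
  simp only [hφ, hq', inner_sub_left (_ • x), real_inner_smul_left, sub_apply,
    smul_apply, ContinuousLinearMap.id_apply, inner_sub_left (_ • (y - x)), real_inner_self_eq_norm_sq]
  rw [h2]; ring

end Alex

namespace OT
open scoped NNReal

variable {E F : Type*} [NormedAddCommGroup E] [NormedSpace ℝ E] [FiniteDimensional ℝ E]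
  [NormedAddCommGroup F] [NormedSpace ℝ F]

theorem trunc {Y : E → F} (hY : ContDiff ℝ 1 Y) (R : ℝ) :
    ∃ (g : E → F) (K : ℝ≥0) (C : ℝ), LipschitzWith K g ∧ (∀ x, ‖g x‖ ≤ C) ∧
      (∀ x ∈ closedBall (0:E) R, g x = Y x) ∧ ∀ x, ‖g x‖ ≤ ‖Y x‖ := by
  let χ : ContDiffBump (0:E) := ⟨|R| + 1, |R| + 2, by positivity, by linarith⟩
  have hc : ContDiff ℝ 1 (fun x => χ x • Y x) := (χ.contDiff).smul hY
  have hs : HasCompactSupport (fun x => χ x • Y x) := χ.hasCompactSupport.smul_right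
  obtain ⟨K, hK⟩ := ContDiff.lipschitzWith_of_hasCompactSupport hs hc (by simp)
  obtain ⟨C, hC⟩ := hs.exists_bound_of_continuous hc.continuous
  refine ⟨_, K, C, hK, hC, fun x hx => ?_, fun x => ?_⟩
  · have : χ x = 1 := χ.one_of_mem_closedBall
      (closedBall_subset_closedBall (by simp only [χ]; linarith [le_abs_self R]) hx)
    simp [this]
  · rw [norm_smul, Real.norm_eq_abs, abs_of_nonneg χ.nonneg]
    exact mul_le_of_le_one_left (norm_nonneg _) χ.le_one

theorem ode_exists {A : ℝ → F →L[ℝ] E} (hA : Continuous A) {CA : ℝ} (hCA : ∀ s, ‖A s‖ ≤ CA)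
    {g : E → F} {K : ℝ≥0} {C : ℝ} (hg : LipschitzWith K g) (hC : ∀ x, ‖g x‖ ≤ C) (x0 : E) (T : ℝ)
    (hT : 0 ≤ T) :
    ∃ α : ℝ → E, α 0 = x0 ∧ ∀ t ∈ Icc (-T) 0, HasDerivAt α (A t (g (α t))) t := by
  have hCA0 : 0 ≤ CA := (norm_nonneg _).trans (hCA 0)
  have hC0 : 0 ≤ C := (norm_nonneg _).trans (hC x0)
  obtain ⟨CA', rfl⟩ : ∃ x : ℝ≥0, (x:ℝ) = CA := ⟨⟨CA, hCA0⟩, rfl⟩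
  obtain ⟨C', rfl⟩ : ∃ x : ℝ≥0, (x:ℝ) = C := ⟨⟨C, hC0⟩, rfl⟩
  obtain ⟨T', hT'⟩ : ∃ x : ℝ≥0, (x:ℝ) = T + 1 := ⟨⟨T+1, by positivity⟩, rfl⟩
  have hPL : IsPicardLindelof (fun t x => A t (g x)) (tmin := -(T+1)) (tmax := T+1)
      ⟨0, by constructor <;> linarith⟩ x0 (CA' * C' * T') 0 (CA' * C') (CA' * K) := by
    refine ⟨fun t _ => ?_, fun x _ => ?_, fun t _ x _ => ?_, ?_⟩
    · refine (LipschitzWith.of_dist_le_mul fun x y => ?_).lipschitzOnWith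
      rw [dist_eq_norm, ← map_sub]
      calc _ ≤ ‖A t‖ * ‖g x - g y‖ := (A t).le_opNorm _
        _ ≤ CA' * (K * dist x y) := by
          have := hg.dist_le_mul x y
          rw [dist_eq_norm] at this
          gcongr
          exact hCA t
        _ = _ := by push_cast; ring
    · exact (hA.clm_apply continuous_const).continuousOn
    · calc _ ≤ ‖A t‖ * ‖g x‖ := (A t).le_opNorm _
        _ ≤ CA' * C' := by gcongr; exact hCA t; exact hC x
        _ = _ := by simp
    · simp [hT']
  obtain ⟨α, h0, h1⟩ := hPL.exists_eq_forall_mem_Icc_hasDerivWithinAt₀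
  refine ⟨α, h0, fun t ht => ?_⟩
  exact (h1 t ⟨by linarith [ht.1], by linarith [ht.2]⟩).hasDerivAt
    (Icc_mem_nhds (by linarith [ht.1]) (by linarith [ht.2]))

theorem gron {e e' : ℝ → E} {T δ K ε : ℝ} (hT : 0 ≤ T) (hK : 0 ≤ K) (hε : 0 ≤ ε) (hδ : 0 ≤ δ)
    (hd : ∀ s ∈ Icc (-T) 0, HasDerivAt e (e' s) s) (h0 : ‖e 0‖ ≤ δ)
    (hb : ∀ s ∈ Icc (-T) 0, ‖e' s‖ ≤ K * ‖e s‖ + ε) :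
    ∀ s ∈ Icc (-T) 0, ‖e s‖ ≤ (δ + ε) * Real.exp ((K + 1) * T) := by
  intro s hs
  have hd' : ∀ t ∈ Icc 0 T, HasDerivAt (fun t => e (-t)) (-(e' (-t))) t := by
    intro t ht
    have := (hd (-t) ⟨by linarith [ht.2], by linarith [ht.1]⟩)
    have h2 := HasDerivAt.scomp t this (hasDerivAt_neg t)
    simpa [Function.comp_def] using h2
  have := norm_le_gronwallBound_of_norm_deriv_right_le (f := fun t => e (-t)) (f' := fun t => -(e' (-t)))
    (δ := δ) (K := K + 1) (ε := ε) (a := 0) (b := T)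
    (fun t ht => (hd' t ht).continuousAt.continuousWithinAt)
    (fun t ht => (hd' t ⟨ht.1, ht.2.le⟩).hasDerivWithinAt) (by simpa using h0)
    (fun t ht => by
      rw [norm_neg]
      refine (hb (-t) ⟨by linarith [ht.2], by linarith [ht.1]⟩).trans ?_
      nlinarith [norm_nonneg (e (-t))]) (-s) ⟨by linarith [hs.2], by linarith [hs.1]⟩
  rw [neg_neg, sub_zero, gronwallBound_of_K_ne_0 (by linarith)] at this
  refine this.trans ?_
  have h1 : Real.exp ((K+1) * -s) ≤ Real.exp ((K+1)*T) := by
    apply Real.exp_le_exp.2; nlinarith [hs.1]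
  have h2 : ε / (K + 1) ≤ ε := div_le_self hε (by linarith)
  have h3 : 0 ≤ Real.exp ((K+1) * -s) - 1 := by
    have : (1:ℝ) ≤ Real.exp ((K+1) * -s) := Real.one_le_exp (by nlinarith [hs.2])
    linarith
  have h4 : ε / (K+1) * (Real.exp ((K+1) * -s) - 1) ≤ ε * Real.exp ((K+1)*T) := by
    refine mul_le_mul h2 (by linarith) h3 hε
  nlinarith [mul_le_mul_of_nonneg_left h1 hδ]

/-- clamp to the interval -/
def clampT (T s : ℝ) : ℝ := max (-T) (min s 0)

theorem clamp_cont (T : ℝ) : Continuous (clampT T) := by unfold clampT; fun_prop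
theorem clamp_mem {T : ℝ} (hT : 0 ≤ T) (s : ℝ) : clampT T s ∈ Icc (-T) 0 :=
  ⟨le_max_left _ _, max_le (by linarith) (min_le_right _ _)⟩
theorem clamp_eq {T s : ℝ} (hs : s ∈ Icc (-T) 0) : clampT T s = s := by
  unfold clampT; rw [min_eq_left hs.2, max_eq_right hs.1]

theorem lin_exists {A : ℝ → E →L[ℝ] E} {T : ℝ} (hT : 0 ≤ T) (hA : ContinuousOn A (Icc (-T) 0))
    {CA : ℝ} (hCA : ∀ s ∈ Icc (-T) 0, ‖A s‖ ≤ CA) :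
    ∃ Φ : ℝ → E →L[ℝ] E, Φ 0 = ContinuousLinearMap.id ℝ E ∧
      (∀ t ∈ Icc (-T) 0, HasDerivAt Φ ((A t).comp (Φ t)) t) ∧
      ∀ t ∈ Icc (-T) 0, ‖Φ t‖ ≤ Real.exp ((CA + 1) * T) := by
  have hCA0 : 0 ≤ CA := (norm_nonneg _).trans (hCA 0 (by constructor <;> linarith))
  set R := Real.exp ((CA + 1) * T)
  obtain ⟨g, K, C, hg, hC, heq, hle⟩ := trunc (E := E →L[ℝ] E) (F := E →L[ℝ] E) (contDiff_id) R
  let A' : ℝ → (E →L[ℝ] E) →L[ℝ] (E →L[ℝ] E) := fun s =>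
    (ContinuousLinearMap.compL ℝ E E E) (A (clampT T s))
  have hA'n : ∀ s, ‖A' s‖ ≤ CA := fun s =>
    ((ContinuousLinearMap.compL ℝ E E E).le_opNorm _).trans (by
      have h1 := ContinuousLinearMap.norm_compL_le ℝ E E E
      have h2 := hCA _ (clamp_mem hT s)
      nlinarith [norm_nonneg (A (clampT T s))])
  have hA'c : Continuous A' := (ContinuousLinearMap.compL ℝ E E E).continuous.comp
    (hA.comp_continuous (clamp_cont T) (clamp_mem hT))
  obtain ⟨Φ, h0, h1⟩ := ode_exists hA'c hA'n hg hC (ContinuousLinearMap.id ℝ E) T hT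
  have hb : ∀ t ∈ Icc (-T) 0, ‖Φ t‖ ≤ R := by
    have := gron (e := Φ) (e' := fun t => A' t (g (Φ t))) (T := T) (δ := 1) (K := CA) (ε := 0) hT hCA0
      le_rfl zero_le_one h1 (by rw [h0]; exact ContinuousLinearMap.norm_id_le) (fun s _ => by
        rw [add_zero]
        refine ((A' s).le_opNorm _).trans ?_
        have := hle (Φ s)
        simp only [id] at this
        gcongr; exact hA'n s)
    simpa using this
  refine ⟨Φ, h0, fun t ht => ?_, hb⟩
  have := h1 t ht
  rw [heq (Φ t) (by simpa using hb t ht)] at this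
  simpa [A', clamp_eq ht] using this

end OT

namespace HV
variable {d : ℕ} {H : Phase d → ℝ}

/-- second derivative -/
abbrev HB (H : Phase d → ℝ) (z : Phase d) : Phase d →L[ℝ] Phase d →L[ℝ] ℝ := fderiv ℝ (fderiv ℝ H) z

theorem diffH (hH : ContDiff ℝ 2 H) : Differentiable ℝ H := hH.differentiable (by simp)
theorem cdDH (hH : ContDiff ℝ 2 H) : ContDiff ℝ 1 (fderiv ℝ H) := hH.fderiv_right (by norm_num)
theorem diffDH (hH : ContDiff ℝ 2 H) : Differentiable ℝ (fderiv ℝ H) := (cdDH hH).differentiable (by simp)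
theorem contHB (hH : ContDiff ℝ 2 H) : Continuous (HB H) := (cdDH hH).continuous_fderiv (by simp)

theorem symB (hH : ContDiff ℝ 2 H) (z v w : Phase d) : HB H z v w = HB H z w v := by
  have := (hH.contDiffAt (x := z)).isSymmSndFDerivAt (by simp)
  exact this.eq v w

theorem hasF_fib (hH : ContDiff ℝ 2 H) (q p : Euc d) :
    HasFDerivAt (fun p' => H (q, p')) ((fderiv ℝ H (q,p)).comp (ContinuousLinearMap.inr ℝ _ _)) p :=
  ((diffH hH) (q,p)).hasFDerivAt.comp p (hasFDerivAt_prodMk_right q p)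

theorem hasF_base (hH : ContDiff ℝ 2 H) (q p : Euc d) :
    HasFDerivAt (fun q' => H (q', p)) ((fderiv ℝ H (q,p)).comp (ContinuousLinearMap.inl ℝ _ _)) q :=
  ((diffH hH) (q,p)).hasFDerivAt.comp q (hasFDerivAt_prodMk_left q p)

theorem ham1 (hH : ContDiff ℝ 2 H) (l : ℝ) (x : Phase d) (k : Euc d) :
    ⟪(hamVF H l x).1, k⟫ = fderiv ℝ H x (0, k) := by
  simp only [hamVF, gradient, InnerProductSpace.toDual_symm_apply]
  rw [(hasF_fib hH x.1 x.2).fderiv]; simp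

theorem ham2 (hH : ContDiff ℝ 2 H) (l : ℝ) (x : Phase d) (y : Euc d) :
    ⟪(hamVF H l x).2, y⟫ = - fderiv ℝ H x (y, 0) - l * ⟪x.2, y⟫ := by
  simp only [hamVF, gradient, inner_sub_left, inner_neg_left, InnerProductSpace.toDual_symm_apply, real_inner_smul_left]
  rw [(hasF_base hH x.1 x.2).fderiv]; simp

theorem ham_lam (l : ℝ) (x : Phase d) : hamVF H l x = hamVF H 0 x - l • ((0:Euc d), x.2) := by
  simp [hamVF, Prod.smul_mk]

theorem ham_cd (hH : ContDiff ℝ 2 H) (l : ℝ) : ContDiff ℝ 1 (hamVF H l) := by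
  have h1 := cdDH hH
  refine ContDiff.prodMk (f := fun x => (hamVF H l x).1) (g := fun x => (hamVF H l x).2) ?_ ?_
  · rw [contDiff_euclidean]
    intro i
    have : (fun x => (hamVF H l x).1 i) = fun x => fderiv ℝ H x (0, EuclideanSpace.single i 1) := by
      ext x; rw [← ham1 hH l]; simp [EuclideanSpace.inner_single_right]
    rw [this]
    exact h1.clm_apply contDiff_const
  · rw [contDiff_euclidean]
    intro i
    have : (fun x => (hamVF H l x).2 i) = fun x => - fderiv ℝ H x (EuclideanSpace.single i 1, 0) - l * ⟪x.2, EuclideanSpace.single i 1⟫ := by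
      ext x; rw [← ham2 hH l]; simp [EuclideanSpace.inner_single_right]
    rw [this]
    have : ContDiff ℝ 1 (fun x : Phase d => ⟪x.2, (EuclideanSpace.single i 1 : Euc d)⟫) :=
      contDiff_snd.inner ℝ contDiff_const
    exact (h1.clm_apply contDiff_const).neg.sub (contDiff_const.mul this)

/-- derivative of the vector field -/
abbrev AV (H : Phase d → ℝ) (l : ℝ) (z : Phase d) : Phase d →L[ℝ] Phase d := fderiv ℝ (hamVF H l) z

theorem ham_hasF (hH : ContDiff ℝ 2 H) (l : ℝ) (z : Phase d) : HasFDerivAt (hamVF H l) (AV H l z) z :=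
  ((ham_cd hH l).differentiable (by simp) z).hasFDerivAt

theorem AV_cont (hH : ContDiff ℝ 2 H) (l : ℝ) : Continuous (AV H l) :=
  (ham_cd hH l).continuous_fderiv (by simp)

theorem AV1 (hH : ContDiff ℝ 2 H) (l : ℝ) (z w : Phase d) (k : Euc d) :
    ⟪(AV H l z w).1, k⟫ = HB H z w (0, k) := by
  have h1 : HasFDerivAt (fun x => ⟪(hamVF H l x).1, k⟫) (((innerSL ℝ k).comp (ContinuousLinearMap.fst ℝ _ _)).comp (AV H l z)) z := by
    have := ((innerSL ℝ k).comp (ContinuousLinearMap.fst ℝ (Euc d) (Euc d))).hasFDerivAt.comp z (ham_hasF hH l z)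
    refine this.congr_of_eventuallyEq (Eventually.of_forall fun x => ?_)
    simp [real_inner_comm]
  have h2 : HasFDerivAt (fun x => fderiv ℝ H x (0, k)) ((ContinuousLinearMap.apply ℝ ℝ ((0:Euc d), k)).comp (HB H z)) z := by
    exact (ContinuousLinearMap.apply ℝ ℝ ((0:Euc d), k)).hasFDerivAt.comp z (diffDH hH z).hasFDerivAt
  have e : (fun x => ⟪(hamVF H l x).1, k⟫) = fun x => fderiv ℝ H x (0, k) := by ext x; exact ham1 hH l x k
  rw [e] at h1
  have := congrArg (fun f => f w) (h1.unique h2)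
  simpa [real_inner_comm] using this

theorem AV2 (hH : ContDiff ℝ 2 H) (l : ℝ) (z w : Phase d) (y : Euc d) :
    ⟪(AV H l z w).2, y⟫ = - HB H z w (y, 0) - l * ⟪w.2, y⟫ := by
  have h1 : HasFDerivAt (fun x => ⟪(hamVF H l x).2, y⟫) (((innerSL ℝ y).comp (ContinuousLinearMap.snd ℝ _ _)).comp (AV H l z)) z := by
    have := ((innerSL ℝ y).comp (ContinuousLinearMap.snd ℝ (Euc d) (Euc d))).hasFDerivAt.comp z (ham_hasF hH l z)
    refine this.congr_of_eventuallyEq (Eventually.of_forall fun x => ?_)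
    simp [real_inner_comm]
  have h2 : HasFDerivAt (fun x => fderiv ℝ H x (y, 0)) ((ContinuousLinearMap.apply ℝ ℝ (y, (0:Euc d))).comp (HB H z)) z := by
    exact (ContinuousLinearMap.apply ℝ ℝ (y, (0:Euc d))).hasFDerivAt.comp z (diffDH hH z).hasFDerivAt
  have h3 : HasFDerivAt (fun x : Phase d => l * ⟪x.2, y⟫) (l • ((innerSL ℝ y).comp (ContinuousLinearMap.snd ℝ _ _))) z := by
    have := (l • ((innerSL ℝ y).comp (ContinuousLinearMap.snd ℝ (Euc d) (Euc d)))).hasFDerivAt (x := z)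
    refine this.congr_of_eventuallyEq (Eventually.of_forall fun x => ?_)
    simp [real_inner_comm]
  have e : (fun x => ⟪(hamVF H l x).2, y⟫) = fun x => - fderiv ℝ H x (y, 0) - l * ⟪x.2, y⟫ := by ext x; exact ham2 hH l x y
  rw [e] at h1
  have := congrArg (fun f => f w) (h1.unique (h2.neg.sub h3))
  simpa [real_inner_comm] using this

theorem AV_lam (hH : ContDiff ℝ 2 H) (l : ℝ) (z w : Phase d) :
    AV H l z w = AV H 0 z w - l • ((0:Euc d), w.2) := by
  ext1
  · refine ext_inner_right ℝ fun k => ?_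
    rw [AV1 hH]; simp only [Prod.fst_sub, Prod.smul_fst, smul_zero, sub_zero]; rw [AV1 hH]
  · refine ext_inner_right ℝ fun k => ?_
    rw [AV2 hH]; simp only [Prod.snd_sub, Prod.smul_snd, inner_sub_left, real_inner_smul_left]; rw [AV2 hH]; ring

theorem Bpos (hH : TonelliHam H) (z : Phase d) {k : Euc d} (hk : k ≠ 0) : 0 < HB H z (0,k) (0,k) := by
  have h := hH.convex z.1 z.2 k hk
  rw [iteratedFDeriv_two_apply] at h
  have e : fderiv ℝ (fun p' => H (z.1, p')) = fun p => (fderiv ℝ H (z.1,p)).comp (ContinuousLinearMap.inr ℝ _ _) := by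
    ext1 p; exact (hasF_fib hH.smooth _ _).fderiv
  have h2 : HasFDerivAt (fun p => (fderiv ℝ H (z.1,p)).comp (ContinuousLinearMap.inr ℝ (Euc d) (Euc d)))
    (((ContinuousLinearMap.compL ℝ _ _ _).flip (ContinuousLinearMap.inr ℝ (Euc d) (Euc d))).comp ((HB H z).comp (ContinuousLinearMap.inr ℝ _ _))) z.2 := by
    have h3 : HasFDerivAt (fun p => fderiv ℝ H (z.1,p)) ((HB H z).comp (ContinuousLinearMap.inr ℝ _ _)) z.2 :=
      (diffDH hH.smooth (z.1,z.2)).hasFDerivAt.comp z.2 (hasFDerivAt_prodMk_right z.1 z.2)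
    exact ((ContinuousLinearMap.compL ℝ (Euc d) (Phase d) ℝ).flip (ContinuousLinearMap.inr ℝ (Euc d) (Euc d))).hasFDerivAt.comp z.2 h3
  rw [e, h2.fderiv] at h
  simpa using h

theorem Bm (hH : TonelliHam H) (R : ℝ) : ∃ m > (0:ℝ), ∀ z ∈ closedBall (0:Phase d) R, ∀ k : Euc d,
    m * ‖k‖^2 ≤ HB H z (0,k) (0,k) := by
  set f : Phase d × Euc d → ℝ := fun x => HB H x.1 (0,x.2) (0,x.2)
  have hf : Continuous f := by
    have := contHB hH.smooth
    fun_prop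
  have hc : IsCompact ((closedBall (0:Phase d) R) ×ˢ (sphere (0:Euc d) 1)) :=
    (isCompact_closedBall _ _).prod (isCompact_sphere _ _)
  have main : ∃ m > (0:ℝ), ∀ x ∈ (closedBall (0:Phase d) R) ×ˢ (sphere (0:Euc d) 1), m ≤ f x := by
    rcases ((closedBall (0:Phase d) R) ×ˢ (sphere (0:Euc d) 1)).eq_empty_or_nonempty with he | hne
    · exact ⟨1, one_pos, fun x hx => by rw [he] at hx; exact hx.elim⟩
    · obtain ⟨x, hx, hmin⟩ := hc.exists_isMinOn hne hf.continuousOn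
      refine ⟨f x, Bpos hH x.1 ?_, fun y hy => hmin hy⟩
      have := hx.2
      intro h0; rw [h0] at this; simp at this
  obtain ⟨m, hm, h⟩ := main
  refine ⟨m, hm, fun z hz k => ?_⟩
  rcases eq_or_ne k 0 with rfl | hk
  · rw [show ((0:Euc d), (0:Euc d)) = 0 from rfl]; simp
  · have h1 := h (z, ‖k‖⁻¹ • k) ⟨hz, by simp [norm_smul, hk]⟩
    have hk' : 0 < ‖k‖ := norm_pos_iff.2 hk
    have e : ((0:Euc d), k) = ‖k‖ • ((0:Euc d), ‖k‖⁻¹ • k) := by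
      simp [Prod.smul_mk, smul_smul, hk'.ne']
    rw [e]
    simp only [map_smul, smul_apply, smul_eq_mul]
    have : m ≤ HB H z (0, ‖k‖⁻¹ • k) (0, ‖k‖⁻¹ • k) := h1
    nlinarith [mul_pos hk' hk']

theorem fib_convex (hH : TonelliHam H) (q p k : Euc d) : ConvexOn ℝ univ (fun t : ℝ => H (q, p + t • k)) := by
  have hd : ∀ t : ℝ, HasDerivAt (fun t : ℝ => H (q, p + t • k)) (fderiv ℝ H (q, p + t • k) (0,k)) t := by
    intro t
    have h1 : HasDerivAt (fun t : ℝ => (q, p + t • k)) ((0:Euc d), k) t := by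
      refine (hasDerivAt_const t q).prodMk ?_
      simpa using ((hasDerivAt_id t).smul_const k).const_add p
    exact (diffH hH.smooth _).hasFDerivAt.comp_hasDerivAt t h1
  have hd2 : ∀ t : ℝ, HasDerivAt (fun t : ℝ => fderiv ℝ H (q, p + t • k) (0,k)) (HB H (q, p + t • k) (0,k) (0,k)) t := by
    intro t
    have h1 : HasDerivAt (fun t : ℝ => (q, p + t • k)) ((0:Euc d), k) t := by
      refine (hasDerivAt_const t q).prodMk ?_
      simpa using ((hasDerivAt_id t).smul_const k).const_add p
    have := (diffDH hH.smooth (q, p + t • k)).hasFDerivAt.comp_hasDerivAt t h1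
    have h3 := this.clm_apply (hasDerivAt_const t ((0:Euc d),k))
    simpa using h3
  have e1 : deriv (fun t : ℝ => H (q, p + t • k)) = fun t : ℝ => fderiv ℝ H (q, p + t • k) (0,k) := by
    ext t; exact (hd t).deriv
  refine convexOn_univ_of_deriv2_nonneg (fun t => (hd t).differentiableAt) (fun t => ?_) (fun t => ?_)
  · rw [e1]; exact (hd2 t).differentiableAt
  · simp only [Function.iterate_succ, Function.iterate_zero, Function.comp, id, e1]
    rw [(hd2 t).deriv]
    rcases eq_or_ne k 0 with rfl | hk
    · rw [show ((0:Euc d), (0:Euc d)) = 0 from rfl]; simp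
    · exact (Bpos hH _ hk).le

theorem unif_cont {E F : Type*} [NormedAddCommGroup E] [ProperSpace E] [NormedAddCommGroup F]
    {f : E → F} (hf : Continuous f) (R : ℝ) {τ : ℝ} (hτ : 0 < τ) :
    ∃ ρ > (0:ℝ), ρ ≤ 1 ∧ ∀ z ∈ closedBall (0:E) R, ∀ w, ‖w - z‖ ≤ ρ → ‖f w - f z‖ ≤ τ := by
  have := (isCompact_closedBall (0:E) (R+1)).uniformContinuousOn_of_continuous hf.continuousOn
  rw [Metric.uniformContinuousOn_iff] at this
  obtain ⟨δ, hδ, h⟩ := this τ hτ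
  refine ⟨min 1 (δ/2), by positivity, min_le_left _ _, fun z hz w hw => ?_⟩
  have h1 := hw.trans (min_le_left _ _)
  have h2 := hw.trans (min_le_right _ _)
  rw [mem_closedBall_zero_iff] at hz
  have := h w (by
    rw [mem_closedBall_zero_iff]
    calc ‖w‖ = ‖(w - z) + z‖ := by simp
      _ ≤ ‖w - z‖ + ‖z‖ := norm_add_le _ _
      _ ≤ R + 1 := by linarith) z (by rw [mem_closedBall_zero_iff]; linarith) (by rw [dist_eq_norm]; linarith)
  rw [dist_eq_norm] at this
  exact this.le

theorem tay1 {E F : Type*} [NormedAddCommGroup E] [NormedSpace ℝ E] [ProperSpace E]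
    [NormedAddCommGroup F] [NormedSpace ℝ F] {f : E → F} (hf : ContDiff ℝ 1 f) (R : ℝ) {τ : ℝ} (hτ : 0 < τ) :
    ∃ ρ > (0:ℝ), ρ ≤ 1 ∧ ∀ z ∈ closedBall (0:E) R, ∀ w, ‖w - z‖ ≤ ρ →
      ‖f w - f z - fderiv ℝ f z (w - z)‖ ≤ τ * ‖w - z‖ := by
  obtain ⟨ρ, hρ, hρ1, h⟩ := unif_cont (hf.continuous_fderiv (by simp)) R hτ
  refine ⟨ρ, hρ, hρ1, fun z hz w hw => ?_⟩
  refine (convex_closedBall z ρ).norm_image_sub_le_of_norm_fderiv_le' (𝕜 := ℝ) (f := f)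
    (fun x _ => hf.differentiable (by simp) x) (fun x hx => h z hz x ?_)
    (mem_closedBall_self hρ.le) (by rwa [mem_closedBall_iff_norm])
  rwa [mem_closedBall_iff_norm] at hx

theorem tay2 (hH : ContDiff ℝ 2 H) (R : ℝ) {τ : ℝ} (hτ : 0 < τ) :
    ∃ ρ > (0:ℝ), ρ ≤ 1 ∧ ∀ z ∈ closedBall (0:Phase d) R, ∀ w, ‖w‖ ≤ ρ →
      |H (z + w) - H z - fderiv ℝ H z w - (1/2) * HB H z w w| ≤ τ * ‖w‖^2 := by
  obtain ⟨ρ, hρ, hρ1, h⟩ := tay1 (cdDH hH) R hτ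
  refine ⟨ρ, hρ, hρ1, fun z hz w hw => ?_⟩
  set F : Phase d → ℝ := fun v => H (z + v) - (1/2) * HB H z v v with hF
  have hd : ∀ v, HasFDerivAt F (fderiv ℝ H (z + v) - HB H z v) v := by
    intro v
    have h1 : HasFDerivAt (fun v => H (z + v)) (fderiv ℝ H (z+v)) v := by
      exact (diffH hH (z+v)).hasFDerivAt.comp v ((hasFDerivAt_id v).const_add z)
    have h2 : HasFDerivAt (fun v => (1/2) * HB H z v v) (HB H z v) v := by
      have := ((HB H z).hasFDerivAt (x := v)).clm_apply (hasFDerivAt_id v)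
      have := this.const_mul (1/2)
      refine this.congr_fderiv ?_
      refine ContinuousLinearMap.ext fun u => ?_
      simp only [smul_apply, add_apply, ContinuousLinearMap.comp_apply, ContinuousLinearMap.flip_apply,
        ContinuousLinearMap.id_apply, smul_eq_mul, id]
      rw [symB hH z u v]; ring
    exact h1.sub h2
  have := (convex_closedBall (0:Phase d) ‖w‖).norm_image_sub_le_of_norm_hasFDerivWithin_le' (f := F)
    (φ := fderiv ℝ H z) (C := τ * ‖w‖) (fun v _ => (hd v).hasFDerivWithinAt) (fun v hv => by
      rw [mem_closedBall_zero_iff] at hv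
      have := h z hz (z + v) (by simpa using hv.trans hw)
      rw [add_sub_cancel_left] at this
      rw [sub_right_comm]
      refine this.trans ?_
      gcongr) (mem_closedBall_self (norm_nonneg _)) (y := w) (by simp)
  simp only [hF, add_zero, map_zero, mul_zero, sub_zero] at this
  rw [Real.norm_eq_abs] at this
  calc _ = |H (z + w) - 1 / 2 * (HB H z) w w - H z - (fderiv ℝ H z) w| := by congr 1; ring
    _ ≤ _ := this.trans (by rw [sq]; linarith)

/-! Legendre transform -/

theorem L_bdd (hH : TonelliHam H) (x : Phase d) : BddAbove {r | ∃ p : Euc d, r = ⟪p, x.2⟫ - H (x.1, p)} := by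
  obtain ⟨B, hB⟩ := hH.superlinear ‖x.2‖
  refine ⟨-B, ?_⟩
  rintro r ⟨p, rfl⟩
  have := hB x.1 p
  have := real_inner_le_norm p x.2
  nlinarith

theorem L_ge (hH : TonelliHam H) (q v p : Euc d) : ⟪p, v⟫ - H (q, p) ≤ LegendreL H (q, v) :=
  le_csSup (L_bdd hH (q,v)) ⟨p, rfl⟩

theorem L_le {q v : Euc d} {C : ℝ} (h : ∀ p, ⟪p, v⟫ - H (q, p) ≤ C) : LegendreL H (q, v) ≤ C := by
  refine csSup_le ⟨_, 0, rfl⟩ ?_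
  rintro r ⟨p, rfl⟩
  exact h p

theorem L_meas (hH : TonelliHam H) : Measurable (LegendreL H) := by
  have e : LegendreL H = fun x => ⨆ p : Euc d, (⟪p, x.2⟫ - H (x.1, p)) := by
    ext x
    unfold LegendreL iSup
    congr 1
    ext r; constructor
    · rintro ⟨p, rfl⟩; exact ⟨p, rfl⟩
    · rintro ⟨p, rfl⟩; exact ⟨p, rfl⟩
  have hcont := hH.smooth.continuous
  have : LowerSemicontinuous (LegendreL H) := by
    rw [e]
    refine lowerSemicontinuous_ciSup (fun x => ?_) (fun p => ?_)
    · refine (L_bdd hH x).mono ?_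
      rintro r ⟨p, rfl⟩; exact ⟨p, rfl⟩
    · refine Continuous.lowerSemicontinuous ?_
      fun_prop
  exact this.measurable

end HV

namespace AC
variable {E F G : Type*} [NormedAddCommGroup E] [NormedSpace ℝ E] [NormedAddCommGroup F]
  [NormedSpace ℝ F] [NormedAddCommGroup G] [NormedSpace ℝ G]

theorem dom {f : ℝ → G} {g : ℝ → E} {h : ℝ → F} {a b C : ℝ}
    (hg : AbsolutelyContinuousOnInterval g a b) (hh : AbsolutelyContinuousOnInterval h a b)
    (hC : ∀ s ∈ uIcc a b, ∀ t ∈ uIcc a b,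
      dist (f s) (f t) ≤ C * dist (g s) (g t) + C * dist (h s) (h t)) :
    AbsolutelyContinuousOnInterval f a b := by
  unfold AbsolutelyContinuousOnInterval at hg hh ⊢
  apply squeeze_zero' ?_ ?_ (by simpa using (hg.const_mul C).add (hh.const_mul C))
  · exact Filter.Eventually.of_forall <| fun _ ↦ Finset.sum_nonneg (fun i hi ↦ dist_nonneg)
  rw [eventually_inf_principal]
  filter_upwards with (n, I) hnI
  simp only [Finset.mul_sum, ← Finset.sum_add_distrib]
  apply Finset.sum_le_sum
  intro i hi
  exact hC _ (hnI.1 i hi).1 _ (hnI.1 i hi).2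

theorem bil (B : E →L[ℝ] F →L[ℝ] G) {g : ℝ → E} {h : ℝ → F} {a b : ℝ}
    (hg : AbsolutelyContinuousOnInterval g a b) (hh : AbsolutelyContinuousOnInterval h a b) :
    AbsolutelyContinuousOnInterval (fun t => B (g t) (h t)) a b := by
  obtain ⟨C, hC⟩ := hg.exists_bound
  obtain ⟨D, hD⟩ := hh.exists_bound
  have hC0 : 0 ≤ C := (norm_nonneg _).trans (hC a left_mem_uIcc)
  have hD0 : 0 ≤ D := (norm_nonneg _).trans (hD a left_mem_uIcc)
  apply dom (C := ‖B‖ * (C + D)) hg hh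
  intro s hs t ht
  rw [dist_eq_norm, dist_eq_norm, dist_eq_norm]
  have e : B (g s) (h s) - B (g t) (h t) = B (g s - g t) (h s) + B (g t) (h s - h t) := by
    simp only [map_sub, sub_apply]; abel
  rw [e]
  refine (norm_add_le _ _).trans (add_le_add ?_ ?_)
  · refine (B.le_opNorm₂ _ _).trans ?_
    have := hD s hs
    calc ‖B‖ * ‖g s - g t‖ * ‖h s‖ ≤ ‖B‖ * ‖g s - g t‖ * (C + D) := by gcongr; linarith
      _ = _ := by ring
  · refine (B.le_opNorm₂ _ _).trans ?_
    have := hC t ht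
    calc ‖B‖ * ‖g t‖ * ‖h s - h t‖ ≤ ‖B‖ * (C + D) * ‖h s - h t‖ := by gcongr; linarith
      _ = _ := by ring

theorem of_c1 {f f' : ℝ → E} {a b : ℝ} (hab : a ≤ b)
    (hd : ∀ s ∈ Icc a b, HasDerivAt f (f' s) s) (hc : ContinuousOn f' (Icc a b)) :
    AbsolutelyContinuousOnInterval f a b := by
  obtain ⟨C, hC⟩ := isCompact_Icc.exists_bound_of_continuousOn hc
  have hC' : ∀ s ∈ Icc a b, ‖f' s‖₊ ≤ C.toNNReal := by
    intro s hs
    rw [← NNReal.coe_le_coe, coe_nnnorm, Real.coe_toNNReal']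
    exact (hC s hs).trans (le_max_left _ _)
  have := (convex_Icc a b).lipschitzOnWith_of_nnnorm_hasDerivWithin_le
    (fun s hs => (hd s hs).hasDerivWithinAt) hC'
  apply LipschitzOnWith.absolutelyContinuousOnInterval (K := C.toNNReal)
  rwa [uIcc_of_le hab]

theorem ftc {D D' : ℝ → ℝ} {a b : ℝ} (hab : a ≤ b) (hD : AbsolutelyContinuousOnInterval D a b)
    (hd : ∀ᵐ t, t ∈ Ioo a b → HasDerivAt D (D' t) t) :
    IntervalIntegrable D' volume a b ∧ ∫ t in a..b, D' t = D b - D a := by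
  have hb : ∀ᵐ t : ℝ, t ≠ b := by
    simp [ae_iff, measure_singleton]
  have he : ∀ᵐ t, t ∈ uIoc a b → deriv D t = D' t := by
    filter_upwards [hd, hb] with t h1 h2 h3
    rw [uIoc_of_le hab] at h3
    exact (h1 ⟨h3.1, lt_of_le_of_ne h3.2 h2⟩).deriv
  constructor
  · refine hD.intervalIntegrable_deriv.congr_ae ?_
    rw [EventuallyEq, ae_restrict_iff' measurableSet_uIoc]
    exact he
  · rw [← hD.integral_deriv_eq_sub]
    apply intervalIntegral.integral_congr_ae
    filter_upwards [he] with t ht h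
    exact (ht h).symm

variable {d : ℕ} {γ γ' : ℝ → Euc d} {a b : ℝ}

theorem sub_eq (h : ACOn γ γ' a b) {s t : ℝ} (hs : s ∈ Icc a b) (ht : t ∈ Icc a b) :
    γ t - γ s = ∫ σ in s..t, γ' σ := by
  have hab : a ≤ b := hs.1.trans hs.2
  have i1 : IntervalIntegrable γ' volume a s := h.1.mono_set (by
    rw [uIcc_of_le hab, uIcc_of_le hs.1]; exact Icc_subset_Icc_right hs.2)
  have i2 : IntervalIntegrable γ' volume a t := h.1.mono_set (by
    rw [uIcc_of_le hab, uIcc_of_le ht.1]; exact Icc_subset_Icc_right ht.2)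
  rw [h.2 t ht, h.2 s hs, add_sub_add_left_eq_sub,
    intervalIntegral.integral_interval_sub_left i2 i1]

theorem mono (h : ACOn γ γ' a b) {a' b' : ℝ} (ha : a ≤ a') (hab : a' ≤ b') (hb : b' ≤ b) :
    ACOn γ γ' a' b' := by
  refine ⟨h.1.mono_set ?_, fun t ht => ?_⟩
  · rw [uIcc_of_le hab, uIcc_of_le (ha.trans (hab.trans hb))]
    exact Icc_subset_Icc ha hb
  · have := sub_eq h (s := a') (t := t) ⟨ha, hab.trans hb⟩ ⟨ha.trans ht.1, ht.2.trans hb⟩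
    rw [← this]; abel

theorem toAC (hab : a ≤ b) (h : ACOn γ γ' a b) : AbsolutelyContinuousOnInterval γ a b := by
  have hn := h.1.norm
  have hW := hn.absolutelyContinuousOnInterval_intervalIntegral (c := a) left_mem_uIcc
  apply dom (C := 1) hW hW
  intro s hs t ht
  rw [uIcc_of_le hab] at hs ht
  have key : ∀ s ∈ Icc a b, ∀ t ∈ Icc a b, s ≤ t → dist (γ s) (γ t) ≤
      dist (∫ v in a..s, ‖γ' v‖) (∫ v in a..t, ‖γ' v‖) := by
    intro s hs t ht hst
    have i1 : IntervalIntegrable (fun v => ‖γ' v‖) volume a s := hn.mono_set (by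
      rw [uIcc_of_le hab, uIcc_of_le hs.1]; exact Icc_subset_Icc_right hs.2)
    have i2 : IntervalIntegrable (fun v => ‖γ' v‖) volume a t := hn.mono_set (by
      rw [uIcc_of_le hab, uIcc_of_le ht.1]; exact Icc_subset_Icc_right ht.2)
    rw [dist_comm, dist_eq_norm, sub_eq h hs ht, dist_comm, Real.dist_eq,
      intervalIntegral.integral_interval_sub_left i2 i1]
    exact (intervalIntegral.norm_integral_le_integral_norm hst).trans (le_abs_self _)
  rw [one_mul]
  refine le_add_of_le_of_nonneg ?_ dist_nonneg
  rcases le_total s t with h | h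
  · exact key s hs t ht h
  · have := key t ht s hs h
    rw [dist_comm (γ s)]
    exact this.trans (dist_comm _ _).le

theorem ae_der (hab : a ≤ b) (h : ACOn γ γ' a b) :
    ∀ᵐ t, t ∈ Ioo a b → HasDerivAt γ (γ' t) t := by
  filter_upwards [h.1.ae_hasDerivAt_integral] with t ht hm
  have h1 := ht (by rw [uIcc_of_le hab]; exact Ioo_subset_Icc_self hm) a left_mem_uIcc
  refine (h1.const_add (γ a)).congr_of_eventuallyEq ?_
  filter_upwards [Ioo_mem_nhds hm.1 hm.2] with s hs
  exact h.2 s (Ioo_subset_Icc_self hs)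

theorem ofC1 (hab : a ≤ b) (hd : ∀ s ∈ Icc a b, HasDerivAt γ (γ' s) s)
    (hc : ContinuousOn γ' (Icc a b)) : ACOn γ γ' a b := by
  have hi : IntervalIntegrable γ' volume a b := by
    apply ContinuousOn.intervalIntegrable; rwa [uIcc_of_le hab]
  refine ⟨hi, fun t ht => ?_⟩
  rw [intervalIntegral.integral_eq_sub_of_hasDerivAt (f := γ)]
  · abel
  · intro s hs
    rw [uIcc_of_le ht.1] at hs
    exact hd s ⟨hs.1, hs.2.trans ht.2⟩
  · exact hi.mono_set (by
      rw [uIcc_of_le hab, uIcc_of_le ht.1]; exact Icc_subset_Icc_right ht.2)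
end AC

namespace LB
open HV

theorem quad_lower {h h1 h2 : ℝ → ℝ} {m : ℝ} (e1 : ∀ t ∈ Icc (0:ℝ) 1, HasDerivAt h (h1 t) t)
    (e2 : ∀ t ∈ Icc (0:ℝ) 1, HasDerivAt h1 (h2 t) t) (hm : ∀ t ∈ Icc (0:ℝ) 1, m ≤ h2 t) :
    h 0 + h1 0 + m / 2 ≤ h 1 := by
  have s1 : ∀ t ∈ Icc (0:ℝ) 1, h1 0 + m * t ≤ h1 t := by
    have hd : ∀ t ∈ Icc (0:ℝ) 1, HasDerivAt (fun t => h1 t - m * t) (h2 t - m * 1) t :=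
      fun t ht => (e2 t ht).sub ((hasDerivAt_id t).const_mul m)
    have mo : MonotoneOn (fun t => h1 t - m * t) (Icc 0 1) := by
      apply monotoneOn_of_deriv_nonneg (convex_Icc _ _)
      · exact fun t ht => (hd t ht).continuousAt.continuousWithinAt
      · exact fun t ht => (hd t (interior_subset ht)).differentiableAt.differentiableWithinAt
      · intro t ht
        rw [(hd t (interior_subset ht)).deriv]
        linarith [hm t (interior_subset ht)]
    intro t ht
    have := mo (left_mem_Icc.2 zero_le_one) ht ht.1
    simp only at this
    linarith
  have hd : ∀ t ∈ Icc (0:ℝ) 1, HasDerivAt (fun t => h t - h1 0 * t - m / 2 * t ^ 2)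
      (h1 t - h1 0 * 1 - m / 2 * (((2:ℕ):ℝ) * t ^ (2 - 1))) t :=
    fun t ht => ((e1 t ht).sub ((hasDerivAt_id t).const_mul _)).sub
      ((hasDerivAt_pow 2 t).const_mul _)
  have mo : MonotoneOn (fun t => h t - h1 0 * t - m / 2 * t ^ 2) (Icc 0 1) := by
    apply monotoneOn_of_deriv_nonneg (convex_Icc _ _)
    · exact fun t ht => (hd t ht).continuousAt.continuousWithinAt
    · exact fun t ht => (hd t (interior_subset ht)).differentiableAt.differentiableWithinAt
    · intro t ht
      rw [(hd t (interior_subset ht)).deriv]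
      have := s1 t (interior_subset ht)
      norm_num
      linarith
  have := mo (left_mem_Icc.2 zero_le_one) (right_mem_Icc.2 zero_le_one) zero_le_one
  simp only at this
  linarith

variable {d : ℕ} {H : Phase d → ℝ}

theorem H_strong (hH : TonelliHam H) (R : ℝ) : ∃ m > 0, ∀ y ∈ closedBall (0 : Phase d) R,
    ∀ k : Euc d, (‖k‖ ≤ 1 → H y + fderiv ℝ H y (0, k) + m * ‖k‖ ^ 2 ≤ H (y + (0, k))) ∧
      (1 < ‖k‖ → H y + fderiv ℝ H y (0, k) + m * ‖k‖ ≤ H (y + (0, k))) := by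
  obtain ⟨m, hm, hB⟩ := Bm hH (R + 1)
  have A : ∀ y ∈ closedBall (0 : Phase d) R,
      ∀ k : Euc d, ‖k‖ ≤ 1 → H y + fderiv ℝ H y (0, k) + m / 2 * ‖k‖ ^ 2 ≤ H (y + (0, k)) := by
    intro y hy k hk
    have hl : ∀ t : ℝ, HasDerivAt (fun t : ℝ => y + t • ((0, k) : Phase d)) (0, k) t := by
      intro t
      simpa using ((hasDerivAt_id t).smul_const ((0, k) : Phase d)).const_add y
    have e1 : ∀ t : ℝ, HasDerivAt (fun t : ℝ => H (y + t • ((0, k) : Phase d)))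
        (fderiv ℝ H (y + t • ((0, k) : Phase d)) (0, k)) t := fun t =>
      ((diffH hH.smooth _).hasFDerivAt).comp_hasDerivAt t (hl t)
    have e2 : ∀ t : ℝ, HasDerivAt (fun t : ℝ => fderiv ℝ H (y + t • ((0, k) : Phase d)) (0, k))
        (HB H (y + t • ((0, k) : Phase d)) (0, k) (0, k)) t := fun t =>
      (((diffDH hH.smooth _).hasFDerivAt).comp_hasDerivAt t (hl t)).clm_apply
        (hasDerivAt_const t ((0, k) : Phase d)) |>.congr_deriv (by simp)
    have := quad_lower (m := m * ‖k‖ ^ 2) (fun t _ => e1 t) (fun t _ => e2 t) (fun t ht => by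
      apply hB
      rw [mem_closedBall_zero_iff] at hy ⊢
      refine (norm_add_le _ _).trans (add_le_add hy ?_)
      rw [norm_smul, Prod.norm_mk, norm_zero, max_eq_right (norm_nonneg _), Real.norm_eq_abs,
        abs_of_nonneg ht.1]
      exact mul_le_one₀ ht.2 (norm_nonneg _) hk)
    simp only [zero_smul, add_zero, one_smul] at this
    linarith
  refine ⟨m / 2, by positivity, fun y hy k => ⟨A y hy k, fun hk => ?_⟩⟩
  have hn : 0 < ‖k‖ := by linarith
  have h1 := A y hy (‖k‖⁻¹ • k) (by rw [norm_smul, norm_inv, norm_norm, inv_mul_cancel₀ hn.ne'])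
  rw [norm_smul, norm_inv, norm_norm, inv_mul_cancel₀ hn.ne'] at h1
  have e : ((0, ‖k‖⁻¹ • k) : Phase d) = ‖k‖⁻¹ • (0, k) := by simp
  rw [e, map_smul, smul_eq_mul] at h1
  have hc0 : 0 ≤ 1 - ‖k‖⁻¹ := by
    rw [sub_nonneg]; exact inv_le_one_of_one_le₀ hk.le
  have hc1 : 0 ≤ ‖k‖⁻¹ := by positivity
  have cv := (fib_convex hH y.1 y.2 k).2 (mem_univ 0) (mem_univ 1) hc0 hc1 (by ring)
  simp only [smul_eq_mul, mul_zero, mul_one, zero_add, zero_smul, add_zero, one_smul] at cv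
  have e2 : y + ‖k‖⁻¹ • ((0, k) : Phase d) = (y.1, y.2 + ‖k‖⁻¹ • k) := by ext <;> simp
  have e3 : y + ((0, k) : Phase d) = (y.1, y.2 + k) := by ext <;> simp
  rw [e2] at h1
  rw [e3]
  have h2 := h1.trans cv
  have h3 := mul_le_mul_of_nonneg_left h2 hn.le
  have h4 : ‖k‖ * ‖k‖⁻¹ = 1 := mul_inv_cancel₀ hn.ne'
  have e4 : ((y.1, y.2) : Phase d) = y := rfl
  rw [e4] at h3
  have l1 : ‖k‖ * (H y + ‖k‖⁻¹ * (fderiv ℝ H y) (0, k) + m / 2 * 1 ^ 2) =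
    ‖k‖ * H y + (‖k‖ * ‖k‖⁻¹) * (fderiv ℝ H y) (0, k) + m / 2 * ‖k‖ := by ring
  have l2 : ‖k‖ * ((1 - ‖k‖⁻¹) * H y + ‖k‖⁻¹ * H (y.1, y.2 + k)) =
    ‖k‖ * H y - (‖k‖ * ‖k‖⁻¹) * H y + (‖k‖ * ‖k‖⁻¹) * H (y.1, y.2 + k) := by ring
  rw [l1, l2, h4] at h3
  linarith

theorem L_up (hH : TonelliHam H) (R : ℝ) : ∃ m > 0, ∀ y ∈ closedBall (0 : Phase d) R,
    ∀ l : ℝ, ∀ v : Euc d, ‖v - (hamVF H l y).1‖ ≤ m →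
      LegendreL H (y.1, v) ≤ ⟪y.2, v⟫ - H y + ‖v - (hamVF H l y).1‖ ^ 2 / (4 * m) := by
  obtain ⟨m, hm, hS⟩ := H_strong hH R
  refine ⟨m, hm, fun y hy l v hv => L_le fun p => ?_⟩
  set e := v - (hamVF H l y).1 with he
  set k := p - y.2 with hk
  have hp : ((y.1, p) : Phase d) = y + (0, k) := by ext <;> simp [hk]
  have h1 : ⟪p, v⟫ = ⟪y.2, v⟫ + fderiv ℝ H y (0, k) + ⟪k, e⟫ := by
    rw [← ham1 hH.smooth l, he, hk, inner_sub_right, real_inner_comm _ (p - y.2)]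
    simp only [inner_sub_left, inner_sub_right, real_inner_comm v]
    rw [real_inner_comm p, real_inner_comm y.2 (hamVF H l y).1]
    ring
  have h2 : ⟪k, e⟫ ≤ ‖k‖ * ‖e‖ := real_inner_le_norm _ _
  rw [hp, h1]
  rcases le_or_gt ‖k‖ 1 with hk1 | hk1
  · have := (hS y hy k).1 hk1
    have h3 : ‖k‖ * ‖e‖ - m * ‖k‖ ^ 2 ≤ ‖e‖ ^ 2 / (4 * m) := by
      rw [le_div_iff₀ (by positivity)]
      nlinarith [sq_nonneg (‖e‖ - 2 * m * ‖k‖)]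
    linarith
  · have := (hS y hy k).2 hk1
    have h3 : ‖k‖ * ‖e‖ ≤ m * ‖k‖ := by nlinarith
    have h4 : 0 ≤ ‖e‖ ^ 2 / (4 * m) := by positivity
    linarith

theorem L_var (hH : TonelliHam H) (l R : ℝ) {τ : ℝ} (hτ : 0 < τ) : ∃ ρ > 0, ρ ≤ 1 ∧
    ∀ x ∈ closedBall (0 : Phase d) R, ∀ W : Phase d, ‖W‖ ≤ ρ →
      LegendreL H (x.1 + W.1, (hamVF H l x).1 + (AV H l x W).1) ≤
        ⟪x.2 + W.2, (hamVF H l x).1 + (AV H l x W).1⟫ - H x - fderiv ℝ H x W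
          - (1/2) * HB H x W W + τ * ‖W‖ ^ 2 := by
  obtain ⟨m, hm, hL⟩ := L_up hH (R + 1)
  set τ1 := min m (min 1 (2 * m * τ)) with hτ1
  have t0 : 0 < τ1 := by positivity
  have t1 : τ1 ≤ m := min_le_left _ _
  have t2 : τ1 ≤ 1 := (min_le_right _ _).trans (min_le_left _ _)
  have t3 : τ1 ≤ 2 * m * τ := (min_le_right _ _).trans (min_le_right _ _)
  obtain ⟨ρ1, h1, h1', hT1⟩ := tay1 (ham_cd hH.smooth l) R t0
  obtain ⟨ρ2, h2, h2', hT2⟩ := tay2 hH.smooth R (half_pos hτ)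
  refine ⟨min ρ1 ρ2, by positivity, (min_le_left _ _).trans h1', fun x hx W hW => ?_⟩
  have w1 : ‖W‖ ≤ ρ1 := hW.trans (min_le_left _ _)
  have w2 : ‖W‖ ≤ ρ2 := hW.trans (min_le_right _ _)
  have a1 := hT1 x hx (x + W) (by simpa using w1)
  have a2 := hT2 x hx W w2
  simp only [add_sub_cancel_left] at a1
  set V := (hamVF H l x).1 + (AV H l x W).1 with hV
  have b1 : ‖V - (hamVF H l (x + W)).1‖ ≤ τ1 * ‖W‖ := by
    refine le_trans ?_ a1
    rw [← norm_neg]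
    have : -(V - (hamVF H l (x + W)).1) =
      (hamVF H l (x + W) - hamVF H l x - (fderiv ℝ (hamVF H l) x) W).1 := by
      simp only [hV, Prod.fst_sub, AV]; abel
    rw [this]
    exact norm_fst_le _
  have n0 := norm_nonneg W
  have n1 : ‖W‖ ≤ 1 := w1.trans h1'
  have c1 := hL (x + W) (by
    rw [mem_closedBall_zero_iff] at hx ⊢
    exact (norm_add_le _ _).trans (add_le_add hx n1)) l V (b1.trans (by nlinarith))
  simp only [Prod.fst_add, Prod.snd_add] at c1
  have c2 : ‖V - (hamVF H l (x + W)).1‖ ^ 2 / (4 * m) ≤ τ / 2 * ‖W‖ ^ 2 := by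
    rw [div_le_iff₀ (by positivity)]
    have : ‖V - (hamVF H l (x + W)).1‖ ^ 2 ≤ (τ1 * ‖W‖) ^ 2 := by gcongr
    refine this.trans ?_
    have : τ1 ^ 2 ≤ 2 * m * τ := by nlinarith
    nlinarith [sq_nonneg ‖W‖]
  have c3 := (abs_le.1 a2).1
  linarith
end LB

namespace LB
open HV
variable {d : ℕ} {H : Phase d → ℝ} {l T : ℝ} {z : ℝ → Phase d} {Φ : ℝ → Phase d →L[ℝ] Phase d}

structure Orb (H : Phase d → ℝ) (l T : ℝ) (z : ℝ → Phase d) (Φ : ℝ → Phase d →L[ℝ] Phase d) :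
    Prop where
  T0 : 0 ≤ T
  zd : ∀ s ∈ Icc (-T) 0, HasDerivAt z (hamVF H l (z s)) s
  P0 : Φ 0 = ContinuousLinearMap.id ℝ (Phase d)
  Pd : ∀ s ∈ Icc (-T) 0, HasDerivAt Φ ((AV H l (z s)).comp (Φ s)) s

def Adm (H : Phase d → ℝ) (l : ℝ) (γ γ' : ℝ → Euc d) (a : ℝ) : Prop :=
  ACOn γ γ' a 0 ∧ IntervalIntegrable (fun σ => Real.exp (l * σ) * LegendreL H (γ σ, γ' σ)) volume a 0

def Act (H : Phase d → ℝ) (l : ℝ) (γ γ' : ℝ → Euc d) (s : ℝ) : ℝ :=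
  ∫ σ in (-s)..0, Real.exp (l * σ) * LegendreL H (γ σ, γ' σ)

def Apart (H : Phase d → ℝ) (l : ℝ) (z : ℝ → Phase d) (s : ℝ) : ℝ :=
  ∫ σ in (-s)..0, Real.exp (l * σ) * (⟪(z σ).2, (hamVF H l (z σ)).1⟫ - H (z σ))

def PropP (H : Phase d → ℝ) (l T : ℝ) (f : Euc d → ℝ) : Prop :=
  ∀ θ, ∀ η > 0, ∃ γ γ' : ℝ → Euc d, Adm H l γ γ' (-T) ∧ γ 0 = θ ∧ ∀ s ∈ Icc 0 T,
    ∀ β β' : ℝ → Euc d, Adm H l β β' (-s) → β (-s) = γ (-s) →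
      f (β 0) - Act H l β β' s ≤ f θ - Act H l γ γ' s + η

theorem Orb.zc (o : Orb H l T z Φ) : ContinuousOn z (Icc (-T) 0) :=
  fun s hs => (o.zd s hs).continuousAt.continuousWithinAt

theorem Orb.Pc (o : Orb H l T z Φ) : ContinuousOn Φ (Icc (-T) 0) :=
  fun s hs => (o.Pd s hs).continuousAt.continuousWithinAt

theorem Orb.Wd (o : Orb H l T z Φ) (w : Phase d) {s : ℝ} (hs : s ∈ Icc (-T) 0) :
    HasDerivAt (fun s => Φ s w) (AV H l (z s) (Φ s w)) s := by
  simpa using (o.Pd s hs).clm_apply (hasDerivAt_const s w)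

theorem Orb.bd (o : Orb H l T z Φ) : ∃ R > 0, ∀ s ∈ Icc (-T) 0, ‖z s‖ ≤ R ∧ ‖Φ s‖ ≤ R := by
  obtain ⟨C, hC⟩ := isCompact_Icc.exists_bound_of_continuousOn o.zc
  obtain ⟨D, hD⟩ := isCompact_Icc.exists_bound_of_continuousOn o.Pc
  exact ⟨max 1 (max C D), by positivity, fun s hs =>
    ⟨(hC s hs).trans ((le_max_left _ _).trans (le_max_right _ _)),
      (hD s hs).trans ((le_max_right _ _).trans (le_max_right _ _))⟩⟩

theorem sub_Icc {s : ℝ} (hs : s ∈ Icc 0 T) : Icc (-s) 0 ⊆ Icc (-T) 0 :=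
  Icc_subset_Icc_left (neg_le_neg hs.2)

theorem fd {f : ℝ → Phase d} {f' : Phase d} {s : ℝ} (h : HasDerivAt f f' s) :
    HasDerivAt (fun s => (f s).1) f'.1 s := h.hasFDerivAt.fst.hasDerivAt.congr_deriv (by simp)

theorem sd {f : ℝ → Phase d} {f' : Phase d} {s : ℝ} (h : HasDerivAt f f' s) :
    HasDerivAt (fun s => (f s).2) f'.2 s := h.hasFDerivAt.snd.hasDerivAt.congr_deriv (by simp)

theorem expd (l s : ℝ) : HasDerivAt (fun s => Real.exp (l * s)) (Real.exp (l * s) * l) s := by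
  simpa using ((hasDerivAt_id s).const_mul l).exp

theorem sandwich {f lo hi : ℝ → ℝ} {a b : ℝ} (hab : a ≤ b)
    (hm : AEStronglyMeasurable f (volume.restrict (Icc a b)))
    (h1 : ContinuousOn lo (Icc a b)) (h2 : ContinuousOn hi (Icc a b))
    (h3 : ∀ t ∈ Icc a b, lo t ≤ f t) (h4 : ∀ t ∈ Icc a b, f t ≤ hi t) :
    IntervalIntegrable f volume a b := by
  rw [intervalIntegrable_iff_integrableOn_Icc_of_le hab]
  refine integrable_of_le_of_le hm (g₁ := lo) (g₂ := hi) ?_ ?_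
    (h1.integrableOn_compact isCompact_Icc) (h2.integrableOn_compact isCompact_Icc)
  · exact (ae_restrict_iff' measurableSet_Icc).2 (Eventually.of_forall h3)
  · exact (ae_restrict_iff' measurableSet_Icc).2 (Eventually.of_forall h4)

theorem L_aesm (hH : TonelliHam H) (l : ℝ) {γ γ' : ℝ → Euc d} {a b : ℝ}
    (h1 : ContinuousOn γ (Icc a b)) (h2 : ContinuousOn γ' (Icc a b)) :
    AEStronglyMeasurable (fun σ => Real.exp (l * σ) * LegendreL H (γ σ, γ' σ))
      (volume.restrict (Icc a b)) := by
  refine AEMeasurable.aestronglyMeasurable ?_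
  refine AEMeasurable.mul (by fun_prop) ?_
  exact (L_meas hH).comp_aemeasurable
    ((h1.aemeasurable measurableSet_Icc).prodMk (h2.aemeasurable measurableSet_Icc))

theorem upper (hH : TonelliHam H) (hl : 0 ≤ l) (o : Orb H l T z Φ) {τ : ℝ} (hτ : 0 < τ) :
    ∃ ρ > 0, ∀ w : Phase d, ‖w‖ ≤ ρ → ∀ s ∈ Icc 0 T, ∃ β β' : ℝ → Euc d, Adm H l β β' (-s) ∧
      β 0 = (z 0).1 + w.1 ∧ β (-s) = (z (-s)).1 + (Φ (-s) w).1 ∧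
      Act H l β β' s ≤ Apart H l z s + (⟪(z 0).2, w.1⟫ + (1/2) * ⟪w.2, w.1⟫)
        - Real.exp (-(l * s)) * (⟪(z (-s)).2, (Φ (-s) w).1⟫
            + (1/2) * ⟪(Φ (-s) w).2, (Φ (-s) w).1⟫) + τ * ‖w‖ ^ 2 := by
  obtain ⟨R, hR, hb⟩ := o.bd
  set τ1 := τ / (R ^ 2 * (T + 1)) with hτ1
  have hT := o.T0
  have t0 : 0 < τ1 := by positivity
  obtain ⟨ρ, hρ, hρ1, hL⟩ := L_var hH l R t0
  refine ⟨ρ / R, by positivity, fun w hw s hs => ?_⟩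
  have hss := sub_Icc hs
  have hs0 : -s ≤ 0 := by linarith [hs.1]
  set β : ℝ → Euc d := fun σ => (z σ).1 + (Φ σ w).1 with hβ
  set β' : ℝ → Euc d := fun σ => (hamVF H l (z σ)).1 + (AV H l (z σ) (Φ σ w)).1 with hβ'
  have cz : ContinuousOn z (Icc (-s) 0) := o.zc.mono hss
  have cW : ContinuousOn (fun σ => Φ σ w) (Icc (-s) 0) :=
    fun σ hσ => (o.Wd w (hss hσ)).continuousAt.continuousWithinAt
  have cX : ContinuousOn (fun σ => hamVF H l (z σ)) (Icc (-s) 0) :=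
    (ham_cd hH.smooth l).continuous.comp_continuousOn cz
  have cA : ContinuousOn (fun σ => AV H l (z σ) (Φ σ w)) (Icc (-s) 0) :=
    ((AV_cont hH.smooth l).comp_continuousOn cz).clm_apply cW
  have cβ : ContinuousOn β (Icc (-s) 0) := cz.fst.add cW.fst
  have cβ' : ContinuousOn β' (Icc (-s) 0) := cX.fst.add cA.fst
  have dβ : ∀ σ ∈ Icc (-s) 0, HasDerivAt β (β' σ) σ := fun σ hσ =>
    (fd (o.zd σ (hss hσ))).add (fd (o.Wd w (hss hσ)))
  have hac : ACOn β β' (-s) 0 := AC.ofC1 hs0 dβ cβ'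
  -- the primitive
  set g : ℝ → ℝ := fun σ => Real.exp (l * σ) * (⟪(z σ).2, (Φ σ w).1⟫
    + (1/2) * ⟪(Φ σ w).2, (Φ σ w).1⟫) with hg
  set g' : ℝ → ℝ := fun σ => Real.exp (l * σ) * l * (⟪(z σ).2, (Φ σ w).1⟫
    + (1/2) * ⟪(Φ σ w).2, (Φ σ w).1⟫) + Real.exp (l * σ) *
    ((⟪(z σ).2, (AV H l (z σ) (Φ σ w)).1⟫ + ⟪(hamVF H l (z σ)).2, (Φ σ w).1⟫)
    + (1/2) * (⟪(Φ σ w).2, (AV H l (z σ) (Φ σ w)).1⟫ + ⟪(AV H l (z σ) (Φ σ w)).2, (Φ σ w).1⟫))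
    with hg'
  have dg : ∀ σ ∈ Icc (-s) 0, HasDerivAt g (g' σ) σ := by
    intro σ hσ
    have hW := o.Wd w (hss hσ)
    have hz := o.zd σ (hss hσ)
    exact (expd l σ).mul (((sd hz).inner ℝ (fd hW)).add (((sd hW).inner ℝ (fd hW)).const_mul (1/2)))
  have cexp : ContinuousOn (fun σ => Real.exp (l * σ)) (Icc (-s) 0) := by fun_prop
  have cg' : ContinuousOn g' (Icc (-s) 0) :=
    ((cexp.mul continuousOn_const).mul ((cz.snd.inner cW.fst).add
      (continuousOn_const.mul (cW.snd.inner cW.fst)))).add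
    (cexp.mul (((cz.snd.inner cA.fst).add (cX.snd.inner cW.fst)).add
      (continuousOn_const.mul ((cW.snd.inner cA.fst).add (cA.snd.inner cW.fst)))))
  set q : ℝ → ℝ := fun σ => Real.exp (l * σ) * (⟪(z σ).2, (hamVF H l (z σ)).1⟫ - H (z σ)) with hq
  have cq : ContinuousOn q (Icc (-s) 0) :=
    cexp.mul ((cz.snd.inner cX.fst).sub (hH.smooth.continuous.comp_continuousOn cz))
  have ub : ∀ σ ∈ Icc (-s) 0, Real.exp (l * σ) * LegendreL H (β σ, β' σ) ≤
      q σ + g' σ + τ1 * (R * ‖w‖) ^ 2 := by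
    intro σ hσ
    obtain ⟨b1, b2⟩ := hb σ (hss hσ)
    have nW : ‖Φ σ w‖ ≤ R * ‖w‖ := ((Φ σ).le_opNorm w).trans (by gcongr)
    have nW' : ‖Φ σ w‖ ≤ ρ := nW.trans (by
      rw [le_div_iff₀ hR] at hw; linarith)
    have := hL (z σ) (mem_closedBall_zero_iff.2 b1) (Φ σ w) nW'
    have he : Real.exp (l * σ) ≤ 1 := Real.exp_le_one_iff.2 (mul_nonpos_of_nonneg_of_nonpos hl hσ.2)
    have he0 := (Real.exp_pos (l * σ))
    have hsq : ‖Φ σ w‖ ^ 2 ≤ (R * ‖w‖) ^ 2 := by gcongr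
    have h1 := mul_le_mul_of_nonneg_left this he0.le
    have hid : ⟪(z σ).2 + (Φ σ w).2, (hamVF H l (z σ)).1 + (AV H l (z σ) (Φ σ w)).1⟫ - H (z σ)
        - fderiv ℝ H (z σ) (Φ σ w) - (1/2) * HB H (z σ) (Φ σ w) (Φ σ w) =
        (⟪(z σ).2, (hamVF H l (z σ)).1⟫ - H (z σ)) + l * (⟪(z σ).2, (Φ σ w).1⟫
    + (1/2) * ⟪(Φ σ w).2, (Φ σ w).1⟫) +
    ((⟪(z σ).2, (AV H l (z σ) (Φ σ w)).1⟫ + ⟪(hamVF H l (z σ)).2, (Φ σ w).1⟫)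
    + (1/2) * (⟪(Φ σ w).2, (AV H l (z σ) (Φ σ w)).1⟫ + ⟪(AV H l (z σ) (Φ σ w)).2, (Φ σ w).1⟫)) := by
      generalize Φ σ w = W
      generalize z σ = x
      have s1 : W = (W.1, 0) + (0, W.2) := by ext <;> simp
      have d1 : fderiv ℝ H x W = fderiv ℝ H x (W.1, 0) + fderiv ℝ H x (0, W.2) := by
        conv_lhs => rw [s1, map_add]
      have d2 : HB H x W W = HB H x W (W.1, 0) + HB H x W (0, W.2) := by
        conv_lhs => rw [s1]
        rw [← s1, ← map_add, ← s1]
      rw [d1, d2, ← ham1 hH.smooth l, ham2 hH.smooth l, AV2 hH.smooth l, ← AV1 hH.smooth l]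
      simp only [inner_add_left, inner_add_right]
      rw [real_inner_comm (hamVF H l x).1 W.2, real_inner_comm (AV H l x W).1 W.2]
      ring
    rw [hid] at h1
    have h2 : Real.exp (l * σ) * (τ1 * ‖Φ σ w‖ ^ 2) ≤ τ1 * (R * ‖w‖) ^ 2 := by
      have : 0 ≤ τ1 * ‖Φ σ w‖ ^ 2 := by positivity
      calc _ ≤ 1 * (τ1 * ‖Φ σ w‖ ^ 2) := by gcongr
        _ ≤ _ := by rw [one_mul]; gcongr
    simp only [hq, hg', hβ, hβ']
    linarith
  have hi : IntervalIntegrable (fun σ => Real.exp (l * σ) * LegendreL H (β σ, β' σ))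
      volume (-s) 0 := by
    apply sandwich hs0 (L_aesm hH l cβ cβ') (lo := fun σ => Real.exp (l * σ) * (- H (β σ, 0)))
      (hi := fun σ => q σ + g' σ + τ1 * (R * ‖w‖) ^ 2) _ ((cq.add cg').add continuousOn_const) _ ub
    · exact cexp.mul (hH.smooth.continuous.comp_continuousOn (cβ.prodMk continuousOn_const)).neg
    · intro σ hσ
      have := L_ge hH (β σ) (β' σ) 0
      rw [inner_zero_left, zero_sub] at this
      exact mul_le_mul_of_nonneg_left this (Real.exp_pos _).le
  refine ⟨β, β', ⟨hac, hi⟩, by simp [hβ, o.P0], rfl, ?_⟩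
  have iq : IntervalIntegrable q volume (-s) 0 :=
    ContinuousOn.intervalIntegrable (by rwa [uIcc_of_le hs0])
  have ig : IntervalIntegrable g' volume (-s) 0 :=
    ContinuousOn.intervalIntegrable (by rwa [uIcc_of_le hs0])
  have hmono := intervalIntegral.integral_mono_on hs0 hi
    ((iq.add ig).add intervalIntegrable_const) ub
  have e1 : ∫ σ in (-s)..0, (q σ + g' σ + τ1 * (R * ‖w‖) ^ 2) =
      Apart H l z s + (g 0 - g (-s)) + s * (τ1 * (R * ‖w‖) ^ 2) := by
    rw [intervalIntegral.integral_add (iq.add ig) intervalIntegrable_const,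
      intervalIntegral.integral_add iq ig,
      intervalIntegral.integral_eq_sub_of_hasDerivAt (f := g)
        (by rw [uIcc_of_le hs0]; exact dg) ig]
    simp [Apart, hq]
    ring
  have e2 : s * (τ1 * (R * ‖w‖) ^ 2) ≤ τ * ‖w‖ ^ 2 := by
    have : τ1 * (R * ‖w‖) ^ 2 = τ * ‖w‖ ^ 2 / (T + 1) := by
      rw [hτ1]; field_simp
    rw [this, mul_div_assoc', div_le_iff₀ (by positivity)]
    have : s ≤ T + 1 := by linarith [hs.2]
    have h0 : 0 ≤ τ * ‖w‖ ^ 2 := by positivity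
    nlinarith
  have e3 : g 0 = ⟪(z 0).2, w.1⟫ + (1/2) * ⟪w.2, w.1⟫ := by simp [hg, o.P0]
  have e4 : l * -s = -(l * s) := by ring
  simp only [Act]
  refine hmono.trans ?_
  rw [e1, e3]
  simp only [hg, e4]
  linarith
end LB

namespace LB
open HV
variable {d : ℕ} {H : Phase d → ℝ} {l T : ℝ} {z : ℝ → Phase d} {Φ : ℝ → Phase d →L[ℝ] Phase d}

theorem symp (hH : TonelliHam H) (o : Orb H l T z Φ) (w1 w2 : Phase d) {s : ℝ}
    (hs : s ∈ Icc (-T) 0) : Real.exp (l * s) * (⟪(Φ s w1).2, (Φ s w2).1⟫ -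
      ⟪(Φ s w2).2, (Φ s w1).1⟫) = ⟪w1.2, w2.1⟫ - ⟪w2.2, w1.1⟫ := by
  set f : ℝ → ℝ := fun s => Real.exp (l * s) * (⟪(Φ s w1).2, (Φ s w2).1⟫ -
      ⟪(Φ s w2).2, (Φ s w1).1⟫) with hf
  have hd : ∀ σ ∈ Icc (-T) 0, HasDerivAt f 0 σ := by
    intro σ hσ
    have h1 := o.Wd w1 hσ
    have h2 := o.Wd w2 hσ
    refine ((expd l σ).mul (((sd h1).inner ℝ (fd h2)).sub ((sd h2).inner ℝ (fd h1)))).congr_deriv ?_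
    simp only [Pi.sub_apply]
    generalize Φ σ w1 = W1
    generalize Φ σ w2 = W2
    generalize z σ = x
    rw [AV2 hH.smooth l, AV2 hH.smooth l, real_inner_comm (AV H l x W2).1 W1.2,
      real_inner_comm (AV H l x W1).1 W2.2, AV1 hH.smooth l, AV1 hH.smooth l]
    have s1 : ∀ W : Phase d, W = (W.1, 0) + (0, W.2) := fun W => by ext <;> simp
    have d2 : HB H x W1 W2 = HB H x W1 (W2.1, 0) + HB H x W1 (0, W2.2) := by
      conv_lhs => rw [s1 W2, map_add]
    have d3 : HB H x W2 W1 = HB H x W2 (W1.1, 0) + HB H x W2 (0, W1.2) := by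
      conv_lhs => rw [s1 W1, map_add]
    have d4 := symB hH.smooth x W1 W2
    rw [d2, d3] at d4
    linear_combination (-Real.exp (l * σ)) * d4
  have hc : ∀ σ ∈ Icc (-T) 0, f σ = f (-T) :=
    constant_of_has_deriv_right_zero
      (fun σ hσ => (hd σ hσ).continuousAt.continuousWithinAt)
      (fun σ hσ => (hd σ (Ico_subset_Icc_self hσ)).hasDerivWithinAt)
  have h0 : (0:ℝ) ∈ Icc (-T) 0 := ⟨by linarith [o.T0], le_rfl⟩
  have : f s = f 0 := (hc s hs).trans (hc 0 h0).symm
  simp only [hf] at this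
  rw [this]
  simp [o.P0]

abbrev JK (d : ℕ) (K : ℝ) : Euc d →L[ℝ] Phase d :=
  (ContinuousLinearMap.id ℝ (Euc d)).prod ((-K) • ContinuousLinearMap.id ℝ (Euc d))

theorem isUnit_inj {M : Euc d →L[ℝ] Euc d} (h : ∀ v, M v = 0 → v = 0) : IsUnit M := by
  have hi : Function.Injective (M : Euc d →ₗ[ℝ] Euc d) :=
    (injective_iff_map_eq_zero _).2 h
  let e := (LinearEquiv.ofInjectiveEndo _ hi).toContinuousLinearEquiv
  refine ⟨⟨M, e.symm.toContinuousLinearMap, ?_, ?_⟩, rfl⟩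
  · ext1 x
    exact e.apply_symm_apply x
  · ext1 x
    exact e.symm_apply_apply x

theorem riccati (hH : TonelliHam H) (o : Orb H l T z Φ) (K : ℝ)
    (hinj : ∀ s ∈ Icc (-T) 0, ∀ v : Euc d, (Φ s (v, (-K) • v)).1 = 0 → v = 0) :
    ∃ Q Q' : ℝ → Euc d →L[ℝ] Euc d, (∀ s ∈ Icc (-T) 0, HasDerivAt Q (Q' s) s) ∧
      ContinuousOn Q' (Icc (-T) 0) ∧
      (∀ s ∈ Icc (-T) 0, ∀ x y, ⟪Q s x, y⟫ = ⟪Q s y, x⟫) ∧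
      (∀ s ∈ Icc (-T) 0, ∀ y, ⟪Q' s y, y⟫ = - HB H (z s) (y, Q s y) (y, Q s y) - l * ⟪Q s y, y⟫) ∧
      (∀ s ∈ Icc (-T) 0, ∀ k, Q s (Φ s (k, (-K) • k)).1 = (Φ s (k, (-K) • k)).2) ∧
      ∀ s ∈ Icc (-T) 0, ∀ y, ∃ k, (Φ s (k, (-K) • k)).1 = y := by
  set F1 := ContinuousLinearMap.fst ℝ (Euc d) (Euc d)
  set F2 := ContinuousLinearMap.snd ℝ (Euc d) (Euc d)
  set M : ℝ → Euc d →L[ℝ] Euc d := fun s => (F1.comp (Φ s)).comp (JK d K) with hM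
  set N : ℝ → Euc d →L[ℝ] Euc d := fun s => (F2.comp (Φ s)).comp (JK d K) with hN
  set M' : ℝ → Euc d →L[ℝ] Euc d :=
    fun s => (F1.comp ((AV H l (z s)).comp (Φ s))).comp (JK d K) with hM'
  set N' : ℝ → Euc d →L[ℝ] Euc d :=
    fun s => (F2.comp ((AV H l (z s)).comp (Φ s))).comp (JK d K) with hN'
  have dM : ∀ s ∈ Icc (-T) 0, HasDerivAt M (M' s) s := fun s hs => by
    have h1 := (hasDerivAt_const s F1).clm_comp (o.Pd s hs)
    have h2 := h1.clm_comp (hasDerivAt_const s (JK d K))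
    simpa using h2
  have dN : ∀ s ∈ Icc (-T) 0, HasDerivAt N (N' s) s := fun s hs => by
    have h1 := (hasDerivAt_const s F2).clm_comp (o.Pd s hs)
    have h2 := h1.clm_comp (hasDerivAt_const s (JK d K))
    simpa using h2
  have hMa : ∀ s k, M s k = (Φ s (k, (-K) • k)).1 := fun s k => by simp [hM, F1]
  have hNa : ∀ s k, N s k = (Φ s (k, (-K) • k)).2 := fun s k => by simp [hN, F2]
  have hMa' : ∀ s k, M' s k = (AV H l (z s) (Φ s (k, (-K) • k))).1 := fun s k => by simp [hM', F1]
  have hNa' : ∀ s k, N' s k = (AV H l (z s) (Φ s (k, (-K) • k))).2 := fun s k => by simp [hN', F2]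
  have hU : ∀ s ∈ Icc (-T) 0, IsUnit (M s) := fun s hs => isUnit_inj fun v hv =>
    hinj s hs v (by rw [← hMa]; exact hv)
  set I : ℝ → Euc d →L[ℝ] Euc d := fun s => Ring.inverse (M s) with hI
  have hMI : ∀ s ∈ Icc (-T) 0, ∀ v, M s (I s v) = v := fun s hs v => by
    have := Ring.mul_inverse_cancel _ (hU s hs)
    exact congrArg (fun A : Euc d →L[ℝ] Euc d => A v) this
  have hIM : ∀ s ∈ Icc (-T) 0, ∀ v, I s (M s v) = v := fun s hs v => by
    have := Ring.inverse_mul_cancel _ (hU s hs)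
    exact congrArg (fun A : Euc d →L[ℝ] Euc d => A v) this
  have dI : ∀ s ∈ Icc (-T) 0, HasDerivAt I (-(I s * M' s * I s)) s := fun s hs => by
    obtain ⟨u, hu⟩ := hU s hs
    have h1 := hasFDerivAt_ringInverse (𝕜 := ℝ) u
    rw [hu] at h1
    have h2 := h1.comp_hasDerivAt s (dM s hs)
    refine h2.congr_deriv ?_
    have : (↑u⁻¹ : Euc d →L[ℝ] Euc d) = I s := by
      simp only [hI, ← hu, Ring.inverse_unit]
    rw [this]
    simp
  have cM' : ContinuousOn M' (Icc (-T) 0) :=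
    (continuousOn_const.clm_comp (((AV_cont hH.smooth l).comp_continuousOn o.zc).clm_comp
      o.Pc)).clm_comp continuousOn_const
  have cN' : ContinuousOn N' (Icc (-T) 0) :=
    (continuousOn_const.clm_comp (((AV_cont hH.smooth l).comp_continuousOn o.zc).clm_comp
      o.Pc)).clm_comp continuousOn_const
  have cN : ContinuousOn N (Icc (-T) 0) := fun s hs => (dN s hs).continuousAt.continuousWithinAt
  have cI : ContinuousOn I (Icc (-T) 0) := fun s hs => (dI s hs).continuousAt.continuousWithinAt
  have hsym : ∀ s ∈ Icc (-T) 0, ∀ x y, ⟪(N s * I s) x, y⟫ = ⟪(N s * I s) y, x⟫ := by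
    intro s hs x y
    have h := symp hH o (I s x, (-K) • I s x) (I s y, (-K) • I s y) hs
    rw [← hNa, ← hNa, ← hMa, ← hMa, hMI s hs, hMI s hs] at h
    simp only [inner_smul_left] at h
    rw [real_inner_comm (I s y) (I s x), sub_self] at h
    have h2 := (mul_eq_zero.1 h).resolve_left (Real.exp_pos _).ne'
    exact sub_eq_zero.1 h2
  refine ⟨fun s => N s * I s, fun s => N' s * I s + N s * -(I s * M' s * I s),
    fun s hs => (dN s hs).mul (dI s hs), (cN'.mul cI).add (cN.mul ((cI.mul cM').mul cI).neg),
    hsym, ?_, ?_, fun s hs y => ⟨I s y, by rw [← hMa, hMI s hs]⟩⟩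
  · intro s hs y
    have e1 : (N' s * I s + N s * -(I s * M' s * I s)) y =
        N' s (I s y) - (N s * I s) (M' s (I s y)) := by
      simp [mul_assoc, sub_eq_add_neg]
    have hW : Φ s (I s y, (-K) • I s y) = (y, (N s * I s) y) := by
      apply Prod.ext
      · rw [← hMa, hMI s hs]
      · rw [← hNa]; rfl
    have e2 : HB H (z s) (y, (N s * I s) y) (y, (N s * I s) y) =
        HB H (z s) (y, (N s * I s) y) (y, 0) + HB H (z s) (y, (N s * I s) y) (0, (N s * I s) y) := by
      rw [← map_add]; simp
    rw [e1, inner_sub_left, hsym s hs, hNa', hMa', hW, AV2 hH.smooth l,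
      real_inner_comm (AV H l (z s) (y, (N s * I s) y)).1, AV1 hH.smooth l, e2]
    ring
  · intro s hs k
    rw [← hMa, ← hNa]
    show N s (I s (M s k)) = N s k
    rw [hIM s hs]
end LB

namespace LB
open HV
variable {d : ℕ} {H : Phase d → ℝ} {l T : ℝ} {z : ℝ → Phase d} {Φ : ℝ → Phase d →L[ℝ] Phase d}

structure Ric (H : Phase d → ℝ) (l T : ℝ) (z : ℝ → Phase d) (Q Q' : ℝ → Euc d →L[ℝ] Euc d)
    (μ : ℝ) : Prop where
  m0 : 0 < μ
  der : ∀ s ∈ Icc (-T) 0, HasDerivAt Q (Q' s) s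
  cont : ContinuousOn Q' (Icc (-T) 0)
  sym : ∀ s ∈ Icc (-T) 0, ∀ x y, ⟪Q s x, y⟫ = ⟪Q s y, x⟫
  ineq : ∀ s ∈ Icc (-T) 0, ∀ y,
    ⟪Q' s y, y⟫ + HB H (z s) (y, Q s y) (y, Q s y) + l * ⟪Q s y, y⟫ ≤ - μ * ‖y‖ ^ 2

theorem nrm_pair {Q : Euc d →L[ℝ] Euc d} {q : ℝ} (hq : ‖Q‖ ≤ q) (y : Euc d) :
    ‖((y, Q y) : Phase d)‖ ≤ (1 + q) * ‖y‖ := by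
  have h := (Q.le_opNorm y).trans (mul_le_mul_of_nonneg_right hq (norm_nonneg y))
  have q0 : 0 ≤ q := (norm_nonneg _).trans hq
  have := norm_nonneg y
  rw [Prod.norm_mk]
  apply max_le <;> nlinarith

theorem nrm_zero (k : Euc d) : ‖((0, k) : Phase d)‖ = ‖k‖ := by
  rw [Prod.norm_mk, norm_zero, max_eq_right (norm_nonneg _)]

theorem B_le (B : Phase d →L[ℝ] Phase d →L[ℝ] ℝ) {C : ℝ} (hC : ‖B‖ ≤ C) (v w : Phase d) :
    B v w ≤ C * ‖v‖ * ‖w‖ :=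
  (le_abs_self _).trans ((B.le_opNorm₂ v w).trans (by gcongr))

theorem nHB (hH : TonelliHam H) : Continuous (fun x : Phase d => ‖HB H x‖) :=
  Continuous.norm (E := Phase d →L[ℝ] Phase d →L[ℝ] ℝ) (contHB hH.smooth)

theorem HB_bd (hH : TonelliHam H) (o : Orb H l T z Φ) :
    ∃ C > 0, ∀ s ∈ Icc (-T) 0, ‖HB H (z s)‖ ≤ C := by
  have hc : ContinuousOn (fun s => ‖HB H (z s)‖) (Icc (-T) 0) :=
    (nHB hH).comp_continuousOn o.zc
  obtain ⟨C, hC⟩ := isCompact_Icc.exists_bound_of_continuousOn hc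
  refine ⟨max 1 C, by positivity, fun s hs => ?_⟩
  have h := hC s hs
  rw [Real.norm_eq_abs] at h
  exact ((le_abs_self _).trans h).trans (le_max_right _ _)

theorem exRic (hH : TonelliHam H) (hl : 0 ≤ l) (o : Orb H l T z Φ) (K : ℝ)
    (hinj : ∀ s ∈ Icc (-T) 0, ∀ v : Euc d, (Φ s (v, (-K) • v)).1 = 0 → v = 0)
    {ν : ℝ} (hν : 0 < ν) :
    ∃ Q Q' : ℝ → Euc d →L[ℝ] Euc d, ∃ μ, Ric H l T z Q Q' μ ∧
      ∀ s ∈ Icc (-T) 0, ∀ y : Euc d, ∃ k, (Φ s (k, (-K) • k)).1 = y ∧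
        ⟪Q s y, y⟫ ≤ ⟪(Φ s (k, (-K) • k)).2, y⟫ + ν * ‖y‖ ^ 2 := by
  obtain ⟨Q, Q', hd, hc, hs, hr, hQ, hex⟩ := riccati hH o K hinj
  have cQ : ContinuousOn Q (Icc (-T) 0) := fun s hs => (hd s hs).continuousAt.continuousWithinAt
  obtain ⟨q, hq⟩ := isCompact_Icc.exists_bound_of_continuousOn cQ
  obtain ⟨C, hC0, hC⟩ := HB_bd hH o
  have hT := o.T0
  have q0 : 0 ≤ q := (norm_nonneg _).trans (hq 0 ⟨by linarith, le_rfl⟩)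
  set c := l + 1 + 2 * C * (1 + q) + C with hcd
  have c0 : 0 ≤ c := by positivity
  set η := min ν 1 * Real.exp (-(c * T)) with hη
  have η0 : 0 < η := by positivity
  set n : ℝ → ℝ := fun s => η * Real.exp ((-c) * s) with hn
  have n1 : ∀ s ∈ Icc (-T) 0, η ≤ n s ∧ n s ≤ min ν 1 := by
    intro s hs
    constructor
    · have : 1 ≤ Real.exp ((-c) * s) := Real.one_le_exp (by nlinarith [hs.2])
      simp only [hn]; nlinarith
    · have : Real.exp (-(c * T)) * Real.exp ((-c) * s) ≤ 1 := by
        rw [← Real.exp_add, Real.exp_le_one_iff]; nlinarith [hs.1]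
      have hm : 0 < min ν 1 := by positivity
      simp only [hn, hη]
      rw [mul_assoc]
      nlinarith
  have dn : ∀ s, HasDerivAt n (η * (Real.exp ((-c) * s) * (-c))) s := fun s =>
    (expd (-c) s).const_mul η
  set I := ContinuousLinearMap.id ℝ (Euc d)
  refine ⟨fun s => Q s + n s • I, fun s => Q' s + (η * (Real.exp ((-c) * s) * (-c))) • I, η,
    ⟨η0, ?_, ?_, ?_, ?_⟩, ?_⟩
  · exact fun s hs => (hd s hs).add ((dn s).smul_const I)
  · exact hc.add (by fun_prop)
  · intro s h x y
    simp only [add_apply, smul_apply, inner_add_left, inner_smul_left, I,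
      ContinuousLinearMap.id_apply]
    rw [hs s h, real_inner_comm x y]
  · intro s h y
    have e1 : (Q' s + (η * (Real.exp ((-c) * s) * (-c))) • I) y = Q' s y - (c * n s) • y := by
      simp only [add_apply, smul_apply, I, ContinuousLinearMap.id_apply, hn, sub_eq_add_neg,
        ← neg_smul]
      congr 2; ring
    have e2 : (Q s + n s • I) y = Q s y + n s • y := by
      simp [I]
    rw [e1, e2]
    have e3 : ((y, Q s y + n s • y) : Phase d) = (y, Q s y) + n s • (0, y) := by
      ext <;> simp
    have sy := symB hH.smooth (z s) (y, Q s y) (0, y)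
    have hr1 := hr s h y
    have b1 := B_le (HB H (z s)) (hC s h) (y, Q s y) (0, y)
    have b2 := B_le (HB H (z s)) (hC s h) (0, y) (0, y)
    rw [nrm_zero] at b1 b2
    have hp := nrm_pair (hq s h) y
    have b3 : C * ‖((y, Q s y) : Phase d)‖ * ‖y‖ ≤ C * ((1 + q) * ‖y‖) * ‖y‖ := by gcongr
    have hy : ⟪y, y⟫ = ‖y‖ ^ 2 := real_inner_self_eq_norm_sq y
    rw [e3]
    simp only [map_add, map_smul, add_apply, smul_apply, smul_eq_mul, inner_sub_left,
      inner_add_left, inner_smul_left, RCLike.conj_to_real, hy]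
    obtain ⟨na, nb⟩ := n1 s h
    have nb1 : n s ≤ 1 := nb.trans (min_le_right _ _)
    have n0 : 0 < n s := η0.trans_le na
    have hB1 : HB H (z s) (y, Q s y) (0, y) ≤ C * (1 + q) * ‖y‖ ^ 2 := by
      refine (b1.trans b3).trans (le_of_eq (by ring))
    have hB2 : HB H (z s) (0, y) (0, y) ≤ C * ‖y‖ ^ 2 := b2.trans (le_of_eq (by ring))
    rw [← sy, hr1]
    have m1 := mul_le_mul_of_nonneg_left hB1 n0.le
    have m2 := mul_le_mul_of_nonneg_left hB2 (mul_pos n0 n0).le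
    have y0 := sq_nonneg ‖y‖
    have m3 : n s * n s * (C * ‖y‖ ^ 2) ≤ n s * (C * ‖y‖ ^ 2) := by
      have : n s * n s ≤ n s := by nlinarith
      gcongr
    have m4 : η * ‖y‖ ^ 2 ≤ n s * ‖y‖ ^ 2 := by gcongr
    have : c * n s * ‖y‖ ^ 2 = l * n s * ‖y‖ ^ 2 + n s * ‖y‖ ^ 2
      + 2 * (n s * (C * (1 + q) * ‖y‖ ^ 2)) + n s * (C * ‖y‖ ^ 2) := by rw [hcd]; ring
    linarith
  · intro s h y
    obtain ⟨k, hk⟩ := hex s h y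
    refine ⟨k, hk, ?_⟩
    rw [← hQ s h k, hk]
    have hy : ⟪y, y⟫ = ‖y‖ ^ 2 := real_inner_self_eq_norm_sq y
    simp only [add_apply, smul_apply, inner_add_left, inner_smul_left, I,
      ContinuousLinearMap.id_apply, RCLike.conj_to_real, hy]
    have := (n1 s h).2.trans (min_le_left _ _)
    gcongr

theorem lower_pt (hH : TonelliHam H) (o : Orb H l T z Φ) {Q Q' : ℝ → Euc d →L[ℝ] Euc d}
    {μ : ℝ} (rc : Ric H l T z Q Q' μ) : ∃ C3 ≥ 0, ∃ ρ > 0, ∀ σ ∈ Icc (-T) 0, ∀ y r v : Euc d,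
      ‖y‖ ≤ ρ → ‖r‖ ≤ ρ →
      (⟪(z σ).2, (hamVF H l (z σ)).1⟫ - H (z σ)) + (l * (⟪(z σ).2, y⟫ + (1/2) * ⟪Q σ y, y⟫)
        + (⟪(z σ).2, v - (hamVF H l (z σ)).1⟫ + ⟪(hamVF H l (z σ)).2, y⟫)
        + ((1/2) * ⟪Q' σ y, y⟫ + ⟪Q σ y, v - (hamVF H l (z σ)).1⟫))
        + ⟪r, v - (hamVF H l (z σ)).1⟫ - C3 * ‖r‖ ^ 2 ≤ LegendreL H ((z σ).1 + y, v) := by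
  obtain ⟨R, hR, hb⟩ := o.bd
  have cQ : ContinuousOn Q (Icc (-T) 0) :=
    fun s hs => (rc.der s hs).continuousAt.continuousWithinAt
  obtain ⟨q, hq⟩ := isCompact_Icc.exists_bound_of_continuousOn cQ
  obtain ⟨C, hC0, hC⟩ := HB_bd hH o
  have hT := o.T0
  have q0 : 0 ≤ q := (norm_nonneg _).trans (hq 0 ⟨by linarith, le_rfl⟩)
  have m0 := rc.m0
  set τ := μ / (8 * (1 + q) ^ 2) with hτ
  have t0 : 0 < τ := by positivity
  obtain ⟨ρ, hρ, _, hT2⟩ := tay2 hH.smooth R t0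
  refine ⟨(C * (1 + q)) ^ 2 / μ + C / 2 + 2 * τ, by positivity, ρ / (2 + q), by positivity, ?_⟩
  intro σ hσ y r v hy hr
  have hx := (hb σ hσ).1
  have hQ := hq σ hσ
  have hCs := hC σ hσ
  have hi := rc.ineq σ hσ y
  generalize z σ = x at *
  generalize Q σ = S at *
  generalize Q' σ = S' at *
  set V0 : Phase d := (y, S y) with hV0
  set W : Phase d := (y, S y + r) with hW
  have eW : W = V0 + (0, r) := by simp [hW, hV0]
  have nV0 := nrm_pair hQ y
  have nW : ‖W‖ ≤ (1 + q) * ‖y‖ + ‖r‖ := by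
    rw [eW]
    refine (norm_add_le _ _).trans ?_
    rw [nrm_zero]
    linarith
  have nW' : ‖W‖ ≤ ρ := by
    rw [le_div_iff₀ (by positivity)] at hy hr
    nlinarith [norm_nonneg y, norm_nonneg r]
  have ht := (abs_le.1 (hT2 x (mem_closedBall_zero_iff.2 hx) W nW')).2
  have hL := L_ge hH (x.1 + y) v (x.2 + S y + r)
  have ex : ((x.1 + y, x.2 + S y + r) : Phase d) = x + W := by
    ext <;> simp [hW, add_assoc]
  rw [ex] at hL
  have eB : HB H x W W = HB H x V0 V0 + 2 * HB H x V0 (0, r) + HB H x (0, r) (0, r) := by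
    rw [eW]
    simp only [map_add, add_apply]
    rw [symB hH.smooth x (0, r) V0]; ring
  have b1 := B_le (HB H x) hCs V0 (0, r)
  have b2 := B_le (HB H x) hCs (0, r) (0, r)
  rw [nrm_zero] at b1 b2
  have b3 : C * ‖V0‖ * ‖r‖ ≤ C * ((1 + q) * ‖y‖) * ‖r‖ := by gcongr
  have b4 : C * ((1 + q) * ‖y‖) * ‖r‖ ≤ μ / 4 * ‖y‖ ^ 2 + (C * (1 + q)) ^ 2 / μ * ‖r‖ ^ 2 := by
    have h : 0 ≤ (μ / 2 * ‖y‖ - C * (1 + q) * ‖r‖) ^ 2 / μ := by positivity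
    have e : (μ / 2 * ‖y‖ - C * (1 + q) * ‖r‖) ^ 2 / μ =
      μ / 4 * ‖y‖ ^ 2 + (C * (1 + q)) ^ 2 / μ * ‖r‖ ^ 2 - C * ((1 + q) * ‖y‖) * ‖r‖ := by
      field_simp; ring
    linarith
  have b5 : τ * ‖W‖ ^ 2 ≤ μ / 4 * ‖y‖ ^ 2 + 2 * τ * ‖r‖ ^ 2 := by
    have h1 : ‖W‖ ^ 2 ≤ ((1 + q) * ‖y‖ + ‖r‖) ^ 2 := by gcongr
    have h2 : ((1 + q) * ‖y‖ + ‖r‖) ^ 2 ≤ 2 * (1 + q) ^ 2 * ‖y‖ ^ 2 + 2 * ‖r‖ ^ 2 := by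
      nlinarith [sq_nonneg ((1 + q) * ‖y‖ - ‖r‖)]
    have h3 : τ * (2 * (1 + q) ^ 2 * ‖y‖ ^ 2 + 2 * ‖r‖ ^ 2) =
        μ / 4 * ‖y‖ ^ 2 + 2 * τ * ‖r‖ ^ 2 := by
      rw [hτ]; field_simp; ring
    rw [← h3]
    exact mul_le_mul_of_nonneg_left (h1.trans h2) t0.le
  have eD : fderiv ℝ H x W = fderiv ℝ H x (y, 0) + ⟪(hamVF H l x).1, S y⟫
      + ⟪(hamVF H l x).1, r⟫ := by
    rw [ham1 hH.smooth, ham1 hH.smooth, ← map_add, ← map_add]; simp [hW]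
  have eP := ham2 hH.smooth l x y
  simp only [inner_add_left] at hL
  simp only [inner_sub_right]
  rw [real_inner_comm (hamVF H l x).1 (S y), real_inner_comm (hamVF H l x).1 r]
  rw [eB, eD] at ht
  have ef : ((C * (1 + q)) ^ 2 / μ + C / 2 + 2 * τ) * ‖r‖ ^ 2 = (C * (1 + q)) ^ 2 / μ * ‖r‖ ^ 2
    + C / 2 * ‖r‖ ^ 2 + 2 * τ * ‖r‖ ^ 2 := by ring
  rw [ef]
  have b6 : C * ‖r‖ * ‖r‖ = C * ‖r‖ ^ 2 := by ring
  rw [b6] at b2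
  linarith
end LB

namespace LB
open HV
variable {d : ℕ} {H : Phase d → ℝ} {l T : ℝ} {z : ℝ → Phase d} {Φ : ℝ → Phase d →L[ℝ] Phase d}

theorem exists_dir (a : ℝ) (ha : 0 ≤ a) (w : Euc d) : ∃ r : Euc d, ‖r‖ ≤ a ∧ ⟪r, w⟫ = a * ‖w‖ := by
  by_cases h : w = 0
  · exact ⟨0, by simpa using ha, by simp [h]⟩
  · have hw : ‖w‖ ≠ 0 := norm_ne_zero_iff.2 h
    refine ⟨(a / ‖w‖) • w, ?_, ?_⟩
    · rw [norm_smul, Real.norm_eq_abs, abs_of_nonneg (by positivity)]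
      exact le_of_eq (by field_simp)
    · rw [inner_smul_left, RCLike.conj_to_real, real_inner_self_eq_norm_sq]
      field_simp

theorem lower_int (hH : TonelliHam H) (hl : 0 ≤ l) (o : Orb H l T z Φ)
    {Q Q' : ℝ → Euc d →L[ℝ] Euc d} {μ : ℝ} (rc : Ric H l T z Q Q' μ) :
    ∃ C3 ≥ 0, ∃ ρ > 0, ∀ s ∈ Icc 0 T, ∀ γ γ' : ℝ → Euc d, Adm H l γ γ' (-s) →
      (∀ σ ∈ Icc (-s) 0, ‖γ σ - (z σ).1‖ ≤ ρ) → γ 0 = (z 0).1 → ∀ a, 0 ≤ a → a ≤ ρ →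
      Apart H l z s - Real.exp (-(l * s)) * (⟪(z (-s)).2, γ (-s) - (z (-s)).1⟫
          + (1/2) * ⟪Q (-s) (γ (-s) - (z (-s)).1), γ (-s) - (z (-s)).1⟫)
        + Real.exp (-(l * T)) * a * ‖γ (-s) - (z (-s)).1‖ - C3 * a ^ 2 * T ≤ Act H l γ γ' s := by
  obtain ⟨C3, hC3, ρ, hρ, hpt⟩ := lower_pt hH o rc
  refine ⟨C3, hC3, ρ, hρ, fun s hs γ γ' hadm hcl h0 a ha0 ha => ?_⟩
  have hss := sub_Icc hs
  have s0 : -s ≤ 0 := by linarith [hs.1]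
  have czs : ContinuousOn z (Icc (-s) 0) := o.zc.mono hss
  have chv : ContinuousOn (fun σ => hamVF H l (z σ)) (Icc (-s) 0) :=
    (ham_cd hH.smooth l).continuous.comp_continuousOn czs
  set y : ℝ → Euc d := fun σ => γ σ - (z σ).1 with hy
  set y' : ℝ → Euc d := fun σ => γ' σ - (hamVF H l (z σ)).1 with hy'
  have zac : ACOn (fun σ => (z σ).1) (fun σ => (hamVF H l (z σ)).1) (-s) 0 :=
    AC.ofC1 s0 (fun σ h => fd (o.zd σ (hss h))) chv.fst
  have yint : IntervalIntegrable y' volume (-s) 0 := hadm.1.1.sub zac.1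
  have yac : ACOn y y' (-s) 0 := by
    refine ⟨yint, fun t ht => ?_⟩
    have hsub : uIcc (-s) t ⊆ uIcc (-s) 0 := by
      rw [uIcc_of_le s0, uIcc_of_le ht.1]; exact Icc_subset_Icc_right ht.2
    have e := intervalIntegral.integral_sub (hadm.1.1.mono_set hsub) (zac.1.mono_set hsub)
    simp only [hy, hy']
    rw [e, hadm.1.2 t ht]
    have := zac.2 t ht
    simp only at this
    rw [this]; abel
  have yAC := AC.toAC s0 yac
  have QAC : AbsolutelyContinuousOnInterval Q (-s) 0 :=
    AC.of_c1 s0 (fun σ h => rc.der σ (hss h)) (rc.cont.mono hss)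
  have PAC : AbsolutelyContinuousOnInterval (fun σ => (z σ).2) (-s) 0 :=
    AC.of_c1 s0 (fun σ h => sd (o.zd σ (hss h))) chv.snd
  have eAC : AbsolutelyContinuousOnInterval (fun σ => Real.exp (l * σ)) (-s) 0 :=
    AC.of_c1 s0 (fun σ h => expd l σ) (by fun_prop)
  have QyAC := AC.bil (ContinuousLinearMap.id ℝ (Euc d →L[ℝ] Euc d)) QAC yAC
  have qAC := AC.bil (innerSL ℝ (E := Euc d)) QyAC yAC
  have pAC := AC.bil (innerSL ℝ (E := Euc d)) PAC yAC
  have DAC := AC.bil (ContinuousLinearMap.mul ℝ ℝ) eAC (pAC.fun_add (qAC.const_smul (1/2 : ℝ)))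
  set D' : ℝ → ℝ := fun σ => Real.exp (l * σ) * (l * (⟪(z σ).2, y σ⟫ + (1/2) * ⟪Q σ (y σ), y σ⟫)
        + (⟪(z σ).2, y' σ⟫ + ⟪(hamVF H l (z σ)).2, y σ⟫)
        + ((1/2) * ⟪Q' σ (y σ), y σ⟫ + ⟪Q σ (y σ), y' σ⟫)) with hD'
  have hder : ∀ᵐ t, t ∈ Ioo (-s) 0 → HasDerivAt (fun σ => Real.exp (l * σ) *
      (⟪(z σ).2, y σ⟫ + (1/2) * ⟪Q σ (y σ), y σ⟫)) (D' t) t := by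
    filter_upwards [AC.ae_der s0 yac] with t ht hm
    have hm' := hss (Ioo_subset_Icc_self hm)
    have dy := ht hm
    have dP := (sd (o.zd t hm')).inner ℝ dy
    have dQ := ((rc.der t hm').clm_apply dy).inner ℝ dy
    refine ((expd l t).mul (dP.add (dQ.const_mul (1/2)))).congr_deriv ?_
    simp only [hD', Pi.add_apply, inner_add_left]
    rw [rc.sym t hm' (y' t) (y t)]
    ring
  have DAC' : AbsolutelyContinuousOnInterval (fun σ => Real.exp (l * σ) *
      (⟪(z σ).2, y σ⟫ + (1/2) * ⟪Q σ (y σ), y σ⟫)) (-s) 0 := DAC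
  obtain ⟨Di, De⟩ := AC.ftc s0 DAC' hder
  have ci : IntervalIntegrable (fun σ => Real.exp (l * σ) *
      (⟪(z σ).2, (hamVF H l (z σ)).1⟫ - H (z σ))) volume (-s) 0 := by
    apply ContinuousOn.intervalIntegrable
    rw [uIcc_of_le s0]
    have := hH.smooth.continuous.comp_continuousOn czs
    refine ContinuousOn.mul (by fun_prop) (ContinuousOn.sub ?_ this)
    exact ContinuousOn.inner czs.snd chv.fst
  have ni : IntervalIntegrable (fun σ => Real.exp (-(l * T)) * a * ‖y' σ‖ - C3 * a ^ 2)
      volume (-s) 0 := (yint.norm.const_mul _).sub intervalIntegrable_const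
  have key : ∫ σ in (-s)..0, (Real.exp (l * σ) * (⟪(z σ).2, (hamVF H l (z σ)).1⟫ - H (z σ)) + D' σ
      + (Real.exp (-(l * T)) * a * ‖y' σ‖ - C3 * a ^ 2)) ≤ Act H l γ γ' s := by
    refine intervalIntegral.integral_mono_on s0 ((ci.add Di).add ni) hadm.2 fun σ hσ => ?_
    obtain ⟨r, hr, hr'⟩ := exists_dir a ha0 (y' σ)
    have h := hpt σ (hss hσ) (y σ) r (γ' σ) (hcl σ hσ) (hr.trans ha)
    have e1 : (z σ).1 + y σ = γ σ := by simp [hy]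
    rw [e1] at h
    change _ + (_ + (⟪(z σ).2, y' σ⟫ + _) + (_ + ⟪Q σ (y σ), y' σ⟫)) + ⟪r, y' σ⟫ - _ ≤ _ at h
    rw [hr'] at h
    have h' := mul_le_mul_of_nonneg_left h (Real.exp_pos (l * σ)).le
    have el : Real.exp (l * σ) ≤ 1 := Real.exp_le_one_iff.2 (by nlinarith [hσ.2])
    have eg : Real.exp (-(l * T)) ≤ Real.exp (l * σ) :=
      Real.exp_le_exp.2 (by nlinarith [(hss hσ).1])
    have f1 : Real.exp (-(l * T)) * (a * ‖y' σ‖) ≤ Real.exp (l * σ) * (a * ‖y' σ‖) := by gcongr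
    have f2 : Real.exp (l * σ) * (C3 * ‖r‖ ^ 2) ≤ 1 * (C3 * a ^ 2) := by gcongr
    simp only [hD']
    linarith
  rw [intervalIntegral.integral_add (ci.add Di) ni, intervalIntegral.integral_add ci Di, De,
    intervalIntegral.integral_sub (yint.norm.const_mul _) intervalIntegrable_const,
    intervalIntegral.integral_const_mul, intervalIntegral.integral_const] at key
  have y0 : y 0 = 0 := by simp [hy, h0]
  have hn : ‖y (-s)‖ ≤ ∫ σ in (-s)..0, ‖y' σ‖ := by
    have h1 := AC.sub_eq yac (s := -s) (t := 0) ⟨le_rfl, s0⟩ ⟨s0, le_rfl⟩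
    rw [y0, zero_sub] at h1
    rw [← norm_neg, h1]
    exact intervalIntegral.norm_integral_le_integral_norm s0
  have hn' : Real.exp (-(l * T)) * a * ‖y (-s)‖ ≤ Real.exp (-(l * T)) * a * ∫ σ in (-s)..0, ‖y' σ‖ := by
    gcongr
  have hc : C3 * a ^ 2 * s ≤ C3 * a ^ 2 * T := by have := hs.2; gcongr
  simp only [y0, map_zero, inner_zero_right, zero_add, mul_zero, smul_eq_mul, zero_sub,
    sub_neg_eq_add, mul_neg] at key
  simp only [Apart]
  change _ - _ * (⟪(z (-s)).2, y (-s)⟫ + 1/2 * ⟪Q (-s) (y (-s)), y (-s)⟫) + _ * _ * ‖y (-s)‖ - _ ≤ _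
  linarith

theorem unif_inj {E F : Type*} [NormedAddCommGroup E] [NormedSpace ℝ E] [FiniteDimensional ℝ E]
    [NormedAddCommGroup F] [NormedSpace ℝ F] {I : Set ℝ} (hI : IsCompact I) {M : ℝ → E →L[ℝ] F}
    (hM : ContinuousOn M I) (hi : ∀ s ∈ I, ∀ v, M s v = 0 → v = 0) :
    ∃ c > 0, ∀ s ∈ I, ∀ v, c * ‖v‖ ≤ ‖M s v‖ := by
  have hc : ContinuousOn (fun x : ℝ × E => ‖M x.1 x.2‖) (I ×ˢ sphere 0 1) := by
    refine ContinuousOn.norm (ContinuousOn.clm_apply ?_ continuousOn_snd)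
    exact hM.comp continuousOn_fst fun x hx => hx.1
  by_cases hne : (I ×ˢ sphere (0:E) 1).Nonempty
  · obtain ⟨x, hx, hmin⟩ := (hI.prod (isCompact_sphere 0 1)).exists_isMinOn hne hc
    refine ⟨‖M x.1 x.2‖, ?_, fun s hs v => ?_⟩
    · refine norm_pos_iff.2 ?_
      intro h
      have := hi _ hx.1 _ h
      have h2 := hx.2
      rw [this] at h2
      simp at h2
    · by_cases hv : v = 0
      · simp [hv]
      · have n0 : 0 < ‖v‖ := norm_pos_iff.2 hv
        have h := hmin (a := (s, ‖v‖⁻¹ • v)) ⟨hs, by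
          simp [norm_smul, n0.ne']⟩
        simp only [mem_ofPred_eq, map_smul, norm_smul, norm_inv, norm_norm] at h
        rw [inv_mul_eq_div, le_div_iff₀ n0] at h
        exact h
  · refine ⟨1, one_pos, fun s hs v => ?_⟩
    by_cases hv : v = 0
    · simp [hv]
    · exact absurd ⟨(s, ‖v‖⁻¹ • v), hs, by simp [norm_smul, norm_ne_zero_iff.2 hv]⟩ hne
end LB

namespace LB
open HV
variable {d : ℕ} {H : Phase d → ℝ} {l T : ℝ} {z : ℝ → Phase d} {Φ : ℝ → Phase d →L[ℝ] Phase d}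

theorem alex_bd {f : Euc d → ℝ} {θ p : Euc d} {S : Euc d →L[ℝ] Euc d}
    (h : HasAlexandrovAt f p S θ) {τ : ℝ} (hτ : 0 < τ) : ∃ ρ > 0, ∀ k, ‖k‖ ≤ ρ →
      f θ + ⟪p, k⟫ + (1/2) * ⟪S k, k⟫ - τ * ‖k‖ ^ 2 ≤ f (θ + k) := by
  have h2 := h.2.def hτ
  obtain ⟨ρ, hρ, hb⟩ := Metric.eventually_nhds_iff.1 h2
  refine ⟨ρ / 2, by positivity, fun k hk => ?_⟩
  have := hb (y := θ + k) (by rw [dist_eq_norm, add_sub_cancel_left]; linarith)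
  rw [add_sub_cancel_left, Real.norm_eq_abs, norm_pow, norm_norm] at this
  linarith [(abs_le.1 this).1]

theorem Adm.mono {γ γ' : ℝ → Euc d} (h : Adm H l γ γ' (-T)) {s : ℝ} (hs : s ∈ Icc 0 T) :
    Adm H l γ γ' (-s) := by
  have s0 : -s ≤ 0 := by linarith [hs.1]
  have s1 : -T ≤ -s := by linarith [hs.2]
  refine ⟨AC.mono h.1 s1 s0 le_rfl, h.2.mono_set ?_⟩
  rw [uIcc_of_le s0, uIcc_of_le (s1.trans s0)]
  exact Icc_subset_Icc_left s1

theorem inn_ge (S : Euc d →L[ℝ] Euc d) (k : Euc d) : -(‖S‖ * ‖k‖ ^ 2) ≤ ⟪S k, k⟫ := by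
  have h1 := abs_real_inner_le_norm (S k) k
  have h2 := mul_le_mul_of_nonneg_right (S.le_opNorm k) (norm_nonneg k)
  have := (abs_le.1 h1).1
  linarith

theorem pair_le {K : ℝ} (K0 : 0 < K) (k : Euc d) :
    ‖((k, (-K) • k) : Phase d)‖ ≤ (1 + K) * ‖k‖ := by
  rw [Prod.norm_mk, norm_smul, norm_neg, Real.norm_eq_abs, abs_of_pos K0]
  have := norm_nonneg k
  have := mul_nonneg K0.le this
  apply max_le <;> linarith

theorem pair_le' (Z : Euc d →L[ℝ] Euc d) (h k : Euc d) :
    ‖((h, Z h + k) : Phase d)‖ ≤ (1 + ‖Z‖) * ‖h‖ + ‖k‖ := by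
  have h1 := Z.le_opNorm h
  have h2 := norm_add_le (Z h) k
  have h3 := norm_nonneg k
  have h4 := norm_nonneg h
  have h5 : 0 ≤ ‖Z‖ * ‖h‖ := by positivity
  rw [Prod.norm_mk]
  apply max_le <;> linarith

theorem exp_le1 {l s : ℝ} (hl : 0 ≤ l) (hs : 0 ≤ s) : Real.exp (-(l * s)) ≤ 1 :=
  Real.exp_le_one_iff.2 (neg_nonpos.2 (mul_nonneg hl hs))

theorem a_bd {C3 T a X : ℝ} (hT : 0 ≤ T) (hC : 0 ≤ C3) (a0 : 0 < a)
    (h : a ≤ X / (2 * (C3 * T + 1))) : C3 * a ^ 2 * T ≤ a * X / 2 := by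
  rw [le_div_iff₀ (by positivity)] at h
  have := mul_le_mul_of_nonneg_left h a0.le
  have := sq_nonneg a
  linarith

theorem a4_aux {E x y : ℝ} (h0 : 0 < E) (h1 : E ≤ 1) (hx : x ≤ y) (hy : 0 ≤ y) : E * x ≤ y :=
  (mul_le_mul_of_nonneg_left hx h0.le).trans (mul_le_of_le_one_left hy h1)

def Near (H : Phase d → ℝ) (l T : ℝ) (f : Euc d → ℝ) (θ : Euc d) (η : ℝ) (γ γ' : ℝ → Euc d) :
    Prop := Adm H l γ γ' (-T) ∧ γ 0 = θ ∧ ∀ s ∈ Icc 0 T,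
    ∀ β β' : ℝ → Euc d, Adm H l β β' (-s) → β (-s) = γ (-s) →
      f (β 0) - Act H l β β' s ≤ f θ - Act H l γ γ' s + η

set_option maxHeartbeats 1000000 in
theorem close (hH : TonelliHam H) (hl : 0 ≤ l) (o : Orb H l T z Φ) {f : Euc d → ℝ}
    {S : Euc d →L[ℝ] Euc d} (hf : HasAlexandrovAt f (z 0).2 S (z 0).1) {K : ℝ} (hK : ‖S‖ + 5 ≤ K)
    (hinj : ∀ s ∈ Icc (-T) 0, ∀ v : Euc d, (Φ s (v, (-K) • v)).1 = 0 → v = 0) :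
    ∃ Q Q' : ℝ → Euc d →L[ℝ] Euc d, ∃ μ, Ric H l T z Q Q' μ ∧
    ∃ ω0 > 0, ∀ ω, 0 < ω → ω ≤ ω0 → ∃ η > 0, ∀ γ γ', Near H l T f (z 0).1 η γ γ' →
      ∀ σ ∈ Icc (-T) 0, ‖γ σ - (z σ).1‖ < ω := by
  have K0 : 0 < K := by linarith [norm_nonneg S]
  have hT := o.T0
  obtain ⟨R, hR, hb⟩ := o.bd
  set ν : ℝ := 1 / (R * (1 + K)) ^ 2 with hν
  have ν0 : 0 < ν := by positivity
  obtain ⟨Q, Q', μ, rc, hex⟩ := exRic hH hl o K hinj ν0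
  refine ⟨Q, Q', μ, rc, ?_⟩
  obtain ⟨C3, hC3, ρ1, hρ1, hlow⟩ := lower_int hH hl o rc
  set τ : ℝ := 1 / (1 + K) ^ 2 with hτ
  have τ0 : 0 < τ := by positivity
  obtain ⟨ρ2, hρ2, hup⟩ := upper hH hl o τ0
  obtain ⟨ρ3, hρ3, hal⟩ := alex_bd hf one_pos
  set M : ℝ → Euc d →L[ℝ] Euc d := fun s => (ContinuousLinearMap.fst ℝ (Euc d) (Euc d)).comp
    ((Φ s).comp ((ContinuousLinearMap.id ℝ (Euc d)).prod ((-K) • ContinuousLinearMap.id ℝ (Euc d))))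
    with hM
  have cM : ContinuousOn M (Icc (-T) 0) := by
    exact continuousOn_const.clm_comp (o.Pc.clm_comp continuousOn_const)
  have Mv : ∀ s v, M s v = (Φ s (v, (-K) • v)).1 := by intro s v; simp [hM]
  obtain ⟨c, hc, hcM⟩ := unif_inj isCompact_Icc cM (fun s hs v h => hinj s hs v (by rw [← Mv, h]))
  refine ⟨min ρ1 (min (c * ρ2 / (1 + K)) (c * ρ3)), by positivity, fun ω hω hωle => ?_⟩
  have w1 : ω ≤ ρ1 := hωle.trans (min_le_left _ _)
  have w2 : ω ≤ c * ρ2 / (1 + K) := hωle.trans ((min_le_right _ _).trans (min_le_left _ _))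
  have w3 : ω ≤ c * ρ3 := hωle.trans ((min_le_right _ _).trans (min_le_right _ _))
  set e := Real.exp (-(l * T)) with he
  have e0 : 0 < e := Real.exp_pos _
  set a := min ρ1 (e * ω / (2 * (C3 * T + 1))) with ha
  have a0 : 0 < a := by positivity
  have ha2 : C3 * a ^ 2 * T ≤ e * a * ω / 2 := by
    have h := a_bd hT hC3 a0 (min_le_right ρ1 (e * ω / (2 * (C3 * T + 1))))
    linarith
  refine ⟨e * a * ω / 4, by positivity, fun γ γ' hn => ?_⟩
  obtain ⟨hadm, h0, hP⟩ := hn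
  by_contra hcon
  push Not at hcon
  obtain ⟨σ0, hσ0, hσ0'⟩ := hcon
  set y : ℝ → Euc d := fun σ => γ σ - (z σ).1 with hy
  have T0' : -T ≤ 0 := by linarith
  have cy : ContinuousOn (fun σ => ‖y σ‖) (Icc (-T) 0) := by
    have h1 := (AC.toAC T0' hadm.1).continuousOn
    rw [uIcc_of_le T0'] at h1
    exact (h1.sub o.zc.fst).norm
  have y0 : y 0 = 0 := by simp [hy, h0]
  set A := {σ ∈ Icc (-T) 0 | ω ≤ ‖y σ‖} with hA
  have Acl : IsClosed A := by
    exact cy.preimage_isClosed_of_isClosed isClosed_Icc isClosed_Ici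
  have Acomp : IsCompact A := isCompact_Icc.of_isClosed_subset Acl (fun x hx => hx.1)
  obtain ⟨σ, hσA, hσmax⟩ := Acomp.exists_isGreatest ⟨σ0, hσ0, hσ0'⟩
  have hle : ∀ t ∈ Icc σ 0, ‖y t‖ ≤ ω := by
    intro t ht
    by_contra hgt
    push Not at hgt
    have hsub : Icc t 0 ⊆ Icc (-T) 0 := Icc_subset_Icc_left (hσA.1.1.trans ht.1)
    obtain ⟨t1, ht1, ht1'⟩ := intermediate_value_Icc' ht.2 (cy.mono hsub)
      (show (ω + ‖y t‖) / 2 ∈ Icc _ _ from ⟨by simp only [y0, norm_zero]; positivity, by linarith⟩)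
    have t1A : t1 ∈ A := ⟨hsub ht1, by simp only at ht1'; linarith⟩
    have h1 := hσmax t1A
    have h2 : t1 = t := le_antisymm (h1.trans ht.1) ht1.1
    simp only [h2] at ht1'
    linarith
  have hyω : ‖y σ‖ = ω := le_antisymm (hle σ ⟨le_rfl, hσA.1.2⟩) hσA.2
  have hsI : -σ ∈ Icc 0 T := ⟨by linarith [hσA.1.2], by linarith [hσA.1.1]⟩
  obtain ⟨k, hk1, hk2⟩ := hex σ hσA.1 (y σ)
  have hkc := hcM σ hσA.1 k
  rw [Mv, hk1, hyω] at hkc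
  set w : Phase d := (k, (-K) • k) with hw
  have hwn : ‖w‖ ≤ (1 + K) * ‖k‖ := pair_le K0 k
  have hkω : ‖k‖ ≤ ω / c := by rw [le_div_iff₀ hc]; linarith
  have hw2 : ‖w‖ ≤ ρ2 := by
    refine hwn.trans ?_
    rw [le_div_iff₀ (by positivity)] at w2
    have : (1 + K) * (c * ‖k‖) ≤ (1 + K) * ω := by gcongr
    have : c * ((1 + K) * ‖k‖) ≤ c * ρ2 := by linarith
    exact le_of_mul_le_mul_left this hc
  have hk3 : ‖k‖ ≤ ρ3 := le_of_mul_le_mul_left (hkc.trans w3) hc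
  obtain ⟨β, β', hβ, hβ0, hβs, hβA⟩ := hup w hw2 (-σ) hsI
  rw [neg_neg] at hβs hβA
  have ew : (Φ σ w).1 = y σ := hk1
  rw [ew] at hβs hβA
  have hPP := hP (-σ) hsI β β' hβ (by rw [neg_neg, hβs]; simp [hy])
  have hL := hlow (-σ) hsI γ γ' (hadm.mono hsI) (by
    rw [neg_neg]; exact fun t ht => (hle t ht).trans w1) h0 a a0.le (min_le_left _ _)
  rw [neg_neg] at hL
  change _ - _ * (⟪(z σ).2, y σ⟫ + 1/2 * ⟪Q σ (y σ), y σ⟫) + e * a * ‖y σ‖ - _ ≤ _ at hL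
  rw [hyω] at hL
  rw [hβ0] at hPP
  have hAl := hal k hk3
  have eS : -(‖S‖ * ‖k‖ ^ 2) ≤ ⟪S k, k⟫ := inn_ge S k
  have ek : ⟪w.2, w.1⟫ = -(K * ‖k‖ ^ 2) := by
    simp only [hw, neg_smul, inner_neg_left, inner_smul_left, RCLike.conj_to_real,
      real_inner_self_eq_norm_sq]
  have ew1 : w.1 = k := rfl
  rw [ek, ew1] at hβA
  rw [ew1] at hPP
  have eτ : τ * ‖w‖ ^ 2 ≤ ‖k‖ ^ 2 := by
    have h1 : ‖w‖ ^ 2 ≤ ((1 + K) * ‖k‖) ^ 2 := by gcongr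
    calc τ * ‖w‖ ^ 2 ≤ τ * ((1 + K) * ‖k‖) ^ 2 := by gcongr
      _ = ‖k‖ ^ 2 := by rw [hτ]; field_simp
  have eν : ν * ‖y σ‖ ^ 2 ≤ ‖k‖ ^ 2 := by
    have h1 : ‖y σ‖ ≤ R * (1 + K) * ‖k‖ := by
      rw [← ew]
      refine (norm_fst_le _).trans (((Φ σ).le_opNorm w).trans ?_)
      have := (hb σ hσA.1).2
      rw [mul_assoc]
      gcongr
    calc ν * ‖y σ‖ ^ 2 ≤ ν * (R * (1 + K) * ‖k‖) ^ 2 := by gcongr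
      _ = ‖k‖ ^ 2 := by rw [hν]; field_simp
  have ex1 : Real.exp (-(l * -σ)) ≤ 1 := exp_le1 hl hsI.1
  have ex0 := Real.exp_pos (-(l * -σ))
  set E := Real.exp (-(l * -σ))
  have f1 : E * ⟪Q σ (y σ), y σ⟫ ≤ E * ⟪(Φ σ w).2, y σ⟫ + ‖k‖ ^ 2 := by
    have h1 := mul_le_mul_of_nonneg_left hk2 ex0.le
    have h2 : E * (ν * ‖y σ‖ ^ 2) ≤ 1 * ‖k‖ ^ 2 := by gcongr
    change E * _ ≤ E * (⟪(Φ σ w).2, y σ⟫ + _) at h1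
    linarith
  have f2 : (‖S‖ + 5) * ‖k‖ ^ 2 ≤ K * ‖k‖ ^ 2 := by gcongr
  have f3 : 0 < e * a * ω := by positivity
  linarith [hPP, hβA, hL, hAl, eS, eτ, f1, f2, ha2]

set_option maxHeartbeats 1000000 in
theorem lemB (hH : TonelliHam H) (hl : 0 ≤ l) (o : Orb H l T z Φ) {f : Euc d → ℝ}
    {S Z : Euc d →L[ℝ] Euc d} (hf : HasAlexandrovAt f (z 0).2 S (z 0).1) {K1 : ℝ}
    (h1 : ∀ K ≥ K1, ∀ s ∈ Icc (-T) 0, ∀ v : Euc d, (Φ s (v, (-K) • v)).1 = 0 → v = 0)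
    (h2 : ∀ w : Euc d, (Φ (-T) (0, w)).1 = 0 → w = 0)
    (h3 : ∀ v : Euc d, (Φ (-T) (v, Z v)).1 = 0) (hP : PropP H l T f) (v : Euc d) :
    ⟪S v, v⟫ ≤ ⟪Z v, v⟫ := by
  obtain ⟨Q, Q', μ, rc, ω0, hω0, hcl⟩ := close hH hl o hf (le_max_right K1 (‖S‖ + 5))
    (h1 _ (le_max_left _ _))
  have hT := o.T0
  have mT : -T ∈ Icc (-T) 0 := ⟨le_rfl, by linarith⟩
  have TT : T ∈ Icc 0 T := ⟨hT, le_rfl⟩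
  obtain ⟨R, hR, hb⟩ := o.bd
  obtain ⟨C3, hC3, ρ1, hρ1, hlow⟩ := lower_int hH hl o rc
  set b : Euc d →L[ℝ] Euc d := (ContinuousLinearMap.fst ℝ (Euc d) (Euc d)).comp
    ((Φ (-T)).comp (ContinuousLinearMap.inr ℝ (Euc d) (Euc d))) with hbd
  have bv : ∀ w, b w = (Φ (-T) (0, w)).1 := by intro w; simp [hbd]
  obtain ⟨bu, hbu⟩ := isUnit_inj (M := b) (fun w h => h2 w (by rw [← bv, h]))
  set bi : Euc d →L[ℝ] Euc d := ↑bu⁻¹ with hbi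
  have bbi : ∀ x, b (bi x) = x := by
    intro x
    have : b * bi = 1 := by rw [← hbu, hbi]; exact bu.mul_inv
    exact congrArg (fun g : Euc d →L[ℝ] Euc d => g x) this
  set B := ‖bi‖ with hB
  set q := ‖Q (-T)‖ with hq
  set N := 1 + ‖Z‖ with hN
  have N0 : 0 < N := by positivity
  have B0 : 0 ≤ B := norm_nonneg _
  have q0 : 0 ≤ q := norm_nonneg _
  -- upper bound for f
  have up : ∀ τ > 0, ∃ ρ > 0, ∀ h : Euc d, ‖h‖ ≤ ρ →
      f ((z 0).1 + h) ≤ f (z 0).1 + ⟪(z 0).2, h⟫ + (1/2) * ⟪Z h, h⟫ + τ * (N * ‖h‖) ^ 2 := by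
    intro τ hτ
    obtain ⟨ρ2, hρ2, hup⟩ := upper hH hl o hτ
    refine ⟨ρ2 / (2 * N), by positivity, fun h hh => ?_⟩
    rw [le_div_iff₀ (by positivity)] at hh
    set g : ℝ → ℝ := fun ω => f (z 0).1 + ⟪(z 0).2, h⟫ + (1/2) * ⟪Z h, h⟫ + (1/2) * (B * ω * ‖h‖)
      + (1/2) * (R * (N * ‖h‖ + B * ω) * ω + q * ω * ω) + τ * (N * ‖h‖ + B * ω) ^ 2 + ω with hg
    have gt : Tendsto g (nhdsWithin 0 (Ioi 0)) (nhds (g 0)) :=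
      (Continuous.tendsto (by fun_prop) 0).mono_left nhdsWithin_le_nhds
    have g0 : g 0 = f (z 0).1 + ⟪(z 0).2, h⟫ + (1/2) * ⟪Z h, h⟫ + τ * (N * ‖h‖) ^ 2 := by
      simp [hg]
    rw [← g0]
    refine ge_of_tendsto gt ?_
    have small : ∀ᶠ ω in nhdsWithin (0:ℝ) (Ioi 0), ω < min (min ω0 ρ1) (ρ2 / (2 * (B + 1))) :=
      nhdsWithin_le_nhds (Iio_mem_nhds (by positivity))
    filter_upwards [small, self_mem_nhdsWithin] with ω hω hωp
    have hωp : 0 < ω := hωp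
    have u1 : ω ≤ ω0 := hω.le.trans ((min_le_left _ _).trans (min_le_left _ _))
    have u2 : ω ≤ ρ1 := hω.le.trans ((min_le_left _ _).trans (min_le_right _ _))
    have u3 : ω ≤ ρ2 / (2 * (B + 1)) := hω.le.trans (min_le_right _ _)
    rw [le_div_iff₀ (by positivity)] at u3
    obtain ⟨η, hη, hclose⟩ := hcl ω hωp u1
    obtain ⟨γ, γ', ha, h0, hPP⟩ := hP (z 0).1 (min η ω) (by positivity)
    have hcl' := hclose γ γ' ⟨ha, h0, fun s hs β β' hβ hβs =>
      (hPP s hs β β' hβ hβs).trans (by linarith [min_le_left η ω])⟩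
    set ζ := γ (-T) - (z (-T)).1 with hζ
    have nζ : ‖ζ‖ ≤ ω := (hcl' _ mT).le
    set k := bi ζ with hk
    have nk : ‖k‖ ≤ B * ω := (bi.le_opNorm ζ).trans (by gcongr)
    set w : Phase d := (h, Z h + k) with hw
    have nw : ‖w‖ ≤ N * ‖h‖ + B * ω := (pair_le' Z h k).trans (by rw [hN]; linarith)
    have nw2 : ‖w‖ ≤ ρ2 := by linarith
    have ew : (Φ (-T) w).1 = ζ := by
      have : w = (h, Z h) + (0, k) := by simp [hw]
      rw [this, map_add, Prod.fst_add, h3, ← bv, bbi, zero_add]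
    obtain ⟨β, β', hβ, hβ0, hβs, hβA⟩ := hup w nw2 T TT
    rw [ew] at hβs hβA
    have hp := hPP T TT β β' hβ (by rw [hβs]; simp [hζ])
    have hL := hlow T TT γ γ' ha (fun σ hσ => (hcl' σ hσ).le.trans u2) h0 0 le_rfl hρ1.le
    rw [← hζ] at hL
    rw [hβ0] at hp
    have ew1 : w.1 = h := rfl
    have ew2 : w.2 = Z h + k := rfl
    rw [ew1, ew2, inner_add_left] at hβA
    rw [ew1] at hp
    have a1 : ⟪k, h⟫ ≤ B * ω * ‖h‖ :=
      (real_inner_le_norm k h).trans (by gcongr)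
    have hE0 := Real.exp_pos (-(l * T))
    have hE1 : Real.exp (-(l * T)) ≤ 1 := exp_le1 hl hT
    set E := Real.exp (-(l * T))
    have a2 : |⟪(Φ (-T) w).2, ζ⟫| ≤ R * (N * ‖h‖ + B * ω) * ω := by
      refine (abs_real_inner_le_norm _ _).trans ?_
      have : ‖(Φ (-T) w).2‖ ≤ R * (N * ‖h‖ + B * ω) := by
        refine (norm_snd_le _).trans (((Φ (-T)).le_opNorm w).trans ?_)
        have := (hb _ mT).2
        gcongr
      gcongr
    have a3 : |⟪Q (-T) ζ, ζ⟫| ≤ q * ω * ω := by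
      refine (abs_real_inner_le_norm _ _).trans ?_
      have : ‖Q (-T) ζ‖ ≤ q * ω := ((Q (-T)).le_opNorm ζ).trans (by gcongr)
      gcongr
    have a4 : E * ⟪Q (-T) ζ, ζ⟫ - E * ⟪(Φ (-T) w).2, ζ⟫ ≤ R * (N * ‖h‖ + B * ω) * ω + q * ω * ω := by
      rw [← mul_sub]
      have h1 : ⟪Q (-T) ζ, ζ⟫ - ⟪(Φ (-T) w).2, ζ⟫ ≤ R * (N * ‖h‖ + B * ω) * ω + q * ω * ω := by
        linarith [(abs_le.1 a2).1, (abs_le.1 a3).2]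
      have h2 : 0 ≤ R * (N * ‖h‖ + B * ω) * ω + q * ω * ω := by positivity
      exact a4_aux hE0 hE1 h1 h2
    have a5 : τ * ‖w‖ ^ 2 ≤ τ * (N * ‖h‖ + B * ω) ^ 2 := by gcongr
    have a6 := min_le_right η ω
    simp only [hg]
    linarith
  have main : ∀ τ > 0, ⟪S v, v⟫ ≤ ⟪Z v, v⟫ + 2 * τ * ((N * ‖v‖) ^ 2 + ‖v‖ ^ 2) := by
    intro τ hτ
    obtain ⟨ρ, hρ, hu⟩ := up τ hτ
    obtain ⟨ρ', hρ', ha⟩ := alex_bd hf hτ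
    set t := min ρ ρ' / (‖v‖ + 1) with ht
    have t0 : 0 < t := by positivity
    have nt : ‖t • v‖ ≤ min ρ ρ' := by
      rw [norm_smul, Real.norm_eq_abs, abs_of_pos t0, ht, div_mul_eq_mul_div,
        div_le_iff₀ (by positivity)]
      have : 0 < min ρ ρ' := by positivity
      linarith
    have e1 := hu (t • v) (nt.trans (min_le_left _ _))
    have e2 := ha (t • v) (nt.trans (min_le_right _ _))
    have e3 := e2.trans e1
    simp only [map_smul, inner_smul_left, inner_smul_right, RCLike.conj_to_real, norm_smul,
      Real.norm_eq_abs, abs_of_pos t0] at e3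
    have e4 : t ^ 2 * ⟪S v, v⟫ ≤ t ^ 2 * (⟪Z v, v⟫ + 2 * τ * ((N * ‖v‖) ^ 2 + ‖v‖ ^ 2)) := by
      linarith
    exact le_of_mul_le_mul_left e4 (by positivity)
  have gt : Tendsto (fun τ : ℝ => ⟪Z v, v⟫ + 2 * τ * ((N * ‖v‖) ^ 2 + ‖v‖ ^ 2))
      (nhdsWithin 0 (Ioi 0)) (nhds (⟪Z v, v⟫ + 2 * 0 * ((N * ‖v‖) ^ 2 + ‖v‖ ^ 2))) :=
    (Continuous.tendsto (by fun_prop) 0).mono_left nhdsWithin_le_nhds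
  have := ge_of_tendsto gt (by filter_upwards [self_mem_nhdsWithin] with τ hτ using main τ hτ)
  simpa using this
end LB

namespace VP
open HV LB
variable {d : ℕ} {H : Phase d → ℝ} {l T : ℝ}

def glue {X : Type*} (m : ℝ) (F G : ℝ → X) : ℝ → X := fun σ => if σ ≤ m then F σ else G σ

theorem glue_le {X : Type*} {m σ : ℝ} {F G : ℝ → X} (h : σ ≤ m) : glue m F G σ = F σ := if_pos h
theorem glue_gt {X : Type*} {m σ : ℝ} {F G : ℝ → X} (h : m < σ) : glue m F G σ = G σ :=
  if_neg (not_le.2 h)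
theorem glue_ge {X : Type*} {m σ : ℝ} {F G : ℝ → X} (hm : F m = G m) (h : m ≤ σ) :
    glue m F G σ = G σ := by
  rcases h.eq_or_lt with rfl | h
  · rw [glue_le le_rfl, hm]
  · exact glue_gt h

theorem glue_int {E : Type*} [NormedAddCommGroup E] [NormedSpace ℝ E] {a m b : ℝ} (ham : a ≤ m)
    (hmb : m ≤ b) {F G g : ℝ → E} (h1 : ∀ σ, σ ≤ m → g σ = F σ) (h2 : ∀ σ, m < σ → g σ = G σ)
    (hF : IntervalIntegrable F volume a m) (hG : IntervalIntegrable G volume m b) :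
    IntervalIntegrable g volume a b ∧ ∫ σ in a..b, g σ = (∫ σ in a..m, F σ) + ∫ σ in m..b, G σ := by
  have e1 : EqOn F g (uIoc a m) := by
    rw [uIoc_of_le ham]; exact fun σ hσ => (h1 σ hσ.2).symm
  have e2 : EqOn G g (uIoc m b) := by
    rw [uIoc_of_le hmb]; exact fun σ hσ => (h2 σ hσ.1).symm
  have i1 := hF.congr e1
  have i2 := hG.congr e2
  refine ⟨i1.trans i2, ?_⟩
  rw [← intervalIntegral.integral_add_adjacent_intervals i1 i2]
  congr 1
  · exact intervalIntegral.integral_congr_ae (Eventually.of_forall fun σ hσ => (e1 hσ).symm)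
  · exact intervalIntegral.integral_congr_ae (Eventually.of_forall fun σ hσ => (e2 hσ).symm)

theorem glue_ac {γ γ' β β' : ℝ → Euc d} {a m b : ℝ} (ham : a ≤ m) (hmb : m ≤ b)
    (h1 : ACOn γ γ' a m) (h2 : ACOn β β' m b) (he : γ m = β m) :
    ACOn (glue m γ β) (glue m γ' β') a b := by
  refine ⟨(glue_int ham hmb (fun σ h => glue_le h) (fun σ h => glue_gt h) h1.1 h2.1).1,
    fun t ht => ?_⟩
  rw [glue_le ham]
  rcases le_or_gt t m with h | h
  · rw [glue_le h, h1.2 t ⟨ht.1, h⟩]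
    congr 1
    refine intervalIntegral.integral_congr_ae (Eventually.of_forall fun σ hσ => ?_)
    rw [uIoc_of_le ht.1] at hσ
    exact (glue_le (hσ.2.trans h)).symm
  · have h2' := AC.mono h2 le_rfl h.le ht.2
    rw [(glue_int ham h.le (fun σ h => glue_le h) (fun σ h => glue_gt h) h1.1 h2'.1).2, glue_gt h,
      h2.2 t ⟨h.le, ht.2⟩, ← he, h1.2 m ⟨ham, le_rfl⟩, add_assoc]

theorem red (q : Euc d) : ∃ k : Fin d → ℤ, ‖q + intVec k‖ ≤ d := by
  refine ⟨fun i => -⌊q i⌋, ?_⟩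
  have h : ∀ i, |(q + intVec fun i => -⌊q i⌋ : Euc d) i| ≤ 1 := by
    intro i
    have : (q + intVec fun i => -⌊q i⌋ : Euc d) i = Int.fract (q i) := by
      simp [intVec, Int.fract, sub_eq_add_neg]
    rw [this, abs_of_nonneg (Int.fract_nonneg _)]
    exact (Int.fract_lt_one _).le
  generalize (q + intVec fun i => -⌊q i⌋ : Euc d) = x at h
  rw [EuclideanSpace.norm_eq]
  have h1 : ∑ i, ‖x i‖ ^ 2 ≤ (d:ℝ) := by
    calc ∑ i, ‖x i‖ ^ 2 ≤ ∑ i : Fin d, (1:ℝ) := by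
          refine Finset.sum_le_sum fun i _ => ?_
          rw [Real.norm_eq_abs]
          exact pow_le_one₀ (abs_nonneg _) (h i)
      _ = d := by simp
  refine Real.sqrt_le_iff.2 ⟨by positivity, h1.trans ?_⟩
  exact_mod_cast Nat.le_self_pow (by norm_num) d

theorem U_bdd {U : Euc d → ℝ} (hc : Continuous U) (hp : PerFun U) : ∃ B, ∀ q, B ≤ U q := by
  obtain ⟨B, hB⟩ := (isCompact_closedBall (0 : Euc d) d).bddBelow_image hc.continuousOn
  refine ⟨B, fun q => ?_⟩
  obtain ⟨k, hk⟩ := red q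
  rw [← hp k q]
  exact hB ⟨_, mem_closedBall_zero_iff.2 hk, rfl⟩

theorem L_low (hH : TonelliHam H) {A : ℝ} (hA : 0 ≤ A) :
    ∃ C ≥ 0, ∀ q v, A * ‖v‖ - C ≤ LegendreL H (q, v) := by
  obtain ⟨B, hB⟩ := ((isCompact_closedBall (0 : Euc d) d).prod
    (isCompact_closedBall (0 : Euc d) A)).bddAbove_image hH.smooth.continuous.continuousOn
  refine ⟨max B 0, le_max_right _ _, fun q v => ?_⟩
  obtain ⟨p, hp, hp'⟩ := exists_dir A hA v
  obtain ⟨k, hk⟩ := red q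
  have h1 := L_ge hH q v p
  have h2 : H (q, p) ≤ B := by
    rw [← hH.periodic k q p]
    have hm : ((q + intVec k, p) : Phase d) ∈ closedBall (0 : Euc d) d ×ˢ closedBall (0 : Euc d) A :=
      mk_mem_prod (mem_closedBall_zero_iff.2 hk) (mem_closedBall_zero_iff.2 hp)
    exact hB (mem_image_of_mem H hm)
  have := le_max_left B 0
  linarith

theorem ac_const (q : Euc d) (a b : ℝ) : ACOn (fun _ => q) (fun _ => 0) a b :=
  ⟨intervalIntegrable_const, fun t _ => by simp⟩

theorem inner_int {γ γ' : ℝ → Euc d} {a b : ℝ} (c : Euc d) (h : ACOn γ γ' a b) (hab : a ≤ b) :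
    IntervalIntegrable (fun s => ⟪c, γ' s⟫) volume a b ∧
      ∫ s in a..b, ⟪c, γ' s⟫ = ⟪c, γ b⟫ - ⟪c, γ a⟫ := by
  have h1 : IntervalIntegrable (fun s => innerSL ℝ c (γ' s)) volume a b :=
    ⟨(innerSL ℝ c).integrable_comp h.1.1, (innerSL ℝ c).integrable_comp h.1.2⟩
  refine ⟨h1, ?_⟩
  have h2 := (innerSL ℝ c).intervalIntegral_comp_comm h.1
  simp only [innerSL_apply_apply] at h2
  rw [h2, ← AC.sub_eq h ⟨le_rfl, hab⟩ ⟨hab, le_rfl⟩, inner_sub_right]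

theorem lo_ne (c : Euc d) (av : ℝ) (U : Euc d → ℝ) (t : ℝ) (q : Euc d) :
    (LOvals (LegendreL H) c av 0 U t q).Nonempty :=
  ⟨_, fun _ => q, fun _ => 0, ac_const q _ _, rfl, by simp, rfl⟩

theorem lo_bdd (hH : TonelliHam H) (c : Euc d) (av : ℝ) {U : Euc d → ℝ} (hU : Continuous U)
    (hp : PerFun U) {t : ℝ} (ht : 0 ≤ t) (q : Euc d) :
    BddBelow (LOvals (LegendreL H) c av 0 U t q) := by
  obtain ⟨B, hB⟩ := U_bdd hU hp
  obtain ⟨C, hC0, hC⟩ := L_low hH (norm_nonneg c)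
  refine ⟨B + ∫ s in (-t)..0, (-C + av), ?_⟩
  rintro r ⟨γ, γ', hac, h0, hi, rfl⟩
  have h1 : ∫ s in (-t)..0, (-C + av) ≤
      ∫ s in (-t)..0, Real.exp (0 * s) * (LegendreL H (γ s, γ' s) - ⟪c, γ' s⟫ + av) := by
    refine intervalIntegral.integral_mono_on (by linarith) intervalIntegrable_const hi fun s _ => ?_
    rw [zero_mul, Real.exp_zero, one_mul]
    have := hC (γ s) (γ' s)
    have := real_inner_le_norm c (γ' s)
    linarith
  have := hB (γ (-t))
  simp only [zero_mul, neg_zero, Real.exp_zero, one_mul] at h1 ⊢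
  linarith

theorem propP_LO (hH : TonelliHam H) (c : Euc d) (av : ℝ) {U : Euc d → ℝ} (hU : Continuous U)
    (hp : PerFun U) {t : ℝ} (hT : 0 ≤ T) (ht : T ≤ t) :
    PropP H 0 T (fun q => LaxOleinik (LegendreL H) c av 0 U t q + ⟪c, q⟫) := by
  have t0 : 0 ≤ t := hT.trans ht
  intro θ η hη
  obtain ⟨r, ⟨γ, γ', hac, h0, hi, hr⟩, hlt⟩ :=
    Real.lt_sInf_add_pos (lo_ne (H := H) c av U t θ) hη
  have conv : ∀ (β β' : ℝ → Euc d) (a b : ℝ), a ≤ b → ACOn β β' a b →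
      IntervalIntegrable (fun s => Real.exp (0 * s) * LegendreL H (β s, β' s)) volume a b →
      IntervalIntegrable (fun s => Real.exp (0 * s) * (LegendreL H (β s, β' s) - ⟪c, β' s⟫ + av))
        volume a b ∧
      ∫ s in a..b, Real.exp (0 * s) * (LegendreL H (β s, β' s) - ⟪c, β' s⟫ + av) =
        (∫ s in a..b, Real.exp (0 * s) * LegendreL H (β s, β' s)) - (⟪c, β b⟫ - ⟪c, β a⟫)
          + (b - a) * av := by
    intro β β' a b hab hβ hi
    obtain ⟨j1, j2⟩ := inner_int c hβ hab
    simp only [zero_mul, Real.exp_zero, one_mul] at hi ⊢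
    refine ⟨(hi.sub j1).add intervalIntegrable_const, ?_⟩
    rw [intervalIntegral.integral_add (hi.sub j1) intervalIntegrable_const,
      intervalIntegral.integral_sub hi j1, j2, intervalIntegral.integral_const, smul_eq_mul]
  have gI : IntervalIntegrable (fun s => Real.exp (0 * s) * LegendreL H (γ s, γ' s))
      volume (-t) 0 := by
    have j1 := (inner_int c hac (by linarith)).1
    simp only [zero_mul, Real.exp_zero, one_mul] at hi ⊢
    have := (hi.add j1).sub (intervalIntegrable_const (c := av))
    refine this.congr fun s _ => ?_
    change LegendreL H (γ s, γ' s) - ⟪c, γ' s⟫ + av + ⟪c, γ' s⟫ - av = LegendreL H (γ s, γ' s)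
    ring
  have gA : Adm H 0 γ γ' (-t) := ⟨hac, gI⟩
  refine ⟨γ, γ', gA.mono ⟨hT, ht⟩, h0, fun s hs β β' hβ hβs => ?_⟩
  have st : -t ≤ -s := by linarith [hs.2]
  have s0 : -s ≤ 0 := by linarith [hs.1]
  have a1 := AC.mono hac le_rfl st s0
  have a2 := AC.mono hac st s0 le_rfl
  have gI1 : IntervalIntegrable (fun s => Real.exp (0 * s) * LegendreL H (γ s, γ' s))
      volume (-t) (-s) := gI.mono_set (by
        rw [uIcc_of_le st, uIcc_of_le (st.trans s0)]; exact Icc_subset_Icc_right s0)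
  have gI2 := (gA.mono (s := s) ⟨hs.1, hs.2.trans ht⟩).2
  obtain ⟨c1, d1⟩ := conv γ γ' _ _ st a1 gI1
  obtain ⟨c2, d2⟩ := conv γ γ' _ _ s0 a2 gI2
  obtain ⟨c3, d3⟩ := conv β β' _ _ s0 hβ.1 hβ.2
  obtain ⟨e1, e2⟩ := glue_int (g := fun σ => Real.exp (0 * σ) *
    (LegendreL H (glue (-s) γ β σ, glue (-s) γ' β' σ) - ⟪c, glue (-s) γ' β' σ⟫ + av)) st s0
    (fun σ h => by simp only [glue_le h]) (fun σ h => by simp only [glue_gt h]) c1 c3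
  have hin : Real.exp (-(0 * t)) * U (glue (-s) γ β (-t)) + ∫ σ in (-t)..0, Real.exp (0 * σ) *
      (LegendreL H (glue (-s) γ β σ, glue (-s) γ' β' σ) - ⟪c, glue (-s) γ' β' σ⟫ + av) ∈
      LOvals (LegendreL H) c av 0 U t (β 0) :=
    ⟨_, _, glue_ac st s0 a1 hβ.1 hβs.symm, glue_ge hβs.symm s0, e1, rfl⟩
  have hle := csInf_le (lo_bdd hH c av hU hp t0 (β 0)) hin
  rw [e2, glue_le st] at hle
  rw [hr, ← intervalIntegral.integral_add_adjacent_intervals c1 c2] at hlt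
  have u1 : LaxOleinik (LegendreL H) c av 0 U t (β 0) = sInf (LOvals (LegendreL H) c av 0 U t (β 0)) := rfl
  have u2 : LaxOleinik (LegendreL H) c av 0 U t θ = sInf (LOvals (LegendreL H) c av 0 U t θ) := rfl
  simp only [Act]
  rw [u1, u2, ← h0]
  rw [← h0] at hlt
  rw [hβs] at d3
  linarith

theorem propP_mod (hH : TonelliHam H) {c : Euc d} {u : Euc d → ℝ} (h : IsFixedPtModified H c u)
    (hT : 0 < T) : PropP H 0 T (fun q => u q + ⟪c, q⟫) := by
  have := propP_LO hH c (maneCriticalOf H c) h.1 h.2.1 hT.le le_rfl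
  simpa only [h.2.2 T hT] using this

theorem propP_disc (hH : TonelliHam H) (hl : 0 < l) {u : Euc d → ℝ} (h : IsDiscountedSol H l u)
    (hT : 0 ≤ T) : PropP H l T u := by
  intro θ η hη
  set α := maneCritical H
  set V : Euc d → Set ℝ := fun q => {r | ∃ γ γ' : ℝ → Euc d, (∀ a ≤ (0:ℝ), ACOn γ γ' a 0) ∧ γ 0 = q ∧
      IntegrableOn (fun s => Real.exp (l * s) * (LegendreL H (γ s, γ' s) + α))
        (Iic 0) volume ∧
      r = ∫ s in Iic (0:ℝ), Real.exp (l * s) * (LegendreL H (γ s, γ' s) + α)} with hV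
  have hu : ∀ q, u q = sInf (V q) := h.2.2
  have ei : IntegrableOn (fun s => Real.exp (l * s)) (Iic 0) volume := integrableOn_exp_mul_Iic hl 0
  have hne : (V θ).Nonempty := by
    refine ⟨_, fun _ => θ, fun _ => 0, fun a _ => ac_const θ _ _, rfl, ?_, rfl⟩
    exact ei.mul_const _
  have hbd : ∀ q, BddBelow (V q) := by
    intro q
    obtain ⟨C, hC0, hC⟩ := L_low hH le_rfl
    refine ⟨∫ s in Iic (0:ℝ), Real.exp (l * s) * (-C + α), ?_⟩
    rintro r ⟨γ, γ', hac, h0, hi, rfl⟩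
    refine integral_mono (ei.mul_const _) hi fun s => ?_
    have := hC (γ s) (γ' s)
    simp only [zero_mul, zero_sub] at this
    have := Real.exp_pos (l * s)
    simp only
    gcongr
  obtain ⟨r, ⟨γ, γ', hac, h0, hi, hr⟩, hlt⟩ := Real.lt_sInf_add_pos hne hη
  have conv : ∀ (β β' : ℝ → Euc d) (a b : ℝ),
      IntervalIntegrable (fun s => Real.exp (l * s) * LegendreL H (β s, β' s)) volume a b →
      IntervalIntegrable (fun s => Real.exp (l * s) * (LegendreL H (β s, β' s) + α))
        volume a b ∧
      ∫ s in a..b, Real.exp (l * s) * (LegendreL H (β s, β' s) + α) =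
        (∫ s in a..b, Real.exp (l * s) * LegendreL H (β s, β' s)) +
          ∫ s in a..b, Real.exp (l * s) * α := by
    intro β β' a b hi
    have hc : IntervalIntegrable (fun s => Real.exp (l * s) * α) volume a b :=
      Continuous.intervalIntegrable (by fun_prop) _ _
    simp only [mul_add]
    exact ⟨hi.add hc, intervalIntegral.integral_add hi hc⟩
  have gI : ∀ s, 0 ≤ s → IntervalIntegrable
      (fun σ => Real.exp (l * σ) * LegendreL H (γ σ, γ' σ)) volume (-s) 0 := by
    intro s hs
    have hc : IntervalIntegrable (fun s => Real.exp (l * s) * α) volume (-s) 0 :=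
      Continuous.intervalIntegrable (by fun_prop) _ _
    have h1 : IntervalIntegrable (fun s => Real.exp (l * s) * (LegendreL H (γ s, γ' s) + α))
        volume (-s) 0 := by
      rw [intervalIntegrable_iff_integrableOn_Ioc_of_le (by linarith)]
      exact hi.mono_set Ioc_subset_Iic_self
    refine (h1.sub hc).congr fun σ _ => ?_
    change Real.exp (l * σ) * (LegendreL H (γ σ, γ' σ) + α) - Real.exp (l * σ) * α =
      Real.exp (l * σ) * LegendreL H (γ σ, γ' σ)
    ring
  refine ⟨γ, γ', ⟨hac _ (by linarith), gI T hT⟩, h0, fun s hs β β' hβ hβs => ?_⟩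
  have s0 : -s ≤ 0 := by linarith [hs.1]
  obtain ⟨c2, d2⟩ := conv γ γ' _ _ (gI s hs.1)
  obtain ⟨c3, d3⟩ := conv β β' _ _ hβ.2
  set g : ℝ → ℝ := fun σ => Real.exp (l * σ) *
    (LegendreL H (glue (-s) γ β σ, glue (-s) γ' β' σ) + α) with hg
  have g1 : EqOn (fun σ => Real.exp (l * σ) * (LegendreL H (γ σ, γ' σ) + α)) g (Iic (-s)) := by
    intro σ hσ; simp only [hg, glue_le (mem_Iic.1 hσ)]
  have g2 : EqOn (fun σ => Real.exp (l * σ) * (LegendreL H (β σ, β' σ) + α)) g (Ioc (-s) 0) := by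
    intro σ hσ; simp only [hg, glue_gt hσ.1]
  have i1 := hi.mono_set (Iic_subset_Iic.2 s0)
  have j1 : IntegrableOn g (Iic (-s)) := i1.congr_fun g1 measurableSet_Iic
  have j2 : IntegrableOn g (Ioc (-s) 0) :=
    ((intervalIntegrable_iff_integrableOn_Ioc_of_le s0).1 c3).congr_fun g2 measurableSet_Ioc
  have j3 : IntegrableOn g (Iic 0) := by
    rw [← Iic_union_Ioc_eq_Iic s0]; exact j1.union j2
  have hin : ∫ σ in Iic (0:ℝ), g σ ∈ V (β 0) := by
    refine ⟨_, _, fun a ha => ?_, glue_ge hβs.symm s0, j3, rfl⟩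
    have m1 : min a (-s) ≤ -s := min_le_right _ _
    have := glue_ac m1 s0 (AC.mono (hac (min a (-s)) (m1.trans s0)) le_rfl m1 s0) hβ.1 hβs.symm
    exact AC.mono this (min_le_left _ _) ha le_rfl
  have hle := csInf_le (hbd (β 0)) hin
  have k1 := intervalIntegral.integral_Iic_sub_Iic j1 j3
  have k2 := intervalIntegral.integral_Iic_sub_Iic i1 hi
  have k3 : ∫ σ in (-s)..0, g σ = ∫ σ in (-s)..0, Real.exp (l * σ) * (LegendreL H (β σ, β' σ) + α) :=
    intervalIntegral.integral_congr_ae (Eventually.of_forall fun σ hσ => by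
      rw [uIoc_of_le s0] at hσ; exact (g2 hσ).symm)
  have k4 : ∫ σ in Iic (-s), g σ = ∫ σ in Iic (-s), Real.exp (l * σ) * (LegendreL H (γ σ, γ' σ) + α) :=
    (setIntegral_congr_fun measurableSet_Iic g1).symm
  rw [hr] at hlt
  rw [hu (β 0), hu θ]
  simp only [Act]
  linarith

theorem PropP.mono {f : Euc d → ℝ} {T' : ℝ} (h : PropP H l T' f) (hT : 0 ≤ T) (hTT : T ≤ T') :
    PropP H l T f := by
  intro θ η hη
  obtain ⟨γ, γ', ha, h0, hp⟩ := h θ η hη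
  exact ⟨γ, γ', ha.mono ⟨hT, hTT⟩, h0, fun s hs => hp s ⟨hs.1, hs.2.trans hTT⟩⟩
end VP

namespace PO
open HV LB
variable {d : ℕ} {H : Phase d → ℝ} {l T : ℝ} {z z0 : ℝ → Phase d} {Φ Φ0 : ℝ → Phase d →L[ℝ] Phase d}

theorem snd_le (x : Phase d) : ‖((0:Euc d), x.2)‖ ≤ ‖x‖ := by
  rw [nrm_zero]; exact norm_snd_le x

theorem orbit_exists (hH : ContDiff ℝ 2 H) (hT : 0 ≤ T) {R : ℝ}
    (hz : ∀ s ∈ Icc (-T) 0, HasDerivAt z0 (hamVF H 0 (z0 s)) s)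
    (hR : ∀ s ∈ Icc (-T) 0, ‖z0 s‖ ≤ R) :
    ∃ M > 0, ∃ r0 > 0, ∀ x, ‖x - z0 0‖ ≤ r0 → ∀ l, 0 ≤ l → l ≤ r0 →
      ∃ z : ℝ → Phase d, z 0 = x ∧ (∀ s ∈ Icc (-T) 0, HasDerivAt z (hamVF H l (z s)) s) ∧
        ∀ s ∈ Icc (-T) 0, ‖z s - z0 s‖ ≤ M * (‖x - z0 0‖ + l) := by
  have hY : ContDiff ℝ 1 (fun x : Phase d => (hamVF H 0 x, ((0:Euc d), x.2))) := by
    refine (ham_cd hH 0).prodMk ?_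
    fun_prop
  obtain ⟨g, K, C, hg, hC, hgY, -⟩ := OT.trunc hY (R+1)
  have hC0 : 0 ≤ C := (norm_nonneg _).trans (hC 0)
  set M := (1 + C) * Real.exp (((K:ℝ)*2+1)*T) with hM
  have hMp : 0 < M := by positivity
  refine ⟨M, hMp, min 1 (1/(2*M)), by positivity, ?_⟩
  intro x hx l hl hl1
  have hx2 : ‖x - z0 0‖ ≤ 1/(2*M) := hx.trans (min_le_right _ _)
  have hl2 : l ≤ 1/(2*M) := hl1.trans (min_le_right _ _)
  have hl3 : l ≤ 1 := hl1.trans (min_le_left _ _)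
  have hsum : M * (‖x - z0 0‖ + l) ≤ 1 := by
    have : M * (‖x - z0 0‖ + l) ≤ M * (1/(2*M) + 1/(2*M)) := by gcongr
    have h2 : M * (1/(2*M) + 1/(2*M)) = 1 := by field_simp; norm_num
    linarith
  set A : Phase d × Phase d →L[ℝ] Phase d :=
    ContinuousLinearMap.fst ℝ _ _ - l • ContinuousLinearMap.snd ℝ _ _ with hA
  have hAa : ∀ y, A y = y.1 - l • y.2 := fun y => by simp [hA]
  have hAn : ∀ y, ‖A y‖ ≤ 2 * ‖y‖ := fun y => by
    rw [hAa]
    calc ‖y.1 - l • y.2‖ ≤ ‖y.1‖ + ‖l • y.2‖ := norm_sub_le _ _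
      _ ≤ ‖y‖ + 1 * ‖y‖ := by
        rw [norm_smul, Real.norm_of_nonneg hl]
        gcongr
        · exact norm_fst_le y
        · exact norm_snd_le y
      _ = _ := by ring
  obtain ⟨α, h0, hα⟩ := OT.ode_exists (A := fun _ => A) continuous_const (CA := ‖A‖) (fun _ => le_rfl)
    hg hC x T hT
  have hgz : ∀ s ∈ Icc (-T) 0, g (z0 s) = (hamVF H 0 (z0 s), ((0:Euc d), (z0 s).2)) := fun s hs =>
    hgY _ (by rw [mem_closedBall_zero_iff]; linarith [hR s hs])
  have hb : ∀ s ∈ Icc (-T) 0, ‖α s - z0 s‖ ≤ M * (‖x - z0 0‖ + l) := by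
    have := OT.gron (e := fun s => α s - z0 s) (e' := fun s => A (g (α s)) - hamVF H 0 (z0 s))
      (K := (K:ℝ)*2) (ε := l * C) (δ := ‖x - z0 0‖) hT (by positivity) (by positivity) (norm_nonneg _)
      (fun s hs => (hα s hs).sub (hz s hs)) (by simp [h0]) (by
        intro s hs
        have e1 : A (g (α s)) - hamVF H 0 (z0 s) = A (g (α s) - g (z0 s)) - l • (g (z0 s)).2 := by
          rw [map_sub, hAa (g (z0 s)), hgz s hs]; abel
        have e2 := hg.dist_le_mul (α s) (z0 s)
        rw [dist_eq_norm, dist_eq_norm] at e2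
        have e3 := hAn (g (α s) - g (z0 s))
        have e4 : ‖l • (g (z0 s)).2‖ ≤ l * C := by
          rw [norm_smul, Real.norm_of_nonneg hl]
          gcongr
          exact (norm_snd_le _).trans (hC _)
        rw [e1]
        have e5 := norm_sub_le (A (g (α s) - g (z0 s))) (l • (g (z0 s)).2)
        linarith)
    intro s hs
    refine (this s hs).trans ?_
    have h3 : ‖x - z0 0‖ + l * C ≤ (1 + C) * (‖x - z0 0‖ + l) := by
      have := mul_nonneg hC0 (norm_nonneg (x - z0 0))
      linarith
    calc _ ≤ ((1 + C) * (‖x - z0 0‖ + l)) * Real.exp (((K:ℝ)*2+1)*T) := by gcongr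
      _ = _ := by rw [hM]; ring
  refine ⟨α, h0, ?_, hb⟩
  intro s hs
  have h4 := hα s hs
  have h5 : ‖α s‖ ≤ R + 1 := by
    have := norm_sub_norm_le (α s) (z0 s)
    linarith [hb s hs, hR s hs]
  rw [hgY _ (by rwa [mem_closedBall_zero_iff]), hAa, ← ham_lam] at h4
  exact h4

theorem uniq (hH : ContDiff ℝ 2 H) (hT : 0 ≤ T) {z1 z2 : ℝ → Phase d}
    (h1 : ∀ s ∈ Icc (-T) 0, HasDerivAt z1 (hamVF H l (z1 s)) s)
    (h2 : ∀ s ∈ Icc (-T) 0, HasDerivAt z2 (hamVF H l (z2 s)) s) (h0 : z1 0 = z2 0) :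
    ∀ s ∈ Icc (-T) 0, z1 s = z2 s := by
  have c1 : ContinuousOn z1 (Icc (-T) 0) := fun s hs => (h1 s hs).continuousAt.continuousWithinAt
  have c2 : ContinuousOn z2 (Icc (-T) 0) := fun s hs => (h2 s hs).continuousAt.continuousWithinAt
  obtain ⟨R1, hR1⟩ := isCompact_Icc.exists_bound_of_continuousOn c1
  obtain ⟨R2, hR2⟩ := isCompact_Icc.exists_bound_of_continuousOn c2
  obtain ⟨g, K, C, hg, hC, hgY, -⟩ := OT.trunc (ham_cd hH l) (max R1 R2)
  have := OT.gron (e := fun s => z1 s - z2 s) (e' := fun s => hamVF H l (z1 s) - hamVF H l (z2 s))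
      (K := (K:ℝ)) (ε := 0) (δ := 0) hT (by positivity) le_rfl le_rfl
      (fun s hs => (h1 s hs).sub (h2 s hs)) (by simp [h0]) (by
        intro s hs
        rw [← hgY (z1 s) (by rw [mem_closedBall_zero_iff]; exact (hR1 s hs).trans (le_max_left _ _)),
          ← hgY (z2 s) (by rw [mem_closedBall_zero_iff]; exact (hR2 s hs).trans (le_max_right _ _))]
        have e2 := hg.dist_le_mul (z1 s) (z2 s)
        rw [dist_eq_norm, dist_eq_norm] at e2
        linarith)
  intro s hs
  have := this s hs
  simp only [add_zero, zero_mul] at this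
  exact sub_eq_zero.1 (norm_le_zero_iff.1 this)

theorem orb_exists (hH : ContDiff ℝ 2 H) (hT : 0 ≤ T)
    (hz : ∀ s ∈ Icc (-T) 0, HasDerivAt z (hamVF H l (z s)) s) : ∃ Φ, Orb H l T z Φ := by
  have c1 : ContinuousOn z (Icc (-T) 0) := fun s hs => (hz s hs).continuousAt.continuousWithinAt
  have c2 : ContinuousOn (fun s => AV H l (z s)) (Icc (-T) 0) := (AV_cont hH l).comp_continuousOn c1
  obtain ⟨R, hR⟩ := isCompact_Icc.exists_bound_of_continuousOn c2
  obtain ⟨Φ, h0, h1, -⟩ := OT.lin_exists hT c2 hR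
  exact ⟨Φ, hT, hz, h0, h1⟩

theorem pert (hH : ContDiff ℝ 2 H) (o : Orb H 0 T z0 Φ0) {τ : ℝ} (hτ : 0 < τ) :
    ∃ r > 0, ∀ x, ‖x - z0 0‖ < r → ∀ l, 0 ≤ l → l < r → ∃ z Φ, Orb H l T z Φ ∧ z 0 = x ∧
      ∀ s ∈ Icc (-T) 0, ‖z s - z0 s‖ ≤ τ ∧ ‖Φ s - Φ0 s‖ ≤ τ := by
  obtain ⟨R, hR0, hR⟩ := o.bd
  obtain ⟨M, hM, r0, hr0, hor⟩ := orbit_exists hH o.T0 o.zd (fun s hs => (hR s hs).1)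
  obtain ⟨CA, hCA⟩ := (isCompact_closedBall (0:Phase d) (R+1)).exists_bound_of_continuousOn
    (AV_cont hH 0).continuousOn
  have hCA0 : 0 ≤ CA := (norm_nonneg _).trans (hCA 0 (by simp; linarith))
  set X := Real.exp ((CA+1+1)*T) with hX
  have hXp : 0 < X := Real.exp_pos _
  set κ := τ / (2 * R * X) with hκ
  have hκp : 0 < κ := by positivity
  obtain ⟨ρ, hρ, hρ1, huc⟩ := unif_cont (AV_cont hH 0) R hκp
  set ρ' := min ρ τ
  have hρ' : 0 < ρ' := lt_min hρ hτ
  refine ⟨min (min r0 (ρ'/(2*M))) (min 1 κ), by positivity, ?_⟩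
  intro x hx l hl hl1
  simp only [lt_min_iff] at hx hl1
  obtain ⟨z, h0, hz, hzb⟩ := hor x hx.1.1.le l hl hl1.1.1.le
  obtain ⟨Φ, oo⟩ := orb_exists hH o.T0 hz
  have hb : ∀ s ∈ Icc (-T) 0, ‖z s - z0 s‖ ≤ ρ' := by
    intro s hs
    refine (hzb s hs).trans ?_
    have : M * (‖x - z0 0‖ + l) ≤ M * (ρ'/(2*M) + ρ'/(2*M)) := by
      gcongr
      · exact hx.1.2.le
      · exact hl1.1.2.le
    have h2 : M * (ρ'/(2*M) + ρ'/(2*M)) = ρ' := by field_simp; norm_num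
    linarith
  refine ⟨z, Φ, oo, h0, fun s hs => ⟨(hb s hs).trans (min_le_right _ _), ?_⟩⟩
  have hln : ∀ w, ‖AV H l w - AV H 0 w‖ ≤ l := by
    intro w
    refine ContinuousLinearMap.opNorm_le_bound _ hl fun v => ?_
    rw [sub_apply, AV_lam hH l w v, sub_sub_cancel_left, norm_neg, norm_smul, Real.norm_of_nonneg hl]
    gcongr
    exact snd_le v
  have hAd : ∀ s ∈ Icc (-T) 0, ‖AV H l (z s) - AV H 0 (z0 s)‖ ≤ 2 * κ := by
    intro s hs
    have e1 := huc (z0 s) (by rw [mem_closedBall_zero_iff]; exact (hR s hs).1) (z s)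
      ((hb s hs).trans (min_le_left _ _))
    have e2 := hln (z s)
    have e3 := norm_add_le (AV H l (z s) - AV H 0 (z s)) (AV H 0 (z s) - AV H 0 (z0 s))
    rw [sub_add_sub_cancel] at e3
    linarith [hl1.2.2]
  have hAn : ∀ s ∈ Icc (-T) 0, ‖AV H l (z s)‖ ≤ CA + 1 := by
    intro s hs
    have e2 := hln (z s)
    have e4 : ‖z s‖ ≤ R + 1 := by
      have := norm_sub_norm_le (z s) (z0 s)
      linarith [hb s hs, (hR s hs).1, min_le_left ρ τ]
    have e5 := hCA (z s) (by rwa [mem_closedBall_zero_iff])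
    have e3 := norm_sub_norm_le (AV H l (z s)) (AV H 0 (z s))
    linarith [hl1.2.1]
  have := OT.gron (e := fun s => Φ s - Φ0 s)
    (e' := fun s => (AV H l (z s)).comp (Φ s) - (AV H 0 (z0 s)).comp (Φ0 s))
      (K := CA+1) (ε := 2*κ*R) (δ := 0) o.T0 (by positivity) (by positivity) le_rfl
      (fun s hs => (oo.Pd s hs).sub (o.Pd s hs)) (by simp [oo.P0, o.P0]) (by
        intro s hs
        have e1 : (AV H l (z s)).comp (Φ s) - (AV H 0 (z0 s)).comp (Φ0 s) =
          (AV H l (z s)).comp (Φ s - Φ0 s) + (AV H l (z s) - AV H 0 (z0 s)).comp (Φ0 s) := by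
          rw [ContinuousLinearMap.comp_sub, ContinuousLinearMap.sub_comp]; abel
        rw [e1]
        refine (norm_add_le _ _).trans ?_
        gcongr
        · refine (ContinuousLinearMap.opNorm_comp_le _ _).trans ?_
          gcongr
          exact hAn s hs
        · refine (ContinuousLinearMap.opNorm_comp_le _ _).trans ?_
          gcongr
          · exact hAd s hs
          · exact (hR s hs).2)
  refine (this s hs).trans (le_of_eq ?_)
  rw [← hX, hκ, zero_add]; field_simp

theorem flow_fderiv {φ : ℝ → Phase d → Phase d} (hH : ContDiff ℝ 2 H) (hφ : IsConformalFlow H 0 φ)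
    {x0 : Phase d} (o : Orb H 0 T (fun s => φ s x0) Φ0) {s : ℝ} (hs : s ∈ Icc (-T) 0) :
    HasFDerivAt (φ s) (Φ0 s) x0 := by
  obtain ⟨R, hR0, hR⟩ := o.bd
  obtain ⟨M, hM, r0, hr0, hor⟩ := orbit_exists hH o.T0 o.zd (fun s hs => (hR s hs).1)
  obtain ⟨CA, hCA⟩ := (isCompact_closedBall (0:Phase d) (R)).exists_bound_of_continuousOn
    (AV_cont hH 0).continuousOn
  have hCA0 : 0 ≤ CA := (norm_nonneg _).trans (hCA 0 (by simp; linarith))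
  have hbd : ∀ x, ‖x - x0‖ ≤ r0 → ∀ s ∈ Icc (-T) 0, ‖φ s x - φ s x0‖ ≤ M * ‖x - x0‖ := by
    intro x hx s hs
    obtain ⟨z, h0, hz, hb⟩ := hor x (by simpa [hφ.1] using hx) 0 le_rfl hr0.le
    have := uniq hH o.T0 (fun s _ => hφ.2.2 x s) hz (by rw [hφ.1, h0]) s hs
    rw [this]
    simpa [hφ.1] using hb s hs
  rw [hasFDerivAt_iff_isLittleO_nhds_zero] 
  refine (isLittleO_iff).2 fun c hc => ?_
  set X := Real.exp ((CA+1)*T) with hX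
  obtain ⟨ρ, hρ, hρ1, htay⟩ := tay1 (ham_cd hH 0) R (τ := c / (M*X)) (by positivity)
  have : ball (0:Phase d) (min r0 (ρ/M)) ∈ nhds (0:Phase d) := ball_mem_nhds _ (by positivity)
  filter_upwards [this] with h hh
  rw [mem_ball_zero_iff, lt_min_iff] at hh
  have hb1 : ∀ s ∈ Icc (-T) 0, ‖φ s (x0 + h) - φ s x0‖ ≤ M * ‖h‖ := by
    intro s hs
    simpa using hbd (x0 + h) (by simpa using hh.1.le) s hs
  have hMh : M * ‖h‖ ≤ ρ := by
    have : M * ‖h‖ ≤ M * (ρ / M) := by gcongr; exact hh.2.le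
    have e : M * (ρ / M) = ρ := by field_simp
    linarith
  have := OT.gron (e := fun s => φ s (x0 + h) - φ s x0 - Φ0 s h)
    (e' := fun s => hamVF H 0 (φ s (x0 + h)) - hamVF H 0 (φ s x0) - AV H 0 (φ s x0) (Φ0 s h))
      (K := CA) (ε := c/(M*X) * (M * ‖h‖)) (δ := 0) o.T0 (by positivity) (by positivity) le_rfl
      (fun s hs => ((hφ.2.2 _ s).sub (hφ.2.2 _ s)).sub (o.Wd h hs)) (by simp [hφ.1, o.P0]) (by
        intro s hs
        have e1 := htay (φ s x0) (by rw [mem_closedBall_zero_iff]; exact (hR s hs).1) (φ s (x0+h))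
          ((hb1 s hs).trans hMh)
        have e2 : hamVF H 0 (φ s (x0 + h)) - hamVF H 0 (φ s x0) - AV H 0 (φ s x0) (Φ0 s h)
          = (AV H 0 (φ s x0)) (φ s (x0 + h) - φ s x0 - Φ0 s h) + (hamVF H 0 (φ s (x0 + h)) - hamVF H 0 (φ s x0)
            - AV H 0 (φ s x0) (φ s (x0+h) - φ s x0)) := by
          simp only [map_sub]; abel
        rw [e2]
        refine (norm_add_le _ _).trans ?_
        gcongr
        · refine (ContinuousLinearMap.le_opNorm _ _).trans ?_
          gcongr
          exact hCA _ (by rw [mem_closedBall_zero_iff]; exact (hR s hs).1)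
        · refine e1.trans ?_
          gcongr
          exact hb1 s hs)
  refine (this s hs).trans (le_of_eq ?_)
  have hXp : X ≠ 0 := (Real.exp_pos _).ne'
  rw [← hX, zero_add]; field_simp

end PO

namespace PO
open HV LB
variable {d : ℕ} {H : Phase d → ℝ} {l T : ℝ} {z z0 : ℝ → Phase d} {Φ Φ0 : ℝ → Phase d →L[ℝ] Phase d}

theorem green_data {φ : ℝ → Phase d → Phase d} (hH : ContDiff ℝ 2 H) (hφ : IsConformalFlow H 0 φ)
    {x0 : Phase d} (o : Orb H 0 T (fun s => φ s x0) Φ0) {t : ℝ} (ht : t ∈ Icc 0 T)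
    {S : Euc d →L[ℝ] Euc d} (hS : IsHeight (GreenT φ t x0) S) :
    (∀ v, (Φ0 (-t) (v, S v)).1 = 0) ∧ ∀ w, (Φ0 (-t) (0, w)).1 = 0 → w = 0 := by
  have hg := hS.2
  unfold GreenT pushV at hg
  have mg : ∀ v w, ((v, w) : Phase d) ∈ LinearMap.graph (S : Euc d →ₗ[ℝ] Euc d) ↔ w = S v := by
    intro v w; rw [LinearMap.mem_graph_iff]; rfl
  by_cases hd : DifferentiableAt ℝ (φ t) (φ (-t) x0)
  · have hs : -t ∈ Icc (-T) 0 := ⟨by linarith [ht.2], by linarith [ht.1]⟩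
    have h1 := flow_fderiv hH hφ o hs
    have e1 : φ t (φ (-t) x0) = x0 := by rw [hφ.2.1, add_neg_cancel, hφ.1]
    have h2 : HasFDerivAt (φ (-t)) (Φ0 (-t)) (φ t (φ (-t) x0)) := by rw [e1]; exact h1
    have c1 := h2.comp (φ (-t) x0) hd.hasFDerivAt
    have c2 := hd.hasFDerivAt.comp x0 h1
    have i1 : φ (-t) ∘ φ t = fun x => x := by
      funext x; simp [hφ.2.1, hφ.1]
    have i2 : φ t ∘ φ (-t) = fun x => x := by
      funext x; simp [hφ.2.1, hφ.1]
    rw [i1] at c1; rw [i2] at c2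
    have j1 := c1.unique (hasFDerivAt_id _)
    have j2 := c2.unique (hasFDerivAt_id _)
    constructor
    · intro v
      have hm := (mg v (S v)).2 rfl
      rw [← hg] at hm
      obtain ⟨w, hw, hwe⟩ := hm
      have hwe' : (fderiv ℝ (φ t) (φ (-t) x0)) w = (v, S v) := hwe
      have := congrArg (fun L : Phase d →L[ℝ] Phase d => L w) j1
      simp only [ContinuousLinearMap.comp_apply, ContinuousLinearMap.id_apply] at this
      rw [hwe'] at this
      rw [this]
      exact hw.1
    · intro w hw
      have hm : ((0, w) : Phase d) ∈ LinearMap.graph (S : Euc d →ₗ[ℝ] Euc d) := by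
        rw [← hg]
        refine ⟨Φ0 (-t) (0, w), ⟨hw, trivial⟩, ?_⟩
        have := congrArg (fun L : Phase d →L[ℝ] Phase d => L (0, w)) j2
        simp only [ContinuousLinearMap.comp_apply, ContinuousLinearMap.id_apply] at this
        exact this
      rw [mg] at hm
      simpa using hm
  · rw [fderiv_zero_of_not_differentiableAt hd] at hg
    have hv : ∀ v : Euc d, v = 0 := by
      intro v
      have hm := (mg v (S v)).2 rfl
      rw [← hg] at hm
      obtain ⟨w, hw, hwe⟩ := hm
      have : (0 : Phase d) = (v, S v) := hwe
      exact (congrArg Prod.fst this).symm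
    exact ⟨fun v => hv _, fun w _ => hv w⟩

theorem sub_app {τ : ℝ} (A B : Phase d →L[ℝ] Phase d) (h : ‖A - B‖ ≤ τ) (w : Phase d) :
    ‖(A w).1 - (B w).1‖ ≤ τ * ‖w‖ := by
  have h1 := (A - B).le_opNorm w
  have h2 := norm_fst_le ((A - B) w)
  rw [sub_apply] at h1 h2
  rw [← Prod.fst_sub]
  exact h2.trans (h1.trans (by gcongr))

theorem nrm_zero' (k : Euc d) : ‖((k, (0 : Euc d)) : Phase d)‖ = ‖k‖ := by
  rw [Prod.norm_def]; simp

theorem split_app (A : Phase d →L[ℝ] Phase d) (v : Euc d) (K : ℝ) :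
    (A (v, (-K) • v)).1 = (A (v, 0)).1 - K • (A (0, v)).1 := by
  have : ((v, (-K) • v) : Phase d) = (v, 0) - K • ((0:Euc d), v) := by
    ext1 <;> simp
  rw [this, map_sub, map_smul]; rfl

/-- short-time injectivity -/
theorem short (hH : TonelliHam H) {R m C s0 κ : ℝ} (hm : ∀ x ∈ closedBall 0 R, ∀ k, m * ‖k‖^2 ≤ HB H x (0,k) (0,k))
    (hC : ∀ x ∈ closedBall 0 R, ‖HB H x‖ ≤ C) (hκ : κ * C ≤ m) (hκ2 : κ ≤ 1/2)
    (hs0 : 0 ≤ s0) (hsT : s0 ≤ T)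
    (o : Orb H l T z Φ) (hz : ∀ s ∈ Icc (-T) 0, ‖z s‖ ≤ R)
    (hΦ : ∀ s ∈ Icc (-s0) 0, ‖Φ s - ContinuousLinearMap.id ℝ (Phase d)‖ ≤ κ)
    {K : ℝ} (hK : 0 ≤ K) {s : ℝ} (hs : s ∈ Icc (-s0) 0) {v : Euc d}
    (hv : (Φ s (v, (-K) • v)).1 = 0) : v = 0 := by
  have sub : ∀ s ∈ Icc (-s0) 0, s ∈ Icc (-T) 0 := fun s hs => ⟨by linarith [hs.1], hs.2⟩
  have hder : ∀ s ∈ Icc (-s0) 0, HasDerivAt (fun s => ⟪(Φ s (0,v)).1, v⟫)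
      (HB H (z s) (Φ s (0,v)) (0,v)) s := by
    intro s hs
    have h1 := o.Wd (0,v) (sub s hs)
    have h2 : HasDerivAt (fun s => (Φ s (0,v)).1) ((AV H l (z s) (Φ s (0,v))).1) s :=
      (ContinuousLinearMap.fst ℝ (Euc d) (Euc d)).hasFDerivAt.comp_hasDerivAt s h1
    have h3 := h2.inner ℝ (hasDerivAt_const s v)
    rw [← AV1 hH.smooth l]
    simpa using h3
  have hnn : ∀ s ∈ Icc (-s0) 0, 0 ≤ HB H (z s) (Φ s (0,v)) (0,v) := by
    intro s hs
    have hzs : z s ∈ closedBall 0 R := by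
      rw [mem_closedBall_zero_iff]; exact hz s (sub s hs)
    have h1 := hm (z s) hzs v
    have e : (0,v) - Φ s (0,v) = -((Φ s - ContinuousLinearMap.id ℝ (Phase d)) (0,v)) := by
      rw [sub_apply]; simp
    have h2 : ‖(0,v) - Φ s (0,v)‖ ≤ κ * ‖v‖ := by
      rw [e, norm_neg]
      refine (ContinuousLinearMap.le_opNorm _ _).trans ?_
      rw [nrm_zero]
      gcongr
      exact hΦ s hs
    have h3 := B_le (HB H (z s)) (hC _ hzs) ((0,v) - Φ s (0,v)) (0,v)
    rw [map_sub, sub_apply, nrm_zero] at h3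
    have hC0 : 0 ≤ C := (norm_nonneg (E := Phase d →L[ℝ] Phase d →L[ℝ] ℝ) _).trans (hC _ hzs)
    have h4 : C * ‖(0,v) - Φ s (0,v)‖ * ‖v‖ ≤ C * (κ * ‖v‖) * ‖v‖ := by gcongr
    have h5 : C * (κ * ‖v‖) * ‖v‖ = (κ * C) * ‖v‖^2 := by ring
    have h6 : (κ * C) * ‖v‖^2 ≤ m * ‖v‖^2 := by gcongr
    linarith
  have hmono : MonotoneOn (fun s => ⟪(Φ s (0,v)).1, v⟫) (Icc (-s0) 0) := by
    refine monotoneOn_of_deriv_nonneg (convex_Icc _ _) (fun s hs => (hder s hs).continuousAt.continuousWithinAt) ?_ ?_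
    · intro s hs
      exact (hder s (interior_subset hs)).differentiableAt.differentiableWithinAt
    · intro s hs
      rw [(hder s (interior_subset hs)).deriv]
      exact hnn s (interior_subset hs)
  have hle := hmono hs ⟨by linarith, le_rfl⟩ hs.2
  simp only [o.P0, ContinuousLinearMap.id_apply, inner_zero_left] at hle
  rw [split_app] at hv
  have h7 := congrArg (fun x => ⟪x, v⟫) hv
  simp only [inner_sub_left, real_inner_smul_left, inner_zero_left] at h7
  have h8 := sub_app _ _ (hΦ s hs) (v, 0)
  rw [nrm_zero', ContinuousLinearMap.id_apply] at h8
  have h9 : ⟪v - (Φ s (v, 0)).1, v⟫ ≤ κ * ‖v‖ * ‖v‖ := by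
    refine (real_inner_le_norm _ _).trans ?_
    rw [norm_sub_rev]
    gcongr
  rw [inner_sub_left, real_inner_self_eq_norm_sq] at h9
  have h10 : K * ⟪(Φ s (0, v)).1, v⟫ ≤ 0 := mul_nonpos_of_nonneg_of_nonpos hK hle
  have h11 : κ * ‖v‖ * ‖v‖ ≤ 1/2 * ‖v‖ * ‖v‖ := by gcongr
  have h12 : ‖v‖^2 ≤ 0 := by nlinarith only [h7, h9, h10, h11]
  have : ‖v‖ = 0 := by
    have := sq_nonneg ‖v‖
    exact pow_eq_zero_iff (two_ne_zero) |>.1 (le_antisymm h12 this)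
  exact norm_eq_zero.1 this

def bM (Φ : ℝ → Phase d →L[ℝ] Phase d) (s : ℝ) : Euc d →L[ℝ] Euc d :=
  ((ContinuousLinearMap.fst ℝ (Euc d) (Euc d)).comp (Φ s)).comp (ContinuousLinearMap.inr ℝ (Euc d) (Euc d))

theorem bM_app (Φ : ℝ → Phase d →L[ℝ] Phase d) (s : ℝ) (w : Euc d) : bM Φ s w = (Φ s (0, w)).1 := rfl

theorem inj_pert (hH : TonelliHam H) (hT : 0 < T) (o : Orb H 0 T z0 Φ0)
    (hi : ∀ t ∈ Ioc 0 T, ∀ w, (Φ0 (-t) (0, w)).1 = 0 → w = 0) :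
    ∃ τ0 > 0, ∃ K1 : ℝ, ∃ c > 0, ∀ l z Φ, Orb H l T z Φ →
      (∀ s ∈ Icc (-T) 0, ‖z s - z0 s‖ ≤ τ0 ∧ ‖Φ s - Φ0 s‖ ≤ τ0) →
      (∀ K ≥ K1, ∀ s ∈ Icc (-T) 0, ∀ v, (Φ s (v, (-K) • v)).1 = 0 → v = 0) ∧
      ∀ w, c * ‖w‖ ≤ ‖(Φ (-T) (0, w)).1‖ := by
  obtain ⟨R, hR0, hR⟩ := o.bd
  obtain ⟨m, hm0, hm⟩ := Bm hH (R+1)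
  obtain ⟨C0, hC0⟩ := (isCompact_closedBall (0:Phase d) (R+1)).exists_bound_of_continuousOn
    (nHB hH).continuousOn
  set C := max C0 1
  have hC1 : 1 ≤ C := le_max_right _ _
  have hC : ∀ x ∈ closedBall 0 (R+1), ‖HB H x‖ ≤ C := fun x hx =>
    (le_abs_self _).trans ((hC0 x hx).trans (le_max_left _ _))
  set κ := min (m / (2*C)) (1/4)
  have hκ : 0 < κ := by positivity
  have hκC : 2 * κ * C ≤ m := by
    have : 2 * κ * C ≤ 2 * (m/(2*C)) * C := by gcongr; exact min_le_left _ _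
    have e : 2 * (m/(2*C)) * C = m := by field_simp
    linarith
  have hκ4 : 2 * κ ≤ 1/2 := by linarith [min_le_right (m/(2*C)) (1/4)]
  have hcont : ContinuousAt Φ0 0 := (o.Pd 0 ⟨by linarith, le_rfl⟩).continuousAt
  obtain ⟨s1, hs1, hs1'⟩ := Metric.continuousAt_iff.1 hcont κ hκ
  set s0 := min (s1/2) T
  have hs0 : 0 < s0 := by positivity
  have hsT : s0 ≤ T := min_le_right _ _
  have hΦs : ∀ s ∈ Icc (-s0) 0, ‖Φ0 s - ContinuousLinearMap.id ℝ (Phase d)‖ ≤ κ := by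
    intro s hs
    have := hs1' (x := s) (by
      rw [Real.dist_eq, sub_zero, abs_of_nonpos hs.2]
      have := min_le_left (s1/2) T
      have h3 := hs.1
      change -s0 ≤ s at h3
      change s0 ≤ s1/2 at this
      linarith)
    rw [dist_eq_norm, o.P0] at this
    exact this.le
  have hcb : ContinuousOn (bM Φ0) (Icc (-T) (-s0)) := by
    have : ContinuousOn Φ0 (Icc (-T) (-s0)) := o.Pc.mono (Icc_subset_Icc le_rfl (by linarith))
    unfold bM
    exact (continuousOn_const.clm_comp this).clm_comp continuousOn_const
  obtain ⟨c, hc, hcb⟩ := unif_inj isCompact_Icc hcb (fun s hs v hv => by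
    rw [bM_app] at hv
    exact hi (-s) ⟨by linarith [hs.2], by linarith [hs.1]⟩ v (by rwa [neg_neg]))
  refine ⟨min (min κ 1) (c/2), by positivity, 2*(R+1)/c + 1, c/2, by positivity, ?_⟩
  intro l z Φ oo hcl
  have hb : ∀ s ∈ Icc (-T) (-s0), ∀ w, c/2 * ‖w‖ ≤ ‖(Φ s (0, w)).1‖ := by
    intro s hs w
    have h1 := hcb s hs w
    rw [bM_app] at h1
    have h2 := sub_app _ _ ((hcl s ⟨hs.1, by linarith [hs.2]⟩).2.trans (min_le_right _ _)) (0, w)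
    rw [nrm_zero, norm_sub_rev] at h2
    have h3 := norm_sub_norm_le (Φ0 s (0, w)).1 (Φ s (0, w)).1
    linarith
  refine ⟨?_, hb (-T) ⟨le_rfl, by linarith⟩⟩
  intro K hK s hs v hv
  have hK0 : 0 ≤ K := le_trans (by positivity) hK
  by_cases h : -s0 ≤ s
  · refine short hH (T := T) hm hC hκC hκ4 hs0.le hsT oo (fun s hs => ?_) (fun s hs => ?_) hK0 ⟨h, hs.2⟩ hv
    · have h1 := norm_sub_norm_le (z s) (z0 s)
      have h2 := (hcl s hs).1.trans ((min_le_left _ _).trans (min_le_right _ _))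
      linarith [(hR s hs).1]
    · have h1 := hΦs s hs
      have h2 := (hcl s ⟨by linarith [hs.1], hs.2⟩).2.trans ((min_le_left _ _).trans (min_le_left _ _))
      have h3 := norm_add_le (Φ s - Φ0 s) (Φ0 s - ContinuousLinearMap.id ℝ (Phase d))
      rw [sub_add_sub_cancel] at h3
      linarith
  · have h1 := hb s ⟨hs.1, by linarith⟩ v
    rw [split_app, sub_eq_zero] at hv
    have h2 : ‖(Φ s (v, 0)).1‖ ≤ (R + 1) * ‖v‖ := by
      have h3 := (norm_fst_le (Φ s (v,0))).trans ((Φ s).le_opNorm (v,0))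
      rw [nrm_zero'] at h3
      have h4 : ‖Φ s‖ ≤ R + 1 := by
        have h1 := norm_sub_norm_le (Φ s) (Φ0 s)
        have h2 := (hcl s hs).2.trans ((min_le_left _ _).trans (min_le_right _ _))
        linarith [(hR s hs).2]
      exact h3.trans (by gcongr)
    rw [hv, norm_smul, Real.norm_of_nonneg hK0] at h2
    have h5 : K * (c/2 * ‖v‖) ≤ (R+1) * ‖v‖ := le_trans (by gcongr) h2
    have h6 : (2*(R+1)/c + 1) * (c/2 * ‖v‖) ≤ K * (c/2 * ‖v‖) := by gcongr
    have h7 : (2*(R+1)/c + 1) * (c/2 * ‖v‖) = (R+1) * ‖v‖ + c/2 * ‖v‖ := by field_simp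
    have h8 : c/2 * ‖v‖ ≤ 0 := by linarith
    by_contra hne
    have : 0 < c/2 * ‖v‖ := mul_pos (by positivity) (norm_pos_iff.2 hne)
    linarith

theorem key {φ : ℝ → Phase d → Phase d} (hH : TonelliHam H) (hφ : IsConformalFlow H 0 φ)
    {x0 : Phase d} {S0 : Euc d →L[ℝ] Euc d}
    (hS : ∀ t > (0:ℝ), ∃ S', IsHeight (GreenT φ t x0) S')
    (hlim : Tendsto (fun t : ℝ => heightOf (GreenT φ t x0)) atTop (nhds S0)) {ε : ℝ} (hε : 0 < ε) :
    ∃ r > 0, ∃ T > 0, ∀ θ p S l f, ‖θ - x0.1‖ < r → ‖p - x0.2‖ < r → 0 ≤ l → l < r →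
      PropP H l T f → HasAlexandrovAt f p S θ → ∀ v, ⟪S v, v⟫ ≤ ⟪S0 v, v⟫ + ε * ‖v‖^2 := by
  have e1 : ∀ᶠ t : ℝ in atTop, ‖heightOf (GreenT φ t x0) - S0‖ < ε/2 := by
    have := hlim (Metric.ball_mem_nhds S0 (half_pos hε))
    filter_upwards [this] with t ht
    rw [← dist_eq_norm]; exact ht
  obtain ⟨T, hTd, hT⟩ := (e1.and (eventually_gt_atTop 0)).exists
  set ST := heightOf (GreenT φ T x0) with hST
  have hhT : IsHeight (GreenT φ T x0) ST := by
    rw [hST]; unfold heightOf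
    rw [dif_pos (hS T hT)]
    exact (hS T hT).choose_spec
  obtain ⟨Φ0, o⟩ := orb_exists hH.smooth hT.le (z := fun s => φ s x0) (l := 0) (fun s _ => hφ.2.2 x0 s)
  obtain ⟨τ0, hτ0, K1, c, hc, hinj⟩ := inj_pert hH hT o (fun t ht w hw => by
    obtain ⟨S', hS'⟩ := hS t ht.1
    exact (green_data hH.smooth hφ o ⟨ht.1.le, ht.2⟩ hS').2 w hw)
  have hgr := (green_data hH.smooth hφ o ⟨hT.le, le_rfl⟩ hhT).1
  set τ := min τ0 (c * (ε/2) / (1 + ‖ST‖)) with hτdef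
  have hτ : 0 < τ := by positivity
  obtain ⟨r, hr, hpert⟩ := pert hH.smooth o hτ
  refine ⟨r, hr, T, hT, ?_⟩
  intro θ p S l f hθ hp hl hlr hP hA v
  obtain ⟨z, Φ, oo, hz0, hcl⟩ := hpert (θ, p) (by
    simp only [hφ.1]
    rw [Prod.norm_def]
    exact max_lt hθ hp) l hl hlr
  obtain ⟨k1, k2⟩ := hinj l z Φ oo (fun s hs => ⟨(hcl s hs).1.trans (min_le_left _ _),
    (hcl s hs).2.trans (min_le_left _ _)⟩)
  have hT0 : -T ∈ Icc (-T) 0 := ⟨le_rfl, by linarith⟩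
  have k3 : ∀ w, (Φ (-T) (0,w)).1 = 0 → w = 0 := by
    intro w hw
    have := k2 w
    rw [hw, norm_zero] at this
    by_contra hne
    have h2 : 0 < c * ‖w‖ := mul_pos hc (norm_pos_iff.2 hne)
    linarith
  have hU : IsUnit (bM Φ (-T)) := isUnit_inj (fun v hv => k3 v hv)
  obtain ⟨U, hU⟩ := hU
  set Z : Euc d →L[ℝ] Euc d := -((↑(U⁻¹) : Euc d →L[ℝ] Euc d).comp
    (((ContinuousLinearMap.fst ℝ (Euc d) (Euc d)).comp (Φ (-T))).comp
      (ContinuousLinearMap.inl ℝ (Euc d) (Euc d)))) with hZ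
  have hZv : ∀ v, bM Φ (-T) (Z v) = -(Φ (-T) (v, 0)).1 := by
    intro v
    have : (bM Φ (-T)) * (↑(U⁻¹) : Euc d →L[ℝ] Euc d) = 1 := by rw [← hU]; exact U.mul_inv
    have := congrArg (fun L : Euc d →L[ℝ] Euc d => L (Φ (-T) (v,0)).1) this
    have t2 : bM Φ (-T) ((↑(U⁻¹) : Euc d →L[ℝ] Euc d) (Φ (-T) (v,0)).1) = (Φ (-T) (v,0)).1 := this
    have t3 : Z v = -((↑(U⁻¹) : Euc d →L[ℝ] Euc d) (Φ (-T) (v,0)).1) := rfl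
    rw [t3, map_neg, t2]
  have hsp : ∀ v w : Euc d, (Φ (-T) (v, w)).1 = (Φ (-T) (v, 0)).1 + bM Φ (-T) w := by
    intro v w
    have : ((v, w) : Phase d) = (v, 0) + (0, w) := by simp
    rw [this, map_add]; rfl
  have h3 : ∀ v, (Φ (-T) (v, Z v)).1 = 0 := by
    intro v; rw [hsp, hZv]; simp
  have main := lemB hH hl oo (f := f) (S := S) (Z := Z) (by rw [hz0]; exact hA) k1 k3 h3 hP v
  have d1 : ‖Z v - ST v‖ ≤ ε/2 * ‖v‖ := by
    have q1 := k2 (Z v - ST v)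
    have q2 : (Φ (-T) (0, Z v - ST v)).1 = -((Φ (-T) (v, ST v)).1 - (Φ0 (-T) (v, ST v)).1) := by
      rw [hgr, ← bM_app, map_sub, hsp, hZv]; abel
    rw [q2, norm_neg] at q1
    have q3 := sub_app _ _ (hcl (-T) hT0).2 (v, ST v)
    have q4 : ‖((v, ST v) : Phase d)‖ ≤ (1 + ‖ST‖) * ‖v‖ := by
      rw [Prod.norm_def]
      have := ST.le_opNorm v
      have := norm_nonneg v
      have := mul_nonneg (norm_nonneg ST) (norm_nonneg v)
      exact max_le (by simp only; linarith) (by simp only; linarith)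
    have q5 : τ * ‖((v, ST v) : Phase d)‖ ≤ (c * (ε/2) / (1 + ‖ST‖)) * ((1 + ‖ST‖) * ‖v‖) := by
      gcongr
      exact min_le_right _ _
    have q6 : (c * (ε/2) / (1 + ‖ST‖)) * ((1 + ‖ST‖) * ‖v‖) = c * (ε/2 * ‖v‖) := by
      have : 1 + ‖ST‖ ≠ 0 := by positivity
      field_simp
    exact le_of_mul_le_mul_left (by linarith) hc
  have d2 : ‖ST v - S0 v‖ ≤ ε/2 * ‖v‖ := by
    have := (ST - S0).le_opNorm v
    rw [sub_apply] at this
    exact this.trans (by gcongr)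
  have d3 : ‖Z v - S0 v‖ ≤ ε * ‖v‖ := by
    have := norm_add_le (Z v - ST v) (ST v - S0 v)
    rw [sub_add_sub_cancel] at this
    linarith
  have d4 : ⟪Z v - S0 v, v⟫ ≤ ε * ‖v‖ * ‖v‖ := (real_inner_le_norm _ _).trans (by gcongr)
  rw [inner_sub_left] at d4
  have : ε * ‖v‖ * ‖v‖ = ε * ‖v‖^2 := by ring
  linarith

end PO

namespace FA
open HV LB
variable {d : ℕ} {H : Phase d → ℝ} {uinf u : Euc d → ℝ}

theorem alex_shift {p c θ : Euc d} {S : Euc d →L[ℝ] Euc d} (h : HasAlexandrovAt u p S θ) :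
    HasAlexandrovAt (fun q => u q + ⟪c, q⟫) (p + c) S θ := by
  refine Alex.hasAlex_of ?_
  have := h.2
  refine this.congr_left fun y => ?_
  simp only [inner_add_left, inner_sub_right]
  ring

/-- qualified approximations -/
def Q (H : Phase d → ℝ) (uinf : Euc d → ℝ) (δ T : ℝ) (u : Euc d → ℝ) : Prop :=
  (∀ q p, HasGradientAt u p q → ‖p - gradient uinf q‖ ≤ δ) ∧
        ((∃ lam : ℝ, 0 < lam ∧ lam < δ ∧ IsDiscountedSol H lam u) ∨
         (∃ t ≥ T, ∃ U : Euc d → ℝ, Continuous U ∧ PerFun U ∧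
            u = LaxOleinik (LegendreL H) 0 (maneCritical H) 0 U t) ∨
         (∃ c : Euc d, ‖c‖ < δ ∧ IsFixedPtModified H c u))

theorem Q.mono {δ T δ' T' : ℝ} (h : Q H uinf δ T u) (hδ : δ ≤ δ') (hT : T' ≤ T) :
    Q H uinf δ' T' u := by
  refine ⟨fun q p hq => (h.1 q p hq).trans hδ, ?_⟩
  rcases h.2 with ⟨l, h1, h2, h3⟩ | ⟨t, ht, h2⟩ | ⟨c, hc, h2⟩
  · exact Or.inl ⟨l, h1, h2.trans_le hδ, h3⟩
  · exact Or.inr (Or.inl ⟨t, le_trans hT ht, h2⟩)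
  · exact Or.inr (Or.inr ⟨c, hc.trans_le hδ, h2⟩)

theorem grad_cont (h1 : ContDiff ℝ 1 uinf) : Continuous (gradient uinf) := by
  unfold gradient
  exact (LinearIsometryEquiv.continuous _).comp (h1.continuous_fderiv one_ne_zero)

theorem local_bound {φ : ℝ → Phase d → Phase d} (hH : TonelliHam H) (hφ : IsConformalFlow H 0 φ)
    (h1 : ContDiff ℝ 1 uinf) {θ0 p0 : Euc d} {S0 : Euc d →L[ℝ] Euc d}
    (hg : HasGradientAt uinf p0 θ0)
    (hS : ∀ t > (0:ℝ), ∃ S', IsHeight (GreenT φ t (θ0, p0)) S')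
    (hlim : Tendsto (fun t : ℝ => heightOf (GreenT φ t (θ0, p0))) atTop (nhds S0)) {ε : ℝ} (hε : 0 < ε) :
    ∃ δ > 0, ∃ T : ℝ, ∀ᶠ θ in nhds θ0, ∀ u, Q H uinf δ T u → ∀ p S, HasAlexandrovAt u p S θ →
      ∀ v, ⟪S v, v⟫ ≤ ⟪S0 v, v⟫ + ε * ‖v‖^2 := by
  obtain ⟨r, hr, T, hT, hk⟩ := PO.key hH hφ hS hlim hε
  simp only at hk
  refine ⟨r/4, by positivity, T, ?_⟩
  have e1 : ∀ᶠ θ in nhds θ0, ‖gradient uinf θ - gradient uinf θ0‖ < r/4 := by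
    have := (grad_cont h1).tendsto θ0 (ball_mem_nhds _ (show 0 < r/4 by positivity))
    filter_upwards [this] with θ hθ
    rw [← dist_eq_norm]; exact hθ
  filter_upwards [e1, ball_mem_nhds θ0 hr] with θ hθ1 hθ2 u hu p S hA v
  rw [mem_ball, dist_eq_norm] at hθ2
  rw [hg.gradient] at hθ1
  have hp := hu.1 θ p hA.1
  have hpp : ‖p - p0‖ ≤ r/4 + r/4 := by
    have := norm_add_le (p - gradient uinf θ) (gradient uinf θ - p0)
    rw [sub_add_sub_cancel] at this
    linarith
  rcases hu.2 with ⟨l, h1, h2, h3⟩ | ⟨t, ht, U, hU, hUp, he⟩ | ⟨c, hc, h2⟩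
  · exact hk θ p S l u hθ2 (by linarith) h1.le (by linarith) (VP.propP_disc hH h1 h3 hT.le) hA v
  · have hP := VP.propP_LO hH 0 (maneCritical H) hU hUp hT.le ht
    simp only [inner_zero_left, add_zero] at hP
    refine hk θ p S 0 u hθ2 (by linarith) le_rfl hr ?_ hA v
    rw [he]; exact hP
  · refine hk θ (p + c) S 0 _ hθ2 ?_ le_rfl hr (VP.propP_mod hH h2 hT) (alex_shift hA) v
    have e : p + c - p0 = (p - p0) + c := by abel
    rw [e]
    have := norm_add_le (p - p0) c
    linarith

/-- difference quotients -/
def Dq (w : Euc d → ℝ) (k : ℕ) (θ v : Euc d) : ℝ :=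
  2 * ((k:ℝ)+1)^2 * (w (θ + ((k:ℝ)+1)⁻¹ • v) - w θ - ⟪gradient w θ, ((k:ℝ)+1)⁻¹ • v⟫)

theorem Dq_cont (h1 : ContDiff ℝ 1 uinf) (k : ℕ) (v : Euc d) : Continuous fun θ => Dq uinf k θ v := by
  have := grad_cont h1
  have := h1.continuous
  unfold Dq
  fun_prop

def A (w : Euc d → ℝ) (η : ℝ) (R : Euc d →L[ℝ] Euc d) (n : ℕ) : Set (Euc d) :=
  ⋂ k : ℕ, ⋂ (_ : n ≤ k), ⋂ v : Euc d, ⋂ (_ : ‖v‖ ≤ 1), {θ | |Dq w k θ v - ⟪R v, v⟫| ≤ η}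

theorem mem_A {η : ℝ} {R : Euc d →L[ℝ] Euc d} {n : ℕ} {θ : Euc d} {w : Euc d → ℝ} : θ ∈ A w η R n ↔
    ∀ k, n ≤ k → ∀ v, ‖v‖ ≤ 1 → |Dq w k θ v - ⟪R v, v⟫| ≤ η := by
  simp [A]

theorem A_closed (h1 : ContDiff ℝ 1 uinf) (η : ℝ) (R : Euc d →L[ℝ] Euc d) (n : ℕ) :
    IsClosed (A uinf η R n) := by
  unfold A
  refine isClosed_iInter fun k => isClosed_iInter fun _ => isClosed_iInter fun v => isClosed_iInter fun _ => ?_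
  exact isClosed_le ((Dq_cont h1 k v).sub continuous_const).abs continuous_const

theorem A_mono (w : Euc d → ℝ) (η : ℝ) (R : Euc d →L[ℝ] Euc d) {n m : ℕ} (h : n ≤ m) :
    A w η R n ⊆ A w η R m := fun θ hθ => by
  rw [mem_A] at hθ ⊢
  exact fun k hk => hθ k (h.trans hk)

theorem Dq_lim {p θ : Euc d} {S : Euc d →L[ℝ] Euc d} (h : HasAlexandrovAt uinf p S θ) {η : ℝ} (hη : 0 < η) :
    ∃ n : ℕ, ∀ k ≥ n, ∀ v : Euc d, ‖v‖ ≤ 1 → |Dq uinf k θ v - ⟪S v, v⟫| ≤ η := by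
  have h2 := isLittleO_iff.1 h.2 (half_pos hη)
  obtain ⟨ρ, hρ, hb⟩ := Metric.eventually_nhds_iff.1 h2
  obtain ⟨n, hn⟩ := exists_nat_gt (1/ρ)
  refine ⟨n, fun k hk v hv => ?_⟩
  have hkn : (n:ℝ) ≤ k := by exact_mod_cast hk
  have hkp : (0:ℝ) < (k:ℝ)+1 := by positivity
  set a : ℝ := ((k:ℝ)+1)⁻¹ with ha
  have hap : 0 < a := by positivity
  have haρ : a < ρ := by
    rw [ha, inv_lt_comm₀ hkp hρ, ← one_div]; linarith
  have hy := @hb (θ + a • v) (by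
    rw [dist_eq_norm, add_sub_cancel_left, norm_smul, Real.norm_of_nonneg hap.le]
    calc a * ‖v‖ ≤ a * 1 := by gcongr
      _ < ρ := by linarith)
  rw [add_sub_cancel_left, norm_smul, Real.norm_of_nonneg hap.le] at hy
  have e : Dq uinf k θ v - ⟪S v, v⟫ = 2 * ((k:ℝ)+1)^2 * (uinf (θ + a • v) - uinf θ - ⟪p, a • v⟫
      - 1/2 * ⟪S (a • v), a • v⟫) := by
    unfold Dq
    rw [h.1.gradient, ← ha]
    simp only [map_smul, real_inner_smul_left, real_inner_smul_right]
    have hk1 : ((k:ℝ)+1)^2 * a^2 = 1 := by rw [ha]; field_simp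
    linear_combination ⟪S v, v⟫ * hk1
  rw [e, abs_mul, abs_of_nonneg (by positivity), ← Real.norm_eq_abs]
  have e2 : ‖(a * ‖v‖)^2‖ ≤ a^2 := by
    rw [Real.norm_of_nonneg (by positivity), mul_pow]
    have : ‖v‖^2 ≤ 1 := pow_le_one₀ (norm_nonneg _) hv
    calc a^2 * ‖v‖^2 ≤ a^2 * 1 := by gcongr
      _ = _ := by ring
  calc _ ≤ 2 * ((k:ℝ)+1)^2 * (η/2 * a^2) := by
        gcongr
        exact hy.trans (by gcongr)
    _ = η := by rw [ha]; field_simp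

theorem A_of {p θ : Euc d} {S R : Euc d →L[ℝ] Euc d} (h : HasAlexandrovAt uinf p S θ) {η : ℝ} (hη : 0 < η)
    (hR : ‖S - R‖ ≤ η/2) : ∃ n, θ ∈ A uinf η R n := by
  obtain ⟨n, hn⟩ := Dq_lim h (half_pos hη)
  refine ⟨n, mem_A.2 fun k hk v hv => ?_⟩
  have h1 := hn k hk v hv
  have h2 : |⟪S v, v⟫ - ⟪R v, v⟫| ≤ η/2 := by
    rw [← inner_sub_left, ← sub_apply]
    calc _ ≤ ‖(S - R) v‖ * ‖v‖ := abs_real_inner_le_norm _ _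
      _ ≤ (‖S - R‖ * ‖v‖) * ‖v‖ := by gcongr; exact (S-R).le_opNorm v
      _ ≤ (η/2 * 1) * 1 := by gcongr
      _ = _ := by ring
  have h3 := abs_add_le (Dq uinf k θ v - ⟪S v, v⟫) (⟪S v, v⟫ - ⟪R v, v⟫)
  rw [sub_add_sub_cancel] at h3
  linarith

theorem A_le {p θ : Euc d} {S R : Euc d →L[ℝ] Euc d} (h : HasAlexandrovAt uinf p S θ) {η : ℝ} (hη : 0 < η)
    {n : ℕ} (hθ : θ ∈ A uinf η R n) (v : Euc d) : ⟪R v, v⟫ ≤ ⟪S v, v⟫ + 2 * η * ‖v‖^2 := by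
  obtain ⟨m, hm⟩ := Dq_lim h hη
  rw [mem_A] at hθ
  have key : ∀ w : Euc d, ‖w‖ ≤ 1 → ⟪R w, w⟫ ≤ ⟪S w, w⟫ + 2 * η := by
    intro w hw
    have h1 := abs_le.1 (hm (max n m) (le_max_right _ _) w hw)
    have h2 := abs_le.1 (hθ (max n m) (le_max_left _ _) w hw)
    linarith [h1.1, h1.2, h2.1, h2.2]
  by_cases hv : v = 0
  · simp [hv]
  have hvp : 0 < ‖v‖ := norm_pos_iff.2 hv
  have h3 := key (‖v‖⁻¹ • v) (by rw [norm_smul, norm_inv, norm_norm, inv_mul_cancel₀ hvp.ne'])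
  simp only [map_smul, real_inner_smul_left, real_inner_smul_right] at h3
  have h4 : ‖v‖^2 * (‖v‖⁻¹ * (‖v‖⁻¹ * ⟪R v, v⟫)) ≤ ‖v‖^2 * (‖v‖⁻¹ * (‖v‖⁻¹ * ⟪S v, v⟫) + 2 * η) := by
    gcongr
  have e : ∀ X : ℝ, ‖v‖^2 * (‖v‖⁻¹ * (‖v‖⁻¹ * X)) = X := fun X => by field_simp
  rw [mul_add, e, e] at h4
  linarith

def O (H : Phase d → ℝ) (w : Euc d → ℝ) (ε : ℝ) (R : Euc d →L[ℝ] Euc d) (n : ℕ) : Set (Euc d) :=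
  {θ | ∀ u, Q H w (((n:ℝ)+1)⁻¹) ((n:ℝ)+1) u → ∀ p S, HasAlexandrovAt u p S θ →
      ∀ v, ⟪S v, v⟫ ≤ ⟪R v, v⟫ + ε * ‖v‖^2}

theorem O_mono (w : Euc d → ℝ) (ε : ℝ) (R : Euc d →L[ℝ] Euc d) {n m : ℕ} (h : n ≤ m) :
    O H w ε R n ⊆ O H w ε R m := fun θ hθ u hu => by
  have : (n:ℝ) ≤ m := by exact_mod_cast h
  exact hθ u (hu.mono (by gcongr) (by linarith))

theorem cube_bd (d : ℕ) : fundCube d ⊆ closedBall 0 (Real.sqrt d) := by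
  intro x hx
  rw [mem_closedBall_zero_iff, EuclideanSpace.norm_eq]
  refine Real.sqrt_le_sqrt ?_
  calc ∑ i, ‖x i‖^2 ≤ ∑ i : Fin d, (1:ℝ) := by
        refine Finset.sum_le_sum fun i _ => ?_
        have := hx i
        rw [Real.norm_of_nonneg this.1]
        exact pow_le_one₀ this.1 this.2.le
    _ = d := by simp

theorem final {φ : ℝ → Phase d → Phase d} (hH : TonelliHam H) (hφ : IsConformalFlow H 0 φ)
    (h1 : ContDiff ℝ 1 uinf) (hreg : UpperGreenRegular φ uinf) {ε : ℝ} (hε : 0 < ε) :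
    ∃ n : ℕ, ∀ u : Euc d → ℝ, SemiConcave u → Q H uinf (((n:ℝ)+1)⁻¹) ((n:ℝ)+1) u →
      volume {θ : Euc d | θ ∈ fundCube d ∧
          ¬ ∃ p S p' S', HasAlexandrovAt u p S θ ∧ HasAlexandrovAt uinf p' S' θ ∧
            SymLT (S - S') (ε • ContinuousLinearMap.id ℝ (Euc d))}
          < ENNReal.ofReal ε := by
  have : ProperSpace (Euc d →L[ℝ] Euc d) := FiniteDimensional.proper_real _
  set Rj := TopologicalSpace.denseSeq (Euc d →L[ℝ] Euc d) with hRj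
  set G : ℕ → Set (Euc d) := fun n => ⋃ j, A uinf (ε/8) (Rj j) n ∩ interior (O H uinf (ε/2) (Rj j) n) with hG
  have hGm : ∀ n, MeasurableSet (G n) := fun n => MeasurableSet.iUnion fun j =>
    (A_closed h1 _ _ _).measurableSet.inter isOpen_interior.measurableSet
  have hGmono : Monotone G := fun n m h => iUnion_mono fun j =>
    inter_subset_inter (A_mono _ _ _ h) (interior_mono (O_mono _ _ _ h))
  have hcov : ∀ᵐ θ ∂(volume : Measure (Euc d)), ∃ n, θ ∈ G n := by
    filter_upwards [hreg] with θ hθ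
    obtain ⟨p, S, hg, hS, hlim, hA⟩ := hθ
    obtain ⟨δ, hδ, T, hev⟩ := local_bound hH hφ h1 hg hS hlim (show 0 < ε/4 by positivity)
    obtain ⟨j, hj⟩ := (TopologicalSpace.denseRange_denseSeq (Euc d →L[ℝ] Euc d)).exists_dist_lt S
      (show 0 < ε/16 by positivity)
    rw [dist_eq_norm] at hj
    obtain ⟨n1, hn1⟩ := A_of (R := Rj j) hA (show 0 < ε/8 by positivity) (by linarith)
    obtain ⟨n2, hn2⟩ := exists_nat_gt (max T δ⁻¹)
    rw [max_lt_iff] at hn2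
    have hO : θ ∈ interior (O H uinf (ε/2) (Rj j) n2) := by
      rw [mem_interior_iff_mem_nhds]
      filter_upwards [hev] with θ' h' u hu p' S' hA' v
      have h3 := h' u (hu.mono (by
        rw [inv_le_comm₀ (by positivity) hδ]; linarith [hn2.2]) (by linarith [hn2.1])) p' S' hA' v
      have h4 : ⟪S v, v⟫ - ⟪Rj j v, v⟫ ≤ ε/16 * ‖v‖^2 := by
        rw [← inner_sub_left, ← sub_apply]
        calc _ ≤ ‖(S - Rj j) v‖ * ‖v‖ := real_inner_le_norm _ _
          _ ≤ (‖S - Rj j‖ * ‖v‖) * ‖v‖ := by gcongr; exact (S-Rj j).le_opNorm v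
          _ ≤ (ε/16 * ‖v‖) * ‖v‖ := by gcongr
          _ = _ := by ring
      have h5 : 0 ≤ ε * ‖v‖^2 := by positivity
      linarith
    refine ⟨max n1 n2, mem_iUnion.2 ⟨j, A_mono _ _ _ (le_max_left _ _) hn1, 
      interior_mono (O_mono _ _ _ (le_max_right _ _)) hO⟩⟩
  have hlim : Tendsto (fun n => volume (closedBall (0 : Euc d) (Real.sqrt d) \ G n)) atTop
      (nhds (volume (⋂ n, closedBall (0 : Euc d) (Real.sqrt d) \ G n))) := by
    refine tendsto_measure_iInter_atTop
      (fun n => (measurableSet_closedBall.diff (hGm n)).nullMeasurableSet)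
      (fun n m h => sdiff_subset_sdiff_right (hGmono h)) ⟨0, ?_⟩
    exact ne_top_of_le_ne_top measure_closedBall_lt_top.ne (measure_mono sdiff_subset)
  have h0 : volume (⋂ n, closedBall (0 : Euc d) (Real.sqrt d) \ G n) = 0 := by
    refine measure_mono_null ?_ (ae_iff.1 hcov)
    intro θ hθ hex
    obtain ⟨n, hn⟩ := hex
    exact (mem_iInter.1 hθ n).2 hn
  rw [h0] at hlim
  obtain ⟨n, hn⟩ := (hlim.eventually_lt_const (ENNReal.ofReal_pos.2 hε)).exists
  refine ⟨n, fun u hsc hu => lt_of_le_of_lt ?_ hn⟩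
  have hae : ∀ᵐ θ ∂(volume : Measure (Euc d)), (∃ p S, HasAlexandrovAt u p S θ) ∧
      ∃ p S, HasAlexandrovAt uinf p S θ := by
    filter_upwards [Alex.alexandrov hsc, hreg] with θ ha hb
    obtain ⟨p, S, -, -, -, hA⟩ := hb
    exact ⟨ha, p, S, hA⟩
  refine measure_mono_ae ?_
  filter_upwards [hae] with θ hθ hbad
  obtain ⟨hc, hne⟩ := hbad
  refine ⟨cube_bd d hc, fun hGn => hne ?_⟩
  obtain ⟨⟨p, S, hA⟩, p', S', hA'⟩ := hθ
  obtain ⟨j, hj1, hj2⟩ := mem_iUnion.1 hGn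
  refine ⟨p, S, p', S', hA, hA', fun v hv => ?_⟩
  have k1 := A_le hA' (show 0 < ε/8 by positivity) hj1 v
  have k2 := interior_subset hj2 u hu p S hA v
  have hvp : 0 < ε * ‖v‖^2 := by positivity
  rw [sub_apply, smul_apply, inner_sub_left, real_inner_smul_left, ContinuousLinearMap.id_apply,
    real_inner_self_eq_norm_sq]
  linarith

end FA

/-- **Lemma (a.e. upper bound on `D²u - D²u_∞`).** Let `u_∞` be a `C¹` upper Green
regular weak K.A.M. solution of the Tonelli Hamiltonian `H` on `𝕋^d × ℝ^d`.  For every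
sufficiently small `ε > 0`, every semi-concave approximated solution `u` — a discounted
solution `u_λ` with `λ` small enough, an image `T_t U` of the Lax–Oleinik semigroup with
`t` large enough, or a fixed point `u_c` of the modified semigroup with `c` close enough
to `0` — which is close enough to `u_∞` in the uniform `C¹` topology satisfies
`Leb{θ : D²u(θ) - D²u_∞(θ) ≮ ε·Id} < ε`. -/
theorem stmt_17 {d : ℕ} (H : Phase d → ℝ) (hH : TonelliHam H)
    (φ : ℝ → Phase d → Phase d) (hφ : IsConformalFlow H 0 φ)
    (uinf : Euc d → ℝ) (h1 : ContDiff ℝ 1 uinf) (hperu : PerFun uinf)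
    (hKAM : IsWeakKAM H uinf) (hreg : UpperGreenRegular φ uinf) :
    ∃ ε0 > (0:ℝ), ∀ ε : ℝ, 0 < ε → ε < ε0 →
      ∃ δ > (0:ℝ), ∃ T > (0:ℝ), ∀ u : Euc d → ℝ, SemiConcave u → PerFun u →
        (∀ q, |u q - uinf q| ≤ δ) →
        (∀ q p, HasGradientAt u p q → ‖p - gradient uinf q‖ ≤ δ) →
        ((∃ lam : ℝ, 0 < lam ∧ lam < δ ∧ IsDiscountedSol H lam u) ∨
         (∃ t ≥ T, ∃ U : Euc d → ℝ, Continuous U ∧ PerFun U ∧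
            u = LaxOleinik (LegendreL H) 0 (maneCritical H) 0 U t) ∨
         (∃ c : Euc d, ‖c‖ < δ ∧ IsFixedPtModified H c u)) →
        volume {θ : Euc d | θ ∈ fundCube d ∧
          ¬ ∃ p S p' S', HasAlexandrovAt u p S θ ∧ HasAlexandrovAt uinf p' S' θ ∧
            SymLT (S - S') (ε • ContinuousLinearMap.id ℝ (Euc d))}
          < ENNReal.ofReal ε := by
  refine ⟨1, one_pos, fun ε hε _ => ?_⟩
  obtain ⟨n, hn⟩ := FA.final hH hφ h1 hreg hε
  refine ⟨((n:ℝ)+1)⁻¹, by positivity, (n:ℝ)+1, by positivity, ?_⟩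
  intro u hsc _ _ hg hq
  exact hn u hsc ⟨hg, hq⟩
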